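/- arXiv:1505.05496 — 2 statements merged into one kernel-verified Lean document; each statement's English description precedes it below -/
import Mathlib

section
/- For integers n and t with n ≥ 2t + 3 and t ≥ 2, D_R(G9) − D_R(G8) = n + t − 5/3 > 0, where G8 is the cactus consisting of t − 2 triangles, two quadrilaterals C4, and n − 2t − 3 pendent edges all sharing a common vertex v1, and G9 is the cactus consisting of t − 1 triangles, one quadrilateral C4, and n − 2t − 3 pendent edges at the common vertex v1, together with one pendent edge attached at a non-central vertex v2 of one of the triangles; moreover D_R(G9) − D_R(G⁰(n,t)) = (13/3)n + (5/3)t − 67/3. -/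
open Finset

/-- Effective resistance between two vertices of a graph (for a connected graph
this is the effective resistance when every edge is a unit resistor), defined via
the matrix-tree / spanning-two-forest determinant formula. -/
noncomputable def effRes {V : Type*} [Finite V] (G : SimpleGraph V) (u v : V) : ℝ :=
  letI := Fintype.ofFinite V
  letI := Classical.decEq V
  letI : DecidableRel G.Adj := Classical.decRel _
  if u = v then 0
  else
    Matrix.det ((G.lapMatrix ℝ).submatrix
        (fun w : {w : V // w ≠ u ∧ w ≠ v} => (w : V)) (fun w => (w : V)))
      / Matrix.det ((G.lapMatrix ℝ).submatrix
        (fun w : {w : V // w ≠ u} => (w : V)) (fun w => (w : V)))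

/-- The degree resistance distance `D_R(G) = Σ_{ {u,v} ⊆ V } (d(u)+d(v)) R(u,v)`. -/
noncomputable def degRes {V : Type*} [Finite V] (G : SimpleGraph V) : ℝ :=
  letI := Fintype.ofFinite V
  letI := Classical.decEq V
  letI : DecidableRel G.Adj := Classical.decRel _
  (1 / 2) * ∑ u : V, ∑ v : V, ((G.degree u : ℝ) + (G.degree v : ℝ)) * effRes G u v

/-- The Kirchhoff index `Kf(G) = Σ_{ {u,v} ⊆ V } R(u,v)`. -/
noncomputable def kirchhoffIndex {V : Type*} [Finite V] (G : SimpleGraph V) : ℝ :=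
  letI := Fintype.ofFinite V
  (1 / 2) * ∑ u : V, ∑ v : V, effRes G u v

/-- `Kf_v(G) = Σ_{u ∈ V} R(u,v)`. -/
noncomputable def Kfv {V : Type*} [Finite V] (G : SimpleGraph V) (v : V) : ℝ :=
  letI := Fintype.ofFinite V
  ∑ u : V, effRes G u v

/-- `D_v(G) = Σ_{u ∈ V} d(u) R(u,v)`. -/
noncomputable def Dv {V : Type*} [Finite V] (G : SimpleGraph V) (v : V) : ℝ :=
  letI := Fintype.ofFinite V
  letI := Classical.decEq V
  letI : DecidableRel G.Adj := Classical.decRel _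
  ∑ u : V, (G.degree u : ℝ) * effRes G u v

/-- A subgraph is a cycle if it is connected and `2`-regular. -/
def IsCycleSubgraph {V : Type*} {G : SimpleGraph V} (H : G.Subgraph) : Prop :=
  H.coe.Connected ∧ ∀ v ∈ H.verts, {u | H.Adj v u}.ncard = 2

/-- A cactus is a connected graph in which any two distinct cycles share at most
one vertex (equivalently, every block is an edge or a cycle). -/
def IsCactus {V : Type*} (G : SimpleGraph V) : Prop :=
  G.Connected ∧ ∀ H₁ H₂ : G.Subgraph, IsCycleSubgraph H₁ → IsCycleSubgraph H₂ →
    H₁ ≠ H₂ → (H₁.verts ∩ H₂.verts).ncard ≤ 1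

/-- The number of cycles of a graph. -/
noncomputable def numCycles {V : Type*} (G : SimpleGraph V) : ℕ :=
  {H : G.Subgraph | IsCycleSubgraph H}.ncard

/-- `G ∈ Cact(n;t)`: `G` is a cactus with `n` vertices and `t` cycles. -/
def MemCact {V : Type*} (n t : ℕ) (G : SimpleGraph V) : Prop :=
  IsCactus G ∧ Nat.card V = n ∧ numCycles G = t

/-- `G⁰(n,t)`: `t` triangles (on vertices `2i+1, 2i+2`, `i < t`) and `n - 2t - 1`
pendent edges, all sharing the common vertex `0`. -/
def G0 (n t : ℕ) : SimpleGraph (Fin n) :=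
  SimpleGraph.fromRel (fun a b =>
    a.val = 0 ∨ (Odd a.val ∧ b.val = a.val + 1 ∧ b.val ≤ 2 * t))

/-- `G3`: `t` triangles, `n - 2t - 3` pendent edges, and one pendent path of
length 2 (through `2t+1` to `2t+2`), all attached at the common vertex `0`. -/
def G3g (n t : ℕ) : SimpleGraph (Fin n) :=
  SimpleGraph.fromRel (fun a b =>
    (a.val = 0 ∧ b.val ≠ 2 * t + 2) ∨
    (Odd a.val ∧ b.val = a.val + 1 ∧ b.val ≤ 2 * t) ∨
    (a.val = 2 * t + 1 ∧ b.val = 2 * t + 2))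

/-- `G4`: `t` triangles and `n - 2t - 2` pendent edges at the common vertex `0`,
together with one pendent edge (to `2t+1`) attached at the triangle vertex `1`. -/
def G4g (n t : ℕ) : SimpleGraph (Fin n) :=
  SimpleGraph.fromRel (fun a b =>
    (a.val = 0 ∧ b.val ≠ 2 * t + 1) ∨
    (Odd a.val ∧ b.val = a.val + 1 ∧ b.val ≤ 2 * t) ∨
    (a.val = 1 ∧ b.val = 2 * t + 1))

/-- `G5`: `t - 1` triangles, one quadrilateral `C₄` (on `0, 2t-1, 2t, 2t+1`), and
`n - 2t - 2` pendent edges, all sharing the common vertex `0`. -/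
def G5g (n t : ℕ) : SimpleGraph (Fin n) :=
  SimpleGraph.fromRel (fun a b =>
    (a.val = 0 ∧ b.val ≠ 2 * t) ∨
    (Odd a.val ∧ b.val = a.val + 1 ∧ b.val ≤ 2 * t - 2) ∨
    (a.val = 2 * t - 1 ∧ b.val = 2 * t) ∨
    (a.val = 2 * t ∧ b.val = 2 * t + 1))

/-- `G6`: `t - 1` triangles, one quadrilateral `C₄` (on `0, 2t-1, 2t, 2t+1`), and
`n - 2t - 3` pendent edges at the common vertex `0`, together with one pendent edge
(to `2t+2`) attached at the quadrilateral vertex `2t-1`, which is adjacent to `0`. -/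
def G6g (n t : ℕ) : SimpleGraph (Fin n) :=
  SimpleGraph.fromRel (fun a b =>
    (a.val = 0 ∧ b.val ≠ 2 * t ∧ b.val ≠ 2 * t + 2) ∨
    (Odd a.val ∧ b.val = a.val + 1 ∧ b.val ≤ 2 * t - 2) ∨
    (a.val = 2 * t - 1 ∧ (b.val = 2 * t ∨ b.val = 2 * t + 2)) ∨
    (a.val = 2 * t ∧ b.val = 2 * t + 1))

/-- `G7`: `t - 1` triangles, one quadrilateral `C₄` (on `0, 2t-1, 2t, 2t+1`), and
`n - 2t - 3` pendent edges at the common vertex `0`, together with one pendent edge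
(to `2t+2`) attached at the quadrilateral vertex `2t`, which is opposite to `0`. -/
def G7g (n t : ℕ) : SimpleGraph (Fin n) :=
  SimpleGraph.fromRel (fun a b =>
    (a.val = 0 ∧ b.val ≠ 2 * t ∧ b.val ≠ 2 * t + 2) ∨
    (Odd a.val ∧ b.val = a.val + 1 ∧ b.val ≤ 2 * t - 2) ∨
    (a.val = 2 * t - 1 ∧ b.val = 2 * t) ∨
    (a.val = 2 * t ∧ (b.val = 2 * t + 1 ∨ b.val = 2 * t + 2)))

/-- `G8`: `t - 2` triangles, two quadrilaterals `C₄` (on `0, 2t-3, 2t-2, 2t-1` and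
on `0, 2t, 2t+1, 2t+2`), and `n - 2t - 3` pendent edges, all sharing the common
vertex `0`. -/
def G8g (n t : ℕ) : SimpleGraph (Fin n) :=
  SimpleGraph.fromRel (fun a b =>
    (a.val = 0 ∧ b.val ≠ 2 * t - 2 ∧ b.val ≠ 2 * t + 1) ∨
    (Odd a.val ∧ b.val = a.val + 1 ∧ b.val ≤ 2 * t - 4) ∨
    (a.val = 2 * t - 3 ∧ b.val = 2 * t - 2) ∨
    (a.val = 2 * t - 2 ∧ b.val = 2 * t - 1) ∨
    (a.val = 2 * t ∧ b.val = 2 * t + 1) ∨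
    (a.val = 2 * t + 1 ∧ b.val = 2 * t + 2))

/-- `G9`: `t - 1` triangles, one quadrilateral `C₄` (on `0, 2t-1, 2t, 2t+1`), and
`n - 2t - 3` pendent edges at the common vertex `0`, together with one pendent edge
(to `2t+2`) attached at the non-central triangle vertex `1`. -/
def G9g (n t : ℕ) : SimpleGraph (Fin n) :=
  SimpleGraph.fromRel (fun a b =>
    (a.val = 0 ∧ b.val ≠ 2 * t ∧ b.val ≠ 2 * t + 2) ∨
    (Odd a.val ∧ b.val = a.val + 1 ∧ b.val ≤ 2 * t - 2) ∨
    (a.val = 2 * t - 1 ∧ b.val = 2 * t) ∨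
    (a.val = 2 * t ∧ b.val = 2 * t + 1) ∨
    (a.val = 1 ∧ b.val = 2 * t + 2))

/-- `G10`: `t - 1` triangles, one pentagon `C₅` (on `0, 2t-1, 2t, 2t+1, 2t+2`), and
`n - 2t - 3` pendent edges, all sharing the common vertex `0`. -/
def G10g (n t : ℕ) : SimpleGraph (Fin n) :=
  SimpleGraph.fromRel (fun a b =>
    (a.val = 0 ∧ b.val ≠ 2 * t ∧ b.val ≠ 2 * t + 1) ∨
    (Odd a.val ∧ b.val = a.val + 1 ∧ b.val ≤ 2 * t - 2) ∨
    (a.val = 2 * t - 1 ∧ b.val = 2 * t) ∨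
    (a.val = 2 * t ∧ b.val = 2 * t + 1) ∨
    (a.val = 2 * t + 1 ∧ b.val = 2 * t + 2))

/-!
Ground the network at the common vertex `r`. For a connected graph with `n` vertices, let `s` be
the potential when a unit current is injected at every vertex other than `r`. Reciprocity gives
`∑ v, R(u,v) = n R(r,u) + ∑ v, R(r,v) - 2 s(u)`, and hence
`D_R = n ∑ d(v) R(r,v) + (∑ d(v)) (∑ R(r,v)) - 2 ∑ d(v) s(v)`.
Since `r` is a cut vertex, `d(v)`, `R(r,v)` and `s(v)` depend only on the branch at `r` containing
`v`, where they solve Kirchhoff's equations on a pendent edge, a triangle, a quadrilateral, or a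
triangle with a pendent edge. Counting the branches of each kind then gives `D_R` in closed form.
-/

section Matrix

open Matrix

variable {ι R : Type*} [Fintype ι] [DecidableEq ι] [CommRing R]

theorem det_submatrix_subtype (A : Matrix ι ι R) (p : ι → Prop) [DecidablePred p] :
    (A.submatrix (Subtype.val : {i // p i} → ι) Subtype.val).det =
      (of fun i j => if p i then A i j else (1 : Matrix ι ι R) i j).det := by
  let e : {i // p i} ≃ {i // i ∈ univ.filter p} := Equiv.subtypeEquivRight (by simp)
  have h := A.det_piecewise_one_eq_submatrix_det (univ.filter p)
  rw [← det_submatrix_equiv_self e, submatrix_submatrix] at h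
  refine h.symm.trans (congrArg det ?_)
  ext i j
  by_cases hi : p i <;> simp [Finset.piecewise, hi, Matrix.row]

theorem det_submatrix_ne (A : Matrix ι ι R) (r : ι) :
    (A.submatrix (Subtype.val : {i // i ≠ r} → ι) Subtype.val).det =
      (A.updateRow r (Pi.single r 1)).det := by
  rw [det_submatrix_subtype]
  congr 1
  ext i j
  rcases eq_or_ne i r with rfl | hi
  · simp [one_eq_pi_single]
  · simp [hi]

theorem det_submatrix_ne_and_ne (A : Matrix ι ι R) (r s : ι) :
    (A.submatrix (Subtype.val : {i // i ≠ r ∧ i ≠ s} → ι) Subtype.val).det =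
      (A.updateRow r (Pi.single r 1)).adjugate s s := by
  rw [det_submatrix_subtype, adjugate_apply]
  congr 1
  ext i j
  rcases eq_or_ne i s with rfl | hs
  · simp [one_eq_pi_single]
  · rcases eq_or_ne i r with rfl | hr
    · simp [hs, one_eq_pi_single]
    · simp [hs, hr]

theorem updateRow_single_mulVec (A : Matrix ι ι R) (r : ι) (x : ι → R) :
    A.updateRow r (Pi.single r 1) *ᵥ x = Function.update (A *ᵥ x) r (x r) := by
  ext i
  by_cases hi : i = r
  · subst hi; simp [mulVec]
  · simp [mulVec, hi]

end Matrix

section Potential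

open Matrix

variable {V : Type*} [Fintype V]

theorem degRes_eq_half_sum (G : SimpleGraph V) [DecidableRel G.Adj] : degRes G =
    1 / 2 * ∑ u, ∑ v, ((G.degree u : ℝ) + G.degree v) * effRes G u v := by
  unfold degRes
  congr!

variable [DecidableEq V] (G : SimpleGraph V) [DecidableRel G.Adj]

/-- `x` is the electric potential on the unit-resistor network `G` when the vertex `r` is grounded
and, at every other vertex `w`, a current `f w` is injected. The value of `f` at `r` is
irrelevant. -/
structure IsPotential (r : V) (f x : V → ℝ) : Prop where
  root_eq_zero : x r = 0
  lapMatrix_mulVec_of_ne : ∀ w ≠ r, (G.lapMatrix ℝ *ᵥ x) w = f w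

variable {G}

theorem isPotential_iff {r : V} {f x : V → ℝ} :
    IsPotential G r f x ↔
      (G.lapMatrix ℝ).updateRow r (Pi.single r 1) *ᵥ x = Function.update f r 0 := by
  rw [updateRow_single_mulVec]
  refine ⟨fun ⟨h0, h⟩ => ?_, fun h => ⟨?_, fun w hw => ?_⟩⟩
  · ext w
    by_cases hw : w = r
    · simp [hw, h0]
    · simp [hw, h w hw]
  · simpa using congrFun h r
  · simpa [hw] using congrFun h w

theorem sum_lapMatrix_mulVec (x : V → ℝ) : ∑ w, (G.lapMatrix ℝ *ᵥ x) w = 0 := by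
  have h : (fun _ => (1 : ℝ)) ⬝ᵥ (G.lapMatrix ℝ *ᵥ x) = 0 := by
    rw [dotProduct_mulVec, ← mulVec_transpose, (G.isSymm_lapMatrix ℝ).eq,
      G.lapMatrix_mulVec_const_eq_zero, zero_dotProduct]
  simpa [dotProduct] using h

theorem lapMatrix_mulVec_eq_sum_sub (x : V → ℝ) (w : V) :
    (G.lapMatrix ℝ *ᵥ x) w = ∑ z ∈ G.neighborFinset w, (x w - x z) := by
  simp [G.lapMatrix_mulVec_apply, Finset.sum_sub_distrib]

namespace IsPotential

variable {r : V} {f h x y : V → ℝ}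

theorem lapMatrix_mulVec (hx : IsPotential G r f x) :
    G.lapMatrix ℝ *ᵥ x = f - Pi.single r (∑ w, f w) := by
  ext w
  by_cases hw : w = r
  · subst hw
    have hsum := sum_lapMatrix_mulVec (G := G) x
    rw [← Finset.add_sum_erase _ _ (Finset.mem_univ w), Finset.sum_congr rfl fun z hz =>
      hx.lapMatrix_mulVec_of_ne z (Finset.ne_of_mem_erase hz)] at hsum
    rw [← Finset.add_sum_erase _ f (Finset.mem_univ w), Pi.sub_apply, Pi.single_eq_same]
    linarith
  · simp [hx.lapMatrix_mulVec_of_ne w hw, hw]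

theorem sum_neighborFinset_sub (hx : IsPotential G r f x) {w : V} (hw : w ≠ r) :
    ∑ z ∈ G.neighborFinset w, (x w - x z) = f w := by
  rw [← lapMatrix_mulVec_eq_sum_sub, hx.lapMatrix_mulVec_of_ne w hw]

theorem reciprocity (hx : IsPotential G r f x) (hy : IsPotential G r h y) :
    x ⬝ᵥ h = f ⬝ᵥ y := by
  have hsymm : x ⬝ᵥ (G.lapMatrix ℝ *ᵥ y) = (G.lapMatrix ℝ *ᵥ x) ⬝ᵥ y := by
    rw [dotProduct_mulVec, ← mulVec_transpose, (G.isSymm_lapMatrix ℝ).eq]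
  simpa [hx.lapMatrix_mulVec, hy.lapMatrix_mulVec, dotProduct_sub, sub_dotProduct,
    hx.root_eq_zero, hy.root_eq_zero] using hsymm

end IsPotential

theorem det_updateRow_lapMatrix_ne_zero (hG : G.Connected) (r : V) :
    ((G.lapMatrix ℝ).updateRow r (Pi.single r 1)).det ≠ 0 := by
  intro hdet
  obtain ⟨x, hx_ne, hx⟩ := Matrix.exists_mulVec_eq_zero_iff.mpr hdet
  have hpot : IsPotential G r 0 x := isPotential_iff.mpr (by simpa using hx)
  have hker : G.lapMatrix ℝ *ᵥ x = 0 := by simp [hpot.lapMatrix_mulVec]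
  refine hx_ne (funext fun w => ?_)
  rw [G.lapMatrix_mulVec_eq_zero_iff_forall_reachable.mp hker w r (hG.preconnected w r),
    hpot.root_eq_zero, Pi.zero_apply]

theorem exists_isPotential (hG : G.Connected) (r : V) (f : V → ℝ) : ∃ x, IsPotential G r f x := by
  have hunit := (det_updateRow_lapMatrix_ne_zero hG r).isUnit
  exact ⟨((G.lapMatrix ℝ).updateRow r (Pi.single r 1))⁻¹ *ᵥ Function.update f r 0,
    isPotential_iff.mpr (by rw [mulVec_mulVec, mul_nonsing_inv _ hunit, one_mulVec])⟩

theorem effRes_eq_det_div_det (u v : V) :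
    effRes G u v = if u = v then 0 else
      ((G.lapMatrix ℝ).submatrix (Subtype.val : {w // w ≠ u ∧ w ≠ v} → V) Subtype.val).det /
        ((G.lapMatrix ℝ).submatrix (Subtype.val : {w // w ≠ u} → V) Subtype.val).det := by
  unfold effRes
  congr!

-- Cramer's rule for the grounded Laplacian.
theorem effRes_eq_of_isPotential (hG : G.Connected) {u v : V} {x : V → ℝ}
    (hx : IsPotential G u (Pi.single v 1) x) : effRes G u v = x v := by
  rw [effRes_eq_det_div_det]
  split_ifs with huv
  · rw [← huv, hx.root_eq_zero]
  rw [det_submatrix_ne, det_submatrix_ne_and_ne,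
    div_eq_iff (det_updateRow_lapMatrix_ne_zero hG u)]
  set A := (G.lapMatrix ℝ).updateRow u (Pi.single u 1)
  have hAx : A *ᵥ x = Pi.single v 1 := by
    rw [isPotential_iff.mp hx, Function.update_eq_self_iff, Pi.single_eq_of_ne huv]
  calc A.adjugate v v = (A.adjugate *ᵥ (A *ᵥ x)) v := by simp [hAx]
    _ = x v * A.det := by
      rw [mulVec_mulVec, adjugate_mul, smul_mulVec, one_mulVec, Pi.smul_apply, smul_eq_mul,
        mul_comm]

theorem effRes_eq_of_isPotential_pair (hG : G.Connected) {r u v : V} {x y : V → ℝ}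
    (hx : IsPotential G r (Pi.single u 1) x) (hy : IsPotential G r (Pi.single v 1) y) :
    effRes G u v = x u + y v - 2 * x v := by
  have hsymm : x v = y u := by simpa using hx.reciprocity hy
  have hpot : IsPotential G u (Pi.single v 1) (y - x - fun _ => y u - x u) := by
    refine ⟨by simp, fun w hw => ?_⟩
    have hconst : G.lapMatrix ℝ *ᵥ (fun _ => y u - x u) = 0 :=
      G.lapMatrix_mulVec_eq_zero_iff_forall_adj.mpr fun _ _ _ => rfl
    simp [mulVec_sub, hconst, hx.lapMatrix_mulVec, hy.lapMatrix_mulVec, hw]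
  rw [effRes_eq_of_isPotential hG hpot]
  simp only [Pi.sub_apply]
  linarith

omit [Fintype V] [DecidableEq V] [DecidableRel G.Adj] in
theorem effRes_comm [Finite V] (hG : G.Connected) (u v : V) : effRes G u v = effRes G v u := by
  classical
  cases nonempty_fintype V
  obtain ⟨x, hx⟩ := exists_isPotential hG u (Pi.single u 1)
  obtain ⟨y, hy⟩ := exists_isPotential hG u (Pi.single v 1)
  have hsymm : x v = y u := by simpa using hx.reciprocity hy
  rw [effRes_eq_of_isPotential_pair hG hx hy, effRes_eq_of_isPotential_pair hG hy hx, hsymm]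
  ring

theorem sum_effRes_eq_of_isPotential (hG : G.Connected) {r : V} {s : V → ℝ}
    (hs : IsPotential G r 1 s) (u : V) :
    ∑ v, effRes G u v = Fintype.card V * effRes G r u + ∑ v, effRes G r v - 2 * s u := by
  choose g hg using fun v => exists_isPotential hG r (Pi.single v 1)
  have hrow : ∑ v, g u v = s u := by simpa [dotProduct_one] using (hg u).reciprocity hs
  simp only [effRes_eq_of_isPotential_pair hG (hg u) (hg _),
    effRes_eq_of_isPotential hG (hg _), Finset.sum_sub_distrib, Finset.sum_add_distrib,
    ← Finset.mul_sum, hrow, Finset.sum_const, Finset.card_univ, nsmul_eq_mul]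

omit [DecidableEq V] in
theorem degRes_eq_sum_degree_mul_sum_effRes (hG : G.Connected) :
    degRes G = ∑ u, G.degree u * ∑ v, effRes G u v := by
  have hswap : ∑ u, ∑ v, (G.degree v : ℝ) * effRes G u v =
      ∑ u, ∑ v, (G.degree u : ℝ) * effRes G u v := by
    rw [Finset.sum_comm]
    simp only [effRes_comm hG]
  simp only [degRes_eq_half_sum, add_mul, Finset.sum_add_distrib, hswap, Finset.mul_sum]
  ring

theorem degRes_eq_of_isPotential (hG : G.Connected) {r : V} {s : V → ℝ}
    (hs : IsPotential G r 1 s) :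
    degRes G = Fintype.card V * ∑ v, G.degree v * effRes G r v +
      (∑ v, (G.degree v : ℝ)) * ∑ v, effRes G r v - 2 * ∑ v, G.degree v * s v := by
  rw [degRes_eq_sum_degree_mul_sum_effRes hG, Finset.sum_mul, Finset.mul_sum, Finset.mul_sum,
    ← Finset.sum_add_distrib, ← Finset.sum_sub_distrib]
  refine Finset.sum_congr rfl fun u _ => ?_
  rw [sum_effRes_eq_of_isPotential hG hs]
  ring

end Potential

section Profile

variable {V : Type*} [Fintype V] [DecidableEq V] {G : SimpleGraph V} [DecidableRel G.Adj]

/-- The data of a vertex `v` that enter the degree resistance distance of a network grounded at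
a root `r`: the degree of `v`, its effective resistance to `r`, and its torsion, that is, its
potential when a unit current is injected at every vertex other than `r`. -/
structure Profile where
  deg : ℝ
  res : ℝ
  tor : ℝ

/-- The vertex `v` of the network `G` grounded at `r` has profile `p`. The resistance is encoded
as the potential at `v` of a unit current injected at `v`; see `effRes_eq_of_isPotential`. -/
structure HasProfile (G : SimpleGraph V) [DecidableRel G.Adj] (r v : V) (p : Profile) : Prop where
  degree_eq : (G.degree v : ℝ) = p.deg
  res_eq : ∀ x, IsPotential G r (Pi.single v 1) x → x v = p.res
  tor_eq : ∀ x, IsPotential G r 1 x → x v = p.tor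

theorem degRes_eq_of_forall_hasProfile (hG : G.Connected) {r : V} {p : V → Profile}
    (hp : ∀ v, HasProfile G r v (p v)) :
    degRes G = Fintype.card V * ∑ v, (p v).deg * (p v).res +
      (∑ v, (p v).deg) * ∑ v, (p v).res - 2 * ∑ v, (p v).deg * (p v).tor := by
  have hres : ∀ v, effRes G r v = (p v).res := fun v => by
    obtain ⟨x, hx⟩ := exists_isPotential hG r (Pi.single v 1)
    rw [effRes_eq_of_isPotential hG hx, (hp v).res_eq x hx]
  obtain ⟨s, hs⟩ := exists_isPotential hG r 1
  simp only [degRes_eq_of_isPotential hG hs, hres, (hp _).degree_eq, (hp _).tor_eq s hs]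

namespace Profile

/-- The root of the network, of degree `d`. -/
def root (d : ℝ) : Profile := ⟨d, 0, 0⟩

/-- A pendent vertex whose only neighbour has profile `p`. -/
noncomputable def pendent (p : Profile) : Profile := ⟨1, p.res + 1, p.tor + 1⟩

/-- A pendent vertex adjacent to the root. -/
def leaf : Profile := ⟨1, 1, 1⟩

/-- A non-root vertex of a triangle hanging at the root. -/
noncomputable def triangle : Profile := ⟨2, 2 / 3, 1⟩

/-- A neighbour of the root on a quadrilateral hanging at the root. -/
noncomputable def squareSide : Profile := ⟨2, 3 / 4, 3 / 2⟩

/-- The vertex opposite to the root on a quadrilateral hanging at the root. -/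
noncomputable def squareFar : Profile := ⟨2, 1, 2⟩

/-- The vertex of degree three of a paw (a triangle with a pendent edge) hanging at the root by
a vertex of degree two. -/
noncomputable def pawJoint : Profile := ⟨3, 2 / 3, 5 / 3⟩

/-- The non-root vertex of degree two of a paw hanging at the root by the other one. -/
noncomputable def pawSide : Profile := ⟨2, 2 / 3, 4 / 3⟩

end Profile

variable {r a b c : V}

theorem hasProfile_root : HasProfile G r r (.root (G.degree r)) :=
  ⟨rfl, fun _ hx => hx.root_eq_zero, fun _ hx => hx.root_eq_zero⟩

omit [DecidableEq V] in
theorem degree_eq_card_of_neighborFinset_eq {s : Finset V} (h : G.neighborFinset a = s) :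
    (G.degree a : ℝ) = #s := by
  rw [← G.card_neighborFinset_eq_degree, h]

theorem ne_of_neighborFinset_eq_insert {s : Finset V} (h : G.neighborFinset a = insert b s) :
    a ≠ b :=
  G.ne_of_adj ((G.mem_neighborFinset a b).mp (by simp [h]))

theorem IsPotential.sub_eq_of_neighborFinset_eq_singleton {f x : V → ℝ}
    (hx : IsPotential G r f x) (har : a ≠ r) (ha : G.neighborFinset a = {b}) :
    x a - x b = f a := by
  simpa [ha] using hx.sum_neighborFinset_sub har

theorem IsPotential.sub_add_sub_eq_of_neighborFinset_eq_pair {f x : V → ℝ}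
    (hx : IsPotential G r f x) (har : a ≠ r) (hbc : b ≠ c) (ha : G.neighborFinset a = {b, c}) :
    (x a - x b) + (x a - x c) = f a := by
  rw [← hx.sum_neighborFinset_sub har, ha, sum_pair hbc]

theorem hasProfile_leaf (ha : G.neighborFinset a = {r}) : HasProfile G r a .leaf := by
  have har : a ≠ r := ne_of_neighborFinset_eq_insert (s := ∅) (by simpa using ha)
  have hsolve : ∀ f x : V → ℝ, IsPotential G r f x → x a = f a := fun f x hx => by
    simpa [hx.root_eq_zero] using hx.sub_eq_of_neighborFinset_eq_singleton har ha
  refine ⟨?_, fun x hx => ?_, fun x hx => ?_⟩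
  · simp [degree_eq_card_of_neighborFinset_eq ha, Profile.leaf]
  · simp [hsolve _ x hx, Profile.leaf]
  · simp [hsolve _ x hx, Profile.leaf]

theorem HasProfile.pendent (hG : G.Connected) {p : Profile} (har : a ≠ r)
    (ha : G.neighborFinset a = {b}) (hb : HasProfile G r b p) : HasProfile G r a p.pendent := by
  have hab : a ≠ b := ne_of_neighborFinset_eq_insert (s := ∅) (by simpa using ha)
  refine ⟨by simp [degree_eq_card_of_neighborFinset_eq ha, Profile.pendent], fun x hx => ?_,
    fun x hx => ?_⟩
  · obtain ⟨y, hy⟩ := exists_isPotential hG r (Pi.single b 1)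
    have hxa : x a - x b = 1 := by
      simpa using hx.sub_eq_of_neighborFinset_eq_singleton har ha
    have hya : y a - y b = 0 := by
      simpa [hab] using hy.sub_eq_of_neighborFinset_eq_singleton har ha
    have hsymm : x b = y a := by simpa using hx.reciprocity hy
    have hyb : y b = p.res := hb.res_eq y hy
    simp only [Profile.pendent]
    linarith
  · have hxa : x a - x b = 1 := hx.sub_eq_of_neighborFinset_eq_singleton har ha
    have hxb : x b = p.tor := hb.tor_eq x hx
    simp only [Profile.pendent]
    linarith

theorem hasProfile_triangle (ha : G.neighborFinset a = {r, b}) (hb : G.neighborFinset b = {r, a}) :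
    HasProfile G r a .triangle := by
  have har := ne_of_neighborFinset_eq_insert ha
  have hbr := ne_of_neighborFinset_eq_insert hb
  have hba : b ≠ a := ne_of_neighborFinset_eq_insert (hb.trans (pair_comm r a))
  have hsolve : ∀ f x : V → ℝ, IsPotential G r f x → x a = (2 * f a + f b) / 3 := by
    intro f x hx
    have hxa := hx.sub_add_sub_eq_of_neighborFinset_eq_pair har hbr.symm ha
    have hxb := hx.sub_add_sub_eq_of_neighborFinset_eq_pair hbr har.symm hb
    linarith [hx.root_eq_zero]
  refine ⟨?_, fun x hx => ?_, fun x hx => ?_⟩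
  · simp [degree_eq_card_of_neighborFinset_eq ha, hbr.symm, Profile.triangle]
  · simp [hsolve _ x hx, hba, Profile.triangle]
  · norm_num [hsolve _ x hx, Profile.triangle]

theorem IsPotential.square_eq {f x : V → ℝ} (hx : IsPotential G r f x) (hbr : b ≠ r)
    (ha : G.neighborFinset a = {r, b}) (hb : G.neighborFinset b = {a, c})
    (hc : G.neighborFinset c = {r, b}) (hac : a ≠ c) :
    x a = (3 * f a + 2 * f b + f c) / 4 ∧ x b = (f a + 2 * f b + f c) / 2 := by
  have har := ne_of_neighborFinset_eq_insert ha
  have hcr := ne_of_neighborFinset_eq_insert hc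
  have hxa := hx.sub_add_sub_eq_of_neighborFinset_eq_pair har hbr.symm ha
  have hxb := hx.sub_add_sub_eq_of_neighborFinset_eq_pair hbr hac hb
  have hxc := hx.sub_add_sub_eq_of_neighborFinset_eq_pair hcr hbr.symm hc
  constructor <;> linarith [hx.root_eq_zero]

theorem hasProfile_squareSide (hbr : b ≠ r) (ha : G.neighborFinset a = {r, b})
    (hb : G.neighborFinset b = {a, c}) (hc : G.neighborFinset c = {r, b}) (hac : a ≠ c) :
    HasProfile G r a .squareSide := by
  have hba := ne_of_neighborFinset_eq_insert hb
  refine ⟨?_, fun x hx => ?_, fun x hx => ?_⟩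
  · simp [degree_eq_card_of_neighborFinset_eq ha, hbr.symm, Profile.squareSide]
  · simp [(hx.square_eq hbr ha hb hc hac).1, hba, hac.symm, Profile.squareSide]
  · norm_num [(hx.square_eq hbr ha hb hc hac).1, Profile.squareSide]

theorem hasProfile_squareFar (hbr : b ≠ r) (ha : G.neighborFinset a = {r, b})
    (hb : G.neighborFinset b = {a, c}) (hc : G.neighborFinset c = {r, b}) (hac : a ≠ c) :
    HasProfile G r b .squareFar := by
  have hba := ne_of_neighborFinset_eq_insert hb
  have hbc := ne_of_neighborFinset_eq_insert (hb.trans (pair_comm a c))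
  refine ⟨?_, fun x hx => ?_, fun x hx => ?_⟩
  · simp [degree_eq_card_of_neighborFinset_eq hb, hac, Profile.squareFar]
  · simp [(hx.square_eq hbr ha hb hc hac).2, hba.symm, hbc.symm, Profile.squareFar]
  · norm_num [(hx.square_eq hbr ha hb hc hac).2, Profile.squareFar]

theorem IsPotential.paw_eq {f x : V → ℝ} (hx : IsPotential G r f x) (hbc : b ≠ c) (hcr : c ≠ r)
    (ha : G.neighborFinset a = {r, b, c}) (hb : G.neighborFinset b = {r, a})
    (hc : G.neighborFinset c = {a}) :
    x a = (2 * f a + f b + 2 * f c) / 3 ∧ x b = (f a + 2 * f b + f c) / 3 := by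
  have har := ne_of_neighborFinset_eq_insert ha
  have hbr := ne_of_neighborFinset_eq_insert hb
  have hxa : (x a - x r) + ((x a - x b) + (x a - x c)) = f a := by
    rw [← hx.sum_neighborFinset_sub har, ha, sum_insert (by simp [hbr.symm, hcr.symm]),
      sum_pair hbc]
  have hxb := hx.sub_add_sub_eq_of_neighborFinset_eq_pair hbr har.symm hb
  have hxc := hx.sub_eq_of_neighborFinset_eq_singleton hcr hc
  constructor <;> linarith [hx.root_eq_zero]

theorem hasProfile_pawJoint (hbc : b ≠ c) (hcr : c ≠ r) (ha : G.neighborFinset a = {r, b, c})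
    (hb : G.neighborFinset b = {r, a}) (hc : G.neighborFinset c = {a}) :
    HasProfile G r a .pawJoint := by
  have hbr := ne_of_neighborFinset_eq_insert hb
  have hba : b ≠ a := ne_of_neighborFinset_eq_insert (hb.trans (pair_comm r a))
  have hca : c ≠ a := ne_of_neighborFinset_eq_insert (s := ∅) (by simpa using hc)
  refine ⟨?_, fun x hx => ?_, fun x hx => ?_⟩
  · simp [degree_eq_card_of_neighborFinset_eq ha, hbr.symm, hcr.symm, hbc, Profile.pawJoint]
  · simp [(hx.paw_eq hbc hcr ha hb hc).1, hba, hca, Profile.pawJoint]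
  · norm_num [(hx.paw_eq hbc hcr ha hb hc).1, Profile.pawJoint]

theorem hasProfile_pawSide (hbc : b ≠ c) (hcr : c ≠ r) (ha : G.neighborFinset a = {r, b, c})
    (hb : G.neighborFinset b = {r, a}) (hc : G.neighborFinset c = {a}) :
    HasProfile G r b .pawSide := by
  have har := ne_of_neighborFinset_eq_insert ha
  have hba : b ≠ a := ne_of_neighborFinset_eq_insert (hb.trans (pair_comm r a))
  refine ⟨?_, fun x hx => ?_, fun x hx => ?_⟩
  · simp [degree_eq_card_of_neighborFinset_eq hb, har.symm, Profile.pawSide]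
  · simp [(hx.paw_eq hbc hcr ha hb hc).2, hba.symm, hbc.symm, Profile.pawSide]
  · norm_num [(hx.paw_eq hbc hcr ha hb hc).2, Profile.pawSide]

end Profile

theorem sum_range_add_eq_of_forall_eq {f : ℕ → ℝ} {a b : ℕ} {c : ℝ}
    (h : ∀ i < b, f (a + i) = c) :
    ∑ i ∈ range (a + b), f i = ∑ i ∈ range a, f i + b * c := by
  rw [sum_range_add, sum_congr rfl fun i hi => h i (mem_range.mp hi), sum_const, card_range,
    nsmul_eq_mul]

theorem degree_eq_sub_card_of_compl_neighborFinset_eq {n : ℕ} {G : SimpleGraph (Fin n)}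
    [DecidableRel G.Adj] {v : Fin n} {s : Finset (Fin n)} (h : (G.neighborFinset v)ᶜ = s) :
    (G.degree v : ℝ) = n - #s := by
  rw [← G.card_neighborFinset_eq_degree, ← h, card_compl, Fintype.card_fin,
    Nat.cast_sub (card_finset_fin_le _), sub_sub_cancel]

theorem connected_of_forall_exists_adj_lt {W : Type*} [Preorder W] [WellFoundedLT W]
    {H : SimpleGraph W} (r : W) (h : ∀ v ≠ r, ∃ w < v, H.Adj v w) : H.Connected := by
  refine H.connected_iff_exists_forall_reachable.mpr ⟨r, fun v => ?_⟩
  induction v using WellFoundedLT.induction with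
  | ind v ih =>
    rcases eq_or_ne v r with rfl | hv
    · rfl
    · obtain ⟨w, hwv, hadj⟩ := h v hv
      exact (ih w hwv).trans hadj.symm.reachable

section Graphs

open SimpleGraph

variable {n t : ℕ} {r : Fin n}

theorem exists_triangle_mate {m : ℕ} (hm : 2 * m < n) {v : Fin n} (hv0 : v.val ≠ 0)
    (hv : v.val ≤ 2 * m) :
    ∃ b : Fin n, v.val % 2 = 1 ∧ b.val = v + 1 ∨ v.val % 2 = 0 ∧ v.val = b + 1 := by
  rcases Nat.mod_two_eq_zero_or_one v with hmod | hmod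
  · exact ⟨⟨v - 1, by omega⟩, by grind⟩
  · exact ⟨⟨v + 1, by omega⟩, by grind⟩

theorem connected_G0 (hr : r.val = 0) : (G0 n t).Connected := by
  refine connected_of_forall_exists_adj_lt r fun v hv => ⟨r, by omega, ?_⟩
  simp only [G0, fromRel_adj]
  omega

/-- The profile of the vertex `i` of `G0 n t`. -/
noncomputable def profileG0 (n t i : ℕ) : Profile :=
  if i = 0 then .root (n - 1) else if i ≤ 2 * t then .triangle else .leaf

theorem degree_G0_root [DecidableRel (G0 n t).Adj] (hr : r.val = 0) :
    ((G0 n t).degree r : ℝ) = n - 1 := by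
  have hcompl : ((G0 n t).neighborFinset r)ᶜ = {r} := by
    ext z
    rw [mem_compl, mem_neighborFinset]
    simp only [G0, fromRel_adj, Nat.odd_iff, mem_singleton, Fin.ext_iff, ne_eq]
    omega
  simp [degree_eq_sub_card_of_compl_neighborFinset_eq hcompl]

theorem hasProfile_G0 [DecidableRel (G0 n t).Adj] (hr : r.val = 0) (hn : 2 * t + 1 ≤ n)
    (v : Fin n) : HasProfile (G0 n t) r v (profileG0 n t v) := by
  unfold profileG0
  split_ifs with hroot htri
  · obtain rfl : v = r := by omega
    exact degree_G0_root (t := t) hr ▸ hasProfile_root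
  · obtain ⟨b, hb⟩ := exists_triangle_mate (m := t) (by omega) hroot (by omega)
    refine hasProfile_triangle (b := b) ?_ ?_ <;>
    · ext z
      rw [mem_neighborFinset]
      simp only [G0, fromRel_adj, Nat.odd_iff, mem_insert, mem_singleton, Fin.ext_iff, ne_eq]
      omega
  · refine hasProfile_leaf ?_
    ext z
    rw [mem_neighborFinset]
    simp only [G0, fromRel_adj, Nat.odd_iff, mem_singleton, Fin.ext_iff, ne_eq]
    omega

theorem sum_profileG0 (hn : 2 * t + 1 ≤ n) (φ : Profile → ℝ) :
    ∑ v : Fin n, φ (profileG0 n t v) =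
      φ (.root (n - 1)) + 2 * t * φ .triangle + (n - 2 * t - 1) * φ .leaf := by
  obtain ⟨k, rfl⟩ := Nat.exists_eq_add_of_le hn
  rw [Fin.sum_univ_eq_sum_range (fun i => φ (profileG0 _ t i)),
    sum_range_add_eq_of_forall_eq (c := φ .leaf), Nat.add_comm (2 * t) 1,
    sum_range_add_eq_of_forall_eq (c := φ .triangle), sum_range_one]
  · simp only [profileG0, if_pos]
    push_cast
    ring
  all_goals
    intro i hi
    congr 1
    grind [profileG0]

theorem degRes_G0 (hn : 2 * t + 1 ≤ n) :
    degRes (G0 n t) =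
      3 * (n : ℝ) ^ 2 + 4 / 3 * n * t - 7 * n - 4 / 3 * (t : ℝ) ^ 2 - 14 / 3 * t + 4 := by
  classical
  have hr : (⟨0, by omega⟩ : Fin n).val = 0 := rfl
  have hsum := sum_profileG0 hn
  rw [degRes_eq_of_forall_hasProfile (connected_G0 hr) (hasProfile_G0 hr hn), Fintype.card_fin,
    hsum Profile.deg, hsum Profile.res, hsum fun p => p.deg * p.res, hsum fun p => p.deg * p.tor]
  simp only [Profile.root, Profile.triangle, Profile.leaf]
  ring

theorem connected_G8g (hr : r.val = 0) : (G8g n t).Connected := by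
  refine connected_of_forall_exists_adj_lt r fun v hv => ?_
  by_cases hfar : v.val = 2 * t - 2 ∨ v.val = 2 * t + 1
  · refine ⟨⟨v - 1, by omega⟩, by rw [Fin.lt_def]; grind, ?_⟩
    simp only [G8g, fromRel_adj, Fin.ext_iff, ne_eq]
    grind
  · refine ⟨r, by omega, ?_⟩
    simp only [G8g, fromRel_adj]
    grind

/-- The profile of the vertex `i` of `G8g n t`. -/
noncomputable def profileG8 (n t i : ℕ) : Profile :=
  if i = 0 then .root (n - 3)
  else if i ≤ 2 * t - 4 then .triangle
  else if i = 2 * t - 2 ∨ i = 2 * t + 1 then .squareFar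
  else if i ≤ 2 * t + 2 then .squareSide
  else .leaf

theorem degree_G8g_root [DecidableRel (G8g n t).Adj] (ht : 2 ≤ t) (hn : 2 * t + 3 ≤ n)
    (hr : r.val = 0) : ((G8g n t).degree r : ℝ) = n - 3 := by
  have hcompl : ((G8g n t).neighborFinset r)ᶜ =
      {r, ⟨2 * t - 2, by omega⟩, ⟨2 * t + 1, by omega⟩} := by
    ext z
    rw [mem_compl, mem_neighborFinset]
    simp only [G8g, fromRel_adj, Nat.odd_iff, mem_insert, mem_singleton, Fin.ext_iff, ne_eq]
    grind (splits := 25)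
  have hcard : #({r, ⟨2 * t - 2, by omega⟩, ⟨2 * t + 1, by omega⟩} : Finset (Fin n)) = 3 :=
    card_eq_three.mpr ⟨_, _, _, by grind, by grind, by grind, rfl⟩
  rw [degree_eq_sub_card_of_compl_neighborFinset_eq hcompl, hcard, Nat.cast_ofNat]

theorem neighborFinset_G8g_square [DecidableRel (G8g n t).Adj] (ht : 2 ≤ t) (hr : r.val = 0)
    {q : ℕ} (hq : q = 2 * t - 3 ∨ q = 2 * t) {a b c : Fin n} (ha : a.val = q) (hb : b.val = q + 1)
    (hc : c.val = q + 2) :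
    (G8g n t).neighborFinset a = {r, b} ∧ (G8g n t).neighborFinset b = {a, c} ∧
      (G8g n t).neighborFinset c = {r, b} := by
  refine ⟨?_, ?_, ?_⟩ <;>
  · ext z
    rw [mem_neighborFinset]
    simp only [G8g, fromRel_adj, Nat.odd_iff, mem_insert, mem_singleton, Fin.ext_iff, ne_eq]
    grind (splits := 25)

theorem hasProfile_G8g [DecidableRel (G8g n t).Adj] (ht : 2 ≤ t) (hn : 2 * t + 3 ≤ n)
    (hr : r.val = 0) (v : Fin n) : HasProfile (G8g n t) r v (profileG8 n t v) := by
  unfold profileG8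
  split_ifs with hroot htri hfar hside
  · obtain rfl : v = r := by omega
    exact degree_G8g_root ht hn hr ▸ hasProfile_root
  · obtain ⟨b, hb⟩ := exists_triangle_mate (m := t - 2) (by omega) hroot (by omega)
    refine hasProfile_triangle (b := b) ?_ ?_ <;>
    · ext z
      rw [mem_neighborFinset]
      simp only [G8g, fromRel_adj, Nat.odd_iff, mem_insert, mem_singleton, Fin.ext_iff, ne_eq]
      grind (splits := 25)
  · obtain ⟨ha, hb, hc⟩ := neighborFinset_G8g_square (q := v - 1) ht hr (by omega)
      (a := ⟨v - 1, by omega⟩) (b := v) (c := ⟨v + 1, by omega⟩) rfl (by omega) (by grind)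
    exact hasProfile_squareFar (by grind) ha hb hc (by grind)
  · by_cases hleft : v.val = 2 * t - 3 ∨ v.val = 2 * t
    · obtain ⟨ha, hb, hc⟩ := neighborFinset_G8g_square ht hr hleft
        (a := v) (b := ⟨v + 1, by omega⟩) (c := ⟨v + 2, by omega⟩) rfl rfl rfl
      exact hasProfile_squareSide (by grind) ha hb hc (by grind)
    · obtain ⟨ha, hb, hc⟩ := neighborFinset_G8g_square (q := v - 2) ht hr (by omega)
        (a := ⟨v - 2, by omega⟩) (b := ⟨v - 1, by omega⟩) (c := v) rfl (by grind) (by omega)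
      exact hasProfile_squareSide (by grind) hc (hb.trans (pair_comm _ _)) ha (by grind)
  · refine hasProfile_leaf ?_
    ext z
    rw [mem_neighborFinset]
    simp only [G8g, fromRel_adj, Nat.odd_iff, mem_singleton, Fin.ext_iff, ne_eq]
    grind (splits := 25)

theorem sum_profileG8 (ht : 2 ≤ t) (hn : 2 * t + 3 ≤ n) (φ : Profile → ℝ) :
    ∑ v : Fin n, φ (profileG8 n t v) =
      φ (.root (n - 3)) + (2 * t - 4) * φ .triangle + 4 * φ .squareSide + 2 * φ .squareFar +
        (n - 2 * t - 3) * φ .leaf := by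
  obtain ⟨s, rfl⟩ := Nat.exists_eq_add_of_le' ht
  obtain ⟨k, rfl⟩ := Nat.exists_eq_add_of_le hn
  rw [Fin.sum_univ_eq_sum_range (fun i => φ (profileG8 _ _ i)),
    show 2 * (s + 2) + 3 = 1 + 2 * s + 1 + 1 + 2 + 1 + 1 by ring,
    sum_range_add_eq_of_forall_eq (c := φ .leaf),
    sum_range_add_eq_of_forall_eq (c := φ .squareSide),
    sum_range_add_eq_of_forall_eq (c := φ .squareFar),
    sum_range_add_eq_of_forall_eq (c := φ .squareSide),
    sum_range_add_eq_of_forall_eq (c := φ .squareFar),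
    sum_range_add_eq_of_forall_eq (c := φ .squareSide),
    sum_range_add_eq_of_forall_eq (c := φ .triangle), sum_range_one]
  · simp only [profileG8, if_pos]
    push_cast
    ring
  all_goals
    intro i hi
    congr 1
    grind [profileG8]

theorem degRes_G8g (ht : 2 ≤ t) (hn : 2 * t + 3 ≤ n) :
    degRes (G8g n t) =
      3 * (n : ℝ) ^ 2 + 4 / 3 * n * t - 11 / 3 * n - 4 / 3 * (t : ℝ) ^ 2 - 4 * t - 50 / 3 := by
  classical
  have hr : (⟨0, by omega⟩ : Fin n).val = 0 := rfl
  have hsum := sum_profileG8 ht hn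
  rw [degRes_eq_of_forall_hasProfile (connected_G8g hr) (hasProfile_G8g ht hn hr),
    Fintype.card_fin, hsum Profile.deg, hsum Profile.res, hsum fun p => p.deg * p.res,
    hsum fun p => p.deg * p.tor]
  simp only [Profile.root, Profile.triangle, Profile.squareSide, Profile.squareFar, Profile.leaf]
  ring

theorem connected_G9g (hr : r.val = 0) : (G9g n t).Connected := by
  refine connected_of_forall_exists_adj_lt r fun v hv => ?_
  by_cases hfar : v.val = 2 * t
  · refine ⟨⟨v - 1, by omega⟩, by rw [Fin.lt_def]; grind, ?_⟩
    simp only [G9g, fromRel_adj, Fin.ext_iff, ne_eq]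
    grind
  by_cases htip : v.val = 2 * t + 2
  · refine ⟨⟨1, by omega⟩, by rw [Fin.lt_def]; grind, ?_⟩
    simp only [G9g, fromRel_adj, Fin.ext_iff, ne_eq]
    grind
  · refine ⟨r, by omega, ?_⟩
    simp only [G9g, fromRel_adj]
    grind

/-- The profile of the vertex `i` of `G9g n t`. -/
noncomputable def profileG9 (n t i : ℕ) : Profile :=
  if i = 0 then .root (n - 3)
  else if i = 1 then .pawJoint
  else if i = 2 then .pawSide
  else if i ≤ 2 * t - 2 then .triangle
  else if i = 2 * t then .squareFar
  else if i ≤ 2 * t + 1 then .squareSide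
  else if i = 2 * t + 2 then .pendent .pawJoint
  else .leaf

theorem degree_G9g_root [DecidableRel (G9g n t).Adj] (ht : 0 < t) (hn : 2 * t + 3 ≤ n)
    (hr : r.val = 0) : ((G9g n t).degree r : ℝ) = n - 3 := by
  have hcompl : ((G9g n t).neighborFinset r)ᶜ =
      {r, ⟨2 * t, by omega⟩, ⟨2 * t + 2, by omega⟩} := by
    ext z
    rw [mem_compl, mem_neighborFinset]
    simp only [G9g, fromRel_adj, Nat.odd_iff, mem_insert, mem_singleton, Fin.ext_iff, ne_eq]
    grind (splits := 25)
  have hcard : #({r, ⟨2 * t, by omega⟩, ⟨2 * t + 2, by omega⟩} : Finset (Fin n)) = 3 :=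
    card_eq_three.mpr ⟨_, _, _, by grind, by grind, by grind, rfl⟩
  rw [degree_eq_sub_card_of_compl_neighborFinset_eq hcompl, hcard, Nat.cast_ofNat]

theorem neighborFinset_G9g_paw [DecidableRel (G9g n t).Adj] (ht : 2 ≤ t) (hr : r.val = 0)
    {a b c : Fin n} (ha : a.val = 1) (hb : b.val = 2) (hc : c.val = 2 * t + 2) :
    (G9g n t).neighborFinset a = {r, b, c} ∧ (G9g n t).neighborFinset b = {r, a} ∧
      (G9g n t).neighborFinset c = {a} := by
  refine ⟨?_, ?_, ?_⟩ <;>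
  · ext z
    rw [mem_neighborFinset]
    simp only [G9g, fromRel_adj, Nat.odd_iff, mem_insert, mem_singleton, Fin.ext_iff, ne_eq]
    grind (splits := 25)

theorem neighborFinset_G9g_square [DecidableRel (G9g n t).Adj] (ht : 2 ≤ t) (hr : r.val = 0)
    {a b c : Fin n} (ha : a.val = 2 * t - 1) (hb : b.val = 2 * t) (hc : c.val = 2 * t + 1) :
    (G9g n t).neighborFinset a = {r, b} ∧ (G9g n t).neighborFinset b = {a, c} ∧
      (G9g n t).neighborFinset c = {r, b} := by
  refine ⟨?_, ?_, ?_⟩ <;>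
  · ext z
    rw [mem_neighborFinset]
    simp only [G9g, fromRel_adj, Nat.odd_iff, mem_insert, mem_singleton, Fin.ext_iff, ne_eq]
    grind (splits := 25)

theorem hasProfile_G9g [DecidableRel (G9g n t).Adj] (ht : 2 ≤ t) (hn : 2 * t + 3 ≤ n)
    (hr : r.val = 0) (v : Fin n) : HasProfile (G9g n t) r v (profileG9 n t v) := by
  obtain ⟨hjoint, hbase, htip⟩ := neighborFinset_G9g_paw ht hr
    (a := ⟨1, by omega⟩) (b := ⟨2, by omega⟩) (c := ⟨2 * t + 2, by omega⟩) rfl rfl rfl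
  obtain ⟨hleft, hfar, hright⟩ := neighborFinset_G9g_square ht hr
    (a := ⟨2 * t - 1, by omega⟩) (b := ⟨2 * t, by omega⟩) (c := ⟨2 * t + 1, by omega⟩) rfl rfl rfl
  unfold profileG9
  split_ifs with hroot h_joint h_side htri h_far h_square h_tip
  · obtain rfl : v = r := by omega
    exact degree_G9g_root (by omega) hn hr ▸ hasProfile_root
  · rw [show v = ⟨1, by omega⟩ from Fin.ext h_joint]
    exact hasProfile_pawJoint (by grind) (by grind) hjoint hbase htip
  · rw [show v = ⟨2, by omega⟩ from Fin.ext h_side]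
    exact hasProfile_pawSide (by grind) (by grind) hjoint hbase htip
  · obtain ⟨b, hb⟩ := exists_triangle_mate (m := t - 1) (by omega) hroot (by omega)
    refine hasProfile_triangle (b := b) ?_ ?_ <;>
    · ext z
      rw [mem_neighborFinset]
      simp only [G9g, fromRel_adj, Nat.odd_iff, mem_insert, mem_singleton, Fin.ext_iff, ne_eq]
      grind (splits := 25)
  · rw [show v = ⟨2 * t, by omega⟩ from Fin.ext h_far]
    exact hasProfile_squareFar (by grind) hleft hfar hright (by grind)
  · rcases (by omega : v.val = 2 * t - 1 ∨ v.val = 2 * t + 1) with h_left | h_right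
    · rw [show v = ⟨2 * t - 1, by omega⟩ from Fin.ext h_left]
      exact hasProfile_squareSide (by grind) hleft hfar hright (by grind)
    · rw [show v = ⟨2 * t + 1, by omega⟩ from Fin.ext h_right]
      exact hasProfile_squareSide (by grind) hright (hfar.trans (pair_comm _ _)) hleft (by grind)
  · rw [show v = ⟨2 * t + 2, by omega⟩ from Fin.ext h_tip]
    exact (hasProfile_pawJoint (by grind) (by grind) hjoint hbase htip).pendent
      (connected_G9g hr) (by grind) htip
  · refine hasProfile_leaf ?_
    ext z
    rw [mem_neighborFinset]
    simp only [G9g, fromRel_adj, Nat.odd_iff, mem_singleton, Fin.ext_iff, ne_eq]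
    grind (splits := 25)

theorem sum_profileG9 (ht : 2 ≤ t) (hn : 2 * t + 3 ≤ n) (φ : Profile → ℝ) :
    ∑ v : Fin n, φ (profileG9 n t v) =
      φ (.root (n - 3)) + φ .pawJoint + φ .pawSide + φ (.pendent .pawJoint) +
        (2 * t - 4) * φ .triangle + 2 * φ .squareSide + φ .squareFar +
        (n - 2 * t - 3) * φ .leaf := by
  obtain ⟨s, rfl⟩ := Nat.exists_eq_add_of_le' ht
  obtain ⟨k, rfl⟩ := Nat.exists_eq_add_of_le hn
  rw [Fin.sum_univ_eq_sum_range (fun i => φ (profileG9 _ _ i)),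
    show 2 * (s + 2) + 3 = 1 + 1 + 1 + 2 * s + 1 + 1 + 1 + 1 by ring,
    sum_range_add_eq_of_forall_eq (c := φ .leaf),
    sum_range_add_eq_of_forall_eq (c := φ (.pendent .pawJoint)),
    sum_range_add_eq_of_forall_eq (c := φ .squareSide),
    sum_range_add_eq_of_forall_eq (c := φ .squareFar),
    sum_range_add_eq_of_forall_eq (c := φ .squareSide),
    sum_range_add_eq_of_forall_eq (c := φ .triangle),
    sum_range_add_eq_of_forall_eq (c := φ .pawSide),
    sum_range_add_eq_of_forall_eq (c := φ .pawJoint), sum_range_one]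
  · simp only [profileG9, if_pos]
    push_cast
    ring
  all_goals
    intro i hi
    congr 1
    grind [profileG9]

theorem degRes_G9g (ht : 2 ≤ t) (hn : 2 * t + 3 ≤ n) :
    degRes (G9g n t) =
      3 * (n : ℝ) ^ 2 + 4 / 3 * n * t - 8 / 3 * n - 4 / 3 * (t : ℝ) ^ 2 - 3 * t - 55 / 3 := by
  classical
  have hr : (⟨0, by omega⟩ : Fin n).val = 0 := rfl
  have hsum := sum_profileG9 ht hn
  rw [degRes_eq_of_forall_hasProfile (connected_G9g hr) (hasProfile_G9g ht hn hr),
    Fintype.card_fin, hsum Profile.deg, hsum Profile.res, hsum fun p => p.deg * p.res,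
    hsum fun p => p.deg * p.tor]
  simp only [Profile.root, Profile.pawJoint, Profile.pawSide, Profile.pendent, Profile.triangle,
    Profile.squareSide, Profile.squareFar, Profile.leaf]
  ring

end Graphs

/-- `D_R(G9) - D_R(G8) = n + t - 5/3 > 0`, and
`D_R(G9) - D_R(G⁰(n,t)) = (13/3)n + (5/3)t - 67/3`. -/
theorem stmt_16 (n t : ℕ) (h1 : 2 * t + 3 ≤ n) (ht : 2 ≤ t) :
    (degRes (G9g n t) - degRes (G8g n t) = (n : ℝ) + t - 5 / 3 ∧
      (0 : ℝ) < (n : ℝ) + t - 5 / 3) ∧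
    degRes (G9g n t) - degRes (G0 n t) = (13 / 3) * (n : ℝ) + (5 / 3) * t - 67 / 3 := by
  have ht_cast : (2 : ℝ) ≤ t := by exact_mod_cast ht
  have hn_nonneg : (0 : ℝ) ≤ n := n.cast_nonneg
  rw [degRes_G9g ht h1, degRes_G8g ht h1, degRes_G0 (by omega)]
  exact ⟨⟨by ring, by linarith [hn_nonneg]⟩, by ring⟩
end

section
/- Among all graphs in Cact(n;t) with n ≥ 25 and t ≥ 1, the cactus with the third-minimum degree resistance distance is G4; that is, for every G ∈ Cact(n;t) with G not isomorphic to G⁰(n,t) or to G5, it holds that D_R(G) ≥ D_R(G4), with equality if and only if G is isomorphic to G4. -/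
open Finset

/-!
Effective resistances in a cactus add up over its blocks, so the degree resistance distance is a sum
of costs of blocks, where the cost of a block depends only on its size and on the numbers and the
degrees of the vertices attached to each of its vertices. Subtracting a fixed amount for every edge
of a tree and for every cycle leaves a nonnegative surplus of each block. The surplus is zero if the
block is an edge or a triangle and all other vertices are attached to a single one of its vertices;
the smallest positive values are attained by a quadrilateral of this kind, as in `G5`, and by a
triangle with one further vertex attached to a second of its vertices, as in `G4`. In these cases
counting the cut vertices shows that, up to a single exception, every vertex is adjacent to one hub.
Away from the hub and one edge, the graph is then a matching, which is an involution and hence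
determined up to conjugation by its number of fixed points.
-/

namespace Cactus

open scoped Classical

/-! ### Effective resistance -/

section EffectiveResistance

open Matrix

lemma submatrix_val_mulVec {V m l R : Type*} [Fintype V] [NonAssocSemiring R]
    (A : Matrix m V R) (f : l → m) {y : V → R} {u : V} (hy : y u = 0) :
    A.submatrix f (Subtype.val : {w // w ≠ u} → V) *ᵥ (y ∘ Subtype.val) = (A *ᵥ y) ∘ f := by
  funext i
  simp only [mulVec, dotProduct, submatrix_apply, Function.comp_apply]
  rw [Fintype.sum_eq_add_sum_subtype_ne _ u, hy, mul_zero, zero_add]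

lemma adjugate_apply_self {ι R : Type*} [Fintype ι] [DecidableEq ι] [CommRing R]
    (A : Matrix ι ι R) (i : ι) :
    A.adjugate i i = (A.submatrix (Subtype.val : {j // j ≠ i} → ι) Subtype.val).det := by
  have : Unique {j // ¬ j ≠ i} := ⟨⟨⟨i, by simp⟩⟩, fun j => Subtype.ext (not_not.1 j.2)⟩
  have hi : ((default : {j // ¬ j ≠ i}) : ι) = i := not_not.1 (default : {j // ¬ j ≠ i}).2
  have hcorner :
      (toSquareBlockProp (A.updateRow i (Pi.single i 1)) fun j => ¬ j ≠ i).det = 1 := by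
    rw [det_unique]
    simp [toSquareBlockProp, hi]
  rw [adjugate_apply, twoBlockTriangular_det _ (· ≠ i), hcorner, mul_one]
  · congr 1
    ext j l
    simp [toSquareBlockProp, updateRow_ne j.2]
  · intro j hj l hl
    obtain rfl := not_not.1 hj
    simp [hl]

variable {V : Type*} [Fintype V] {G : SimpleGraph V}

lemma det_reduced_lapMatrix_ne_zero (hG : G.Connected) (u : V) :
    ((G.lapMatrix ℝ).submatrix (Subtype.val : {w // w ≠ u} → V) Subtype.val).det ≠ 0 := by
  intro hdet
  obtain ⟨x, hx0, hx⟩ := exists_mulVec_eq_zero_iff.mpr hdet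
  set y : V → ℝ := fun w => if h : w ≠ u then x ⟨w, h⟩ else 0 with hy
  have hyu : y u = 0 := by simp [hy]
  have hyx : y ∘ Subtype.val = x := by
    funext w
    simp [hy, w.2]
  have hLy : ∀ w ≠ u, (G.lapMatrix ℝ *ᵥ y) w = 0 := fun w hw => by
    have := congrFun (submatrix_val_mulVec (G.lapMatrix ℝ)
      (Subtype.val : {w // w ≠ u} → V) hyu) ⟨w, hw⟩
    rw [hyx, hx] at this
    exact this.symm
  have hform : toLinearMap₂' ℝ (G.lapMatrix ℝ) y y = 0 := by
    rw [toLinearMap₂'_apply', dotProduct]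
    refine Finset.sum_eq_zero fun w _ => ?_
    rcases eq_or_ne w u with rfl | hw
    · rw [hyu, zero_mul]
    · rw [hLy w hw, mul_zero]
  rw [G.lapMatrix_toLinearMap₂'_apply'_eq_zero_iff_forall_reachable] at hform
  refine hx0 (hyx ▸ funext fun w => ?_)
  rw [Function.comp_apply, hform w u (hG.preconnected _ _), hyu, Pi.zero_apply]

lemma effRes_of_ne {u v : V} (huv : u ≠ v) :
    effRes G u v =
      ((G.lapMatrix ℝ).submatrix (Subtype.val : {w // w ≠ u ∧ w ≠ v} → V) Subtype.val).det /
        ((G.lapMatrix ℝ).submatrix (Subtype.val : {w // w ≠ u} → V) Subtype.val).det := by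
  simp only [effRes, if_neg huv]
  congr!

lemma effRes_self {V : Type*} [Finite V] (G : SimpleGraph V) (u : V) : effRes G u u = 0 :=
  if_pos rfl

-- Cramer's rule for the reduced Laplacian.
theorem effRes_eq_potential (hG : G.Connected) {u v : V} (huv : u ≠ v) {φ : V → ℝ} (hu : φ u = 0)
    (hφ : ∀ w ≠ u, (G.lapMatrix ℝ *ᵥ φ) w = if w = v then 1 else 0) :
    effRes G u v = φ v := by
  let A := (G.lapMatrix ℝ).submatrix (Subtype.val : {w // w ≠ u} → V)
    (Subtype.val : {w // w ≠ u} → V)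
  let v' : {w // w ≠ u} := ⟨v, huv.symm⟩
  have hAφ : A *ᵥ (φ ∘ Subtype.val) = Pi.single v' 1 := by
    rw [submatrix_val_mulVec _ _ hu]
    funext w
    simp [hφ w w.2, Pi.single_apply, v', Subtype.ext_iff]
  have hadj : A.adjugate v' v' = A.det * φ v := by
    have := congrFun (congrArg (A.adjugate *ᵥ ·) hAφ) v'
    simpa [mulVec_mulVec, adjugate_mul, smul_mulVec, v'] using this.symm
  let e : {w // w ≠ u ∧ w ≠ v} ≃ {w : {w // w ≠ u} // w ≠ v'} :=
    { toFun := fun w => ⟨⟨w, w.2.1⟩, fun h => w.2.2 (congrArg Subtype.val h)⟩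
      invFun := fun w => ⟨w.1, w.1.2, fun h => w.2 (Subtype.ext h)⟩ }
  rw [effRes_of_ne huv, div_eq_iff (det_reduced_lapMatrix_ne_zero hG u), mul_comm, ← hadj,
    adjugate_apply_self, ← det_submatrix_equiv_self e]
  rfl

theorem effRes_eq_of_sum_sub (hG : G.Connected) {R : V → V → ℝ} (hR0 : ∀ v, R v v = 0)
    (hsymm : ∀ u v, R u v = R v u) {τ : V → ℝ}
    (hR : ∀ v w, ∑ x ∈ G.neighborFinset w, (R w v - R x v) = τ w - if w = v then 2 else 0)
    (u v : V) : effRes G u v = R u v := by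
  rcases eq_or_ne u v with rfl | huv
  · rw [effRes_self, hR0]
  -- The potential at `w` of a unit current from `v` to `u`, when `u` is grounded.
  let φ : V → ℝ := fun w => (R w u - R w v + R u v) / 2
  have hlap : ∀ w, (G.lapMatrix ℝ *ᵥ φ) w =
      (∑ x ∈ G.neighborFinset w, (R w u - R x u) -
        ∑ x ∈ G.neighborFinset w, (R w v - R x v)) / 2 := fun w => by
    rw [G.lapMatrix_mulVec_apply, ← nsmul_eq_mul, ← G.card_neighborFinset_eq_degree,
      ← Finset.sum_const, ← Finset.sum_sub_distrib, ← Finset.sum_sub_distrib, Finset.sum_div]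
    exact Finset.sum_congr rfl fun x _ => by simp only [φ]; ring
  rw [effRes_eq_potential hG huv (φ := φ) (by simp [φ, hR0]) fun w hw => ?_]
  · simp [φ, hR0, hsymm v u]
  · rw [hlap, hR, hR, if_neg hw]
    split_ifs <;> ring

end EffectiveResistance

/-! ### Blocks of a cactus -/

section BlockResistance

/-- The degree of a vertex of a block of size `k`, viewed inside the block: blocks of size `2` are
bridges and blocks of size `k ≥ 3` are cycles. -/
def blockDeg (k : ℕ) : ℕ := if k = 2 then 1 else 2

/-- The effective resistance in a block with vertices `ZMod k` between two vertices that differ by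
`d`. The factor `2 / blockDeg k` accounts for the bridge, which is a `2`-cycle with one edge
missing. -/
noncomputable def blockRes (k : ℕ) (d : ZMod k) : ℝ :=
  2 / blockDeg k * ((d.val : ℝ) * (k - d.val) / k)

lemma blockDeg_two : blockDeg 2 = 1 := if_pos rfl

lemma blockDeg_of_three_le {k : ℕ} (hk : 3 ≤ k) : blockDeg k = 2 := if_neg (by omega)

lemma blockDeg_le_two (k : ℕ) : blockDeg k ≤ 2 := by
  unfold blockDeg
  split_ifs <;> simp

lemma blockRes_zero (k : ℕ) : blockRes k 0 = 0 := by simp [blockRes]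

lemma blockRes_natCast {k a : ℕ} (ha : a ≤ k) :
    blockRes k a = 2 / blockDeg k * ((a : ℝ) * (k - a) / k) := by
  rw [blockRes, ZMod.val_natCast]
  rcases ha.lt_or_eq with h | rfl
  · rw [Nat.mod_eq_of_lt h]
  · simp

lemma exists_natCast_eq {k : ℕ} [NeZero k] (d : ZMod k) : ∃ a < k, (a : ZMod k) = d :=
  ⟨d.val, d.val_lt, ZMod.natCast_rightInverse d⟩

lemma add_one_ne_sub_one {k : ℕ} (hk : 3 ≤ k) (i : ZMod k) : i + 1 ≠ i - 1 := by
  intro h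
  have h2 : ((2 : ℕ) : ZMod k) = 0 := by
    push_cast
    linear_combination h
  exact absurd (Nat.le_of_dvd two_pos ((ZMod.natCast_eq_zero_iff 2 k).1 h2)) (by omega)

variable {k : ℕ} [NeZero k]

lemma blockRes_neg (d : ZMod k) : blockRes k (-d) = blockRes k d := by
  obtain ⟨a, ha, rfl⟩ := exists_natCast_eq d
  have hneg : -(a : ZMod k) = (k - a : ℕ) := by
    rw [Nat.cast_sub ha.le, ZMod.natCast_self, zero_sub]
  rw [hneg, blockRes_natCast (Nat.sub_le k a), blockRes_natCast ha.le, Nat.cast_sub ha.le]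
  ring

lemma blockRes_nonneg (d : ZMod k) : 0 ≤ blockRes k d := by
  have : (d.val : ℝ) ≤ k := mod_cast d.val_lt.le
  have : 0 ≤ (k : ℝ) - d.val := by linarith
  unfold blockRes
  positivity

lemma two_thirds_le_blockRes (hk : 2 ≤ k) {d : ZMod k} (hd : d ≠ 0) : 2 / 3 ≤ blockRes k d := by
  have hpos : (1 : ℝ) ≤ d.val := by
    exact_mod_cast Nat.one_le_iff_ne_zero.2 ((ZMod.val_ne_zero d).2 hd)
  have hlt : (d.val : ℝ) + 1 ≤ k := mod_cast d.val_lt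
  rw [blockRes, ← mul_div_assoc, le_div_iff₀ (by linarith)]
  rcases hk.eq_or_lt with rfl | hk
  · rw [blockDeg_two]
    push_cast at hlt ⊢
    nlinarith
  · have : (3 : ℝ) ≤ k := mod_cast hk
    rw [blockDeg_of_three_le hk]
    push_cast
    nlinarith [mul_nonneg (sub_nonneg.2 hpos) (sub_nonneg.2 hlt)]

lemma blockRes_three {d : ZMod 3} (hd : d ≠ 0) : blockRes 3 d = 2 / 3 := by
  rw [blockRes, blockDeg_of_three_le le_rfl]
  fin_cases d
  · exact absurd rfl hd
  · norm_num [ZMod.val]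
  · norm_num [ZMod.val]

lemma sum_range_mul_sub (m : ℕ) (x : ℝ) :
    ∑ a ∈ range m, (a : ℝ) * (x - a) = m * (m - 1) * (3 * x - 2 * m + 1) / 6 := by
  induction m with
  | zero => simp
  | succ m ih =>
    rw [sum_range_succ, ih]
    push_cast
    ring

lemma sum_blockRes (k : ℕ) [NeZero k] :
    ∑ d, blockRes k d = ((k : ℝ) ^ 2 - 1) / (3 * blockDeg k) := by
  have hrange : ∑ d : ZMod k, (d.val : ℝ) * (k - d.val) =
      ∑ a ∈ range k, (a : ℝ) * ((k : ℝ) - a) := by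
    obtain ⟨m, rfl⟩ := Nat.exists_eq_succ_of_ne_zero (NeZero.ne k)
    exact Fin.sum_univ_eq_sum_range (fun a => (a : ℝ) * (((m + 1 : ℕ) : ℝ) - a)) (m + 1)
  have hk : (k : ℝ) ≠ 0 := NeZero.ne _
  simp only [blockRes]
  rw [← mul_sum, ← sum_div, hrange, sum_range_mul_sub]
  field_simp
  ring

lemma add_one_eq_sub_one (i : ZMod 2) : i + 1 = i - 1 := by revert i; decide

lemma card_add_one_sub_one (hk : 2 ≤ k) (i : ZMod k) :
    #({i + 1, i - 1} : Finset (ZMod k)) = blockDeg k := by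
  rcases hk.eq_or_lt with rfl | hk
  · rw [← add_one_eq_sub_one, pair_eq_singleton, card_singleton, blockDeg_two]
  · rw [card_pair (add_one_ne_sub_one hk i), blockDeg_of_three_le hk]

lemma blockRes_second_difference (hk : 2 ≤ k) (d : ZMod k) :
    2 * blockRes k d - blockRes k (d + 1) - blockRes k (d - 1) =
      2 / blockDeg k * (2 / k - if d = 0 then 2 else 0) := by
  have hk0 : (k : ℝ) ≠ 0 := NeZero.ne _
  obtain ⟨a, ha, rfl⟩ := exists_natCast_eq d
  have hsucc : (a : ZMod k) + 1 = (a + 1 : ℕ) := by push_cast; rfl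
  rcases Nat.eq_zero_or_pos a with rfl | ha0
  · have hpred : ((0 : ℕ) : ZMod k) - 1 = (k - 1 : ℕ) := by
      rw [Nat.cast_sub (by omega), ZMod.natCast_self]
      simp
    rw [hsucc, hpred, blockRes_natCast (by omega), blockRes_natCast (by omega),
      blockRes_natCast (by omega), Nat.cast_sub (by omega), if_pos Nat.cast_zero]
    push_cast
    field_simp
    ring
  · have hpred : (a : ZMod k) - 1 = (a - 1 : ℕ) := by
      rw [Nat.cast_sub ha0, Nat.cast_one]
    have hne : (a : ZMod k) ≠ 0 := fun h =>
      absurd (Nat.le_of_dvd ha0 ((ZMod.natCast_eq_zero_iff a k).1 h)) (by omega)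
    rw [hsucc, hpred, blockRes_natCast (by omega), blockRes_natCast (by omega),
      blockRes_natCast (by omega), Nat.cast_sub ha0, if_neg hne]
    push_cast
    field_simp
    ring

lemma sum_blockRes_sub (hk : 2 ≤ k) (i l : ZMod k) :
    ∑ j ∈ ({i + 1, i - 1} : Finset (ZMod k)), (blockRes k (i - l) - blockRes k (j - l)) =
      2 / k - if i = l then 2 else 0 := by
  have h := blockRes_second_difference hk (i - l)
  rw [show i - l + 1 = i + 1 - l by ring, show i - l - 1 = i - 1 - l by ring] at h
  simp only [sub_eq_zero] at h
  rcases hk.eq_or_lt with rfl | hk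
  · rw [← add_one_eq_sub_one] at h ⊢
    rw [pair_eq_singleton, sum_singleton]
    rw [blockDeg_two, Nat.cast_one] at h
    linarith
  · rw [blockDeg_of_three_le hk, Nat.cast_ofNat, div_self two_ne_zero] at h
    rw [sum_pair (add_one_ne_sub_one hk i)]
    linarith

end BlockResistance

/-- A block of `G` with `size` vertices, a bridge if `size = 2` and a cycle otherwise. Its vertices
in cyclic order are `vert i`, and `gate v` is the index of the vertex of the block through which
every path from `v` enters the block. In particular `vert (gate v) = v` says that `v` lies on the
block. -/
structure Block {V : Type*} (G : SimpleGraph V) where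
  size : ℕ
  two_le_size : 2 ≤ size
  vert : ZMod size → V
  gate : V → ZMod size
  gate_vert : ∀ i, gate (vert i) = i
  adj_vert : ∀ i, G.Adj (vert i) (vert (i + 1))
  of_adj : ∀ u v, G.Adj u v → gate u ≠ gate v →
    vert (gate u) = u ∧ (gate v = gate u + 1 ∨ gate v = gate u - 1)

/-- A family of blocks such that every edge of the graph lies on exactly one of them. -/
def IsBlockCover {V β : Type*} {G : SimpleGraph V} (B : β → Block G) : Prop :=
  ∀ u v, G.Adj u v → ∃! b, (B b).gate u ≠ (B b).gate v

namespace Block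

variable {V : Type*} {G : SimpleGraph V} (b : Block G)

instance neZero_size : NeZero b.size := ⟨by have := b.two_le_size; omega⟩

lemma vert_injective : Function.Injective b.vert := fun i j h => by
  rw [← b.gate_vert i, h, b.gate_vert]

lemma vert_gate_eq_self_iff {v : V} : b.vert (b.gate v) = v ↔ ∃ i, b.vert i = v :=
  ⟨fun h => ⟨_, h⟩, by rintro ⟨i, rfl⟩; rw [b.gate_vert]⟩

variable [Fintype V]

lemma filter_neighborFinset_gate_ne {v : V} (hv : b.vert (b.gate v) = v) :
    {w ∈ G.neighborFinset v | b.gate w ≠ b.gate v} =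
      image b.vert {b.gate v + 1, b.gate v - 1} := by
  ext w
  simp only [mem_filter, SimpleGraph.mem_neighborFinset, mem_image, mem_insert, mem_singleton]
  constructor
  · rintro ⟨hvw, hne⟩
    exact ⟨b.gate w, (b.of_adj v w hvw hne.symm).2, (b.of_adj w v hvw.symm hne).1⟩
  · rintro ⟨j, hj, rfl⟩
    have hadj : G.Adj v (b.vert j) := by
      rcases hj with rfl | rfl
      · simpa only [hv] using b.adj_vert (b.gate v)
      · simpa only [sub_add_cancel, hv] using (b.adj_vert (b.gate v - 1)).symm
    refine ⟨hadj, fun h => hadj.ne ?_⟩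
    rw [b.gate_vert] at h
    rw [h, hv]

lemma filter_neighborFinset_gate_ne_of_ne {v : V} (hv : b.vert (b.gate v) ≠ v) :
    {w ∈ G.neighborFinset v | b.gate w ≠ b.gate v} = ∅ :=
  filter_eq_empty_iff.2 fun w hw hne =>
    hv (b.of_adj v w ((G.mem_neighborFinset v w).1 hw) hne.symm).1

lemma sum_neighborFinset_comp_gate {M : Type*} [AddCommMonoid M] (v : V) {f : ZMod b.size → M}
    (hf : f (b.gate v) = 0) :
    ∑ w ∈ G.neighborFinset v, f (b.gate w) =
      if b.vert (b.gate v) = v then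
        ∑ j ∈ ({b.gate v + 1, b.gate v - 1} : Finset (ZMod b.size)), f j
      else 0 := by
  rw [← sum_filter_of_ne (p := fun w => b.gate w ≠ b.gate v) fun w _ h hw => h (hw ▸ hf)]
  split_ifs with hv
  · rw [b.filter_neighborFinset_gate_ne hv, sum_image b.vert_injective.injOn]
    simp only [b.gate_vert]
  · rw [b.filter_neighborFinset_gate_ne_of_ne hv, sum_empty]

lemma card_filter_neighborFinset_gate_ne (v : V) :
    #{w ∈ G.neighborFinset v | b.gate w ≠ b.gate v} =
      if b.vert (b.gate v) = v then blockDeg b.size else 0 := by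
  split_ifs with hv
  · rw [b.filter_neighborFinset_gate_ne hv, card_image_of_injective _ b.vert_injective,
      card_add_one_sub_one b.two_le_size]
  · rw [b.filter_neighborFinset_gate_ne_of_ne hv, card_empty]

lemma card_filter_vert_gate_eq_self : #{v | b.vert (b.gate v) = v} = b.size := by
  have : ({v | b.vert (b.gate v) = v} : Finset V) = univ.image b.vert := by
    ext v
    simp [b.vert_gate_eq_self_iff]
  rw [this, card_image_of_injective _ b.vert_injective, card_univ, ZMod.card]

/-- The vertices of `G` attached to the `i`-th vertex of the block. -/
noncomputable def fiber (i : ZMod b.size) : Finset V := {v | b.gate v = i}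

/-- The number of vertices attached to the `i`-th vertex of the block. -/
noncomputable def fiberCard (i : ZMod b.size) : ℕ := #(b.fiber i)

/-- The sum of the degrees in `G` of the vertices attached to the `i`-th vertex of the block. -/
noncomputable def fiberDeg (i : ZMod b.size) : ℕ := ∑ v ∈ b.fiber i, G.degree v

/-- The contribution of the block to the degree resistance distance. -/
noncomputable def cost : ℝ :=
  ∑ i, ∑ j, (b.fiberDeg i : ℝ) * b.fiberCard j * blockRes b.size (i - j)

lemma mem_fiber {i : ZMod b.size} {v : V} : v ∈ b.fiber i ↔ b.gate v = i := by simp [fiber]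

lemma vert_mem_fiber (i : ZMod b.size) : b.vert i ∈ b.fiber i := b.mem_fiber.2 (b.gate_vert i)

lemma one_le_fiberCard (i : ZMod b.size) : 1 ≤ b.fiberCard i :=
  card_pos.2 ⟨_, b.vert_mem_fiber i⟩

lemma sum_fiberCard : ∑ i, b.fiberCard i = Fintype.card V :=
  (card_eq_sum_card_fiberwise fun _ _ => mem_coe.2 (mem_univ _)).symm

lemma sum_fiberDeg : ∑ i, b.fiberDeg i = ∑ v, G.degree v := sum_fiberwise _ _ _

lemma sum_comp_gate (f : ZMod b.size → ℝ) :
    ∑ v, f (b.gate v) = ∑ i, (b.fiberCard i : ℝ) * f i := by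
  rw [← sum_fiberwise' univ b.gate f]
  simp only [sum_const, nsmul_eq_mul, fiberCard, fiber]

lemma sum_degree_mul_comp_gate (f : ZMod b.size → ℝ) :
    ∑ v, (G.degree v : ℝ) * f (b.gate v) = ∑ i, (b.fiberDeg i : ℝ) * f i := by
  rw [← sum_fiberwise univ b.gate]
  refine sum_congr rfl fun i _ => ?_
  rw [fiberDeg, Nat.cast_sum, sum_mul]
  exact sum_congr rfl fun v hv => by rw [b.mem_fiber.1 hv]

lemma sum_degree_mul_sum_blockRes :
    ∑ u, (G.degree u : ℝ) * ∑ v, blockRes b.size (b.gate u - b.gate v) = b.cost := by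
  simp only [fun i => b.sum_comp_gate fun j => blockRes b.size (i - j)]
  rw [b.sum_degree_mul_comp_gate fun i => ∑ j, (b.fiberCard j : ℝ) * blockRes b.size (i - j)]
  simp only [cost, mul_sum, mul_assoc]

end Block

section BlockCover

variable {V β : Type*} [Fintype β] {G : SimpleGraph V} {B : β → Block G}

/-- The sum over the blocks `B` of the resistance between the gates of `u` and of `v`. -/
noncomputable def sumBlockRes (B : β → Block G) (u v : V) : ℝ :=
  ∑ b, blockRes (B b).size ((B b).gate u - (B b).gate v)

/-- The number of blocks in which the gate of `u` is the vertex `w`. -/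
noncomputable def gateCount (B : β → Block G) (u w : V) : ℕ :=
  #{b | (B b).vert ((B b).gate u) = w}

-- Along an edge `uv` only the gate of the block of `uv` changes, and it changes from `u` to `v`.
lemma IsBlockCover.gateCount_add (hB : IsBlockCover B) (hG : G.Connected) (u v w : V) :
    gateCount B u w + (if v = w then 1 else 0) = gateCount B v w + (if u = w then 1 else 0) := by
  have hadj : ∀ u v, G.Adj u v → gateCount B u w + (if v = w then 1 else 0) =
      gateCount B v w + (if u = w then 1 else 0) := fun u v huv => by
    obtain ⟨b₀, hb₀, huniq⟩ := hB u v huv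
    have hrest : ∑ b ∈ univ.erase b₀, (if (B b).vert ((B b).gate u) = w then 1 else 0) =
        ∑ b ∈ univ.erase b₀, (if (B b).vert ((B b).gate v) = w then 1 else 0) :=
      sum_congr rfl fun b hb => by rw [not_not.1 fun h => ne_of_mem_erase hb (huniq b h)]
    simp only [gateCount, card_filter]
    rw [← add_sum_erase univ _ (mem_univ b₀), hrest, ← add_sum_erase univ _ (mem_univ b₀),
      ((B b₀).of_adj u v huv hb₀).1, ((B b₀).of_adj v u huv.symm hb₀.symm).1]
    ring
  obtain ⟨p⟩ := hG.preconnected u v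
  induction p with
  | nil => rfl
  | cons h _ ih => have := hadj _ _ h; omega

lemma sumBlockRes_comm (B : β → Block G) (u v : V) : sumBlockRes B u v = sumBlockRes B v u :=
  sum_congr rfl fun b _ => by rw [← blockRes_neg, neg_sub]

lemma sum_sumBlockRes_sub [Fintype V] (B : β → Block G) (v w : V) :
    ∑ x ∈ G.neighborFinset w, (sumBlockRes B w v - sumBlockRes B x v) =
      (∑ b, if (B b).vert ((B b).gate w) = w then (2 : ℝ) / (B b).size else 0) -
        2 * gateCount B v w := by
  simp only [sumBlockRes, ← sum_sub_distrib, gateCount, natCast_card_filter, mul_sum]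
  rw [sum_comm]
  refine sum_congr rfl fun b _ => ?_
  rw [(B b).sum_neighborFinset_comp_gate w (f := fun j =>
      blockRes (B b).size ((B b).gate w - (B b).gate v) -
        blockRes (B b).size (j - (B b).gate v)) (sub_self _),
    sum_blockRes_sub (B b).two_le_size]
  have hgate : (B b).vert ((B b).gate v) = w ↔
      (B b).vert ((B b).gate w) = w ∧ (B b).gate w = (B b).gate v := by
    constructor
    · rintro rfl
      simp only [(B b).gate_vert, and_self]
    · rintro ⟨hw, h⟩
      rwa [← h]
  rw [if_congr hgate rfl rfl]
  split_ifs <;> first | tauto | ring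

theorem IsBlockCover.effRes_eq [Finite V] (hB : IsBlockCover B) (hG : G.Connected) (u v : V) :
    effRes G u v = sumBlockRes B u v := by
  have := Fintype.ofFinite V
  refine effRes_eq_of_sum_sub hG (fun v => by simp [sumBlockRes, blockRes_zero])
    (sumBlockRes_comm B) (τ := fun w => (∑ b, if (B b).vert ((B b).gate w) = w then
      (2 : ℝ) / (B b).size else 0) - 2 * gateCount B w w + 2) (fun v w => ?_) u v
  have hcount : (gateCount B w w : ℝ) + (if w = v then 1 else 0) = gateCount B v w + 1 := by
    have := hB.gateCount_add hG w v w
    rw [if_pos rfl] at this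
    simp only [eq_comm (a := w) (b := v)]
    exact_mod_cast this
  rw [sum_sumBlockRes_sub]
  split_ifs at hcount ⊢ <;> linarith

variable [Fintype V]

lemma IsBlockCover.degree_eq (hB : IsBlockCover B) (v : V) :
    G.degree v = ∑ b, if (B b).vert ((B b).gate v) = v then blockDeg (B b).size else 0 := by
  have hone : ∀ w ∈ G.neighborFinset v, #{b | (B b).gate w ≠ (B b).gate v} = 1 := fun w hw => by
    obtain ⟨b, hb, huniq⟩ := hB w v ((G.mem_neighborFinset v w).1 hw).symm
    exact card_eq_one.2 ⟨b, by ext c; simpa using ⟨huniq c, by rintro rfl; exact hb⟩⟩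
  have hcount := sum_card_bipartiteAbove_eq_sum_card_bipartiteBelow (s := G.neighborFinset v)
    (t := univ) fun w b => (B b).gate w ≠ (B b).gate v
  simp only [bipartiteAbove, bipartiteBelow, sum_congr rfl hone,
    Block.card_filter_neighborFinset_gate_ne] at hcount
  rw [← hcount, sum_const, smul_eq_mul, mul_one, G.card_neighborFinset_eq_degree]

lemma IsBlockCover.sum_degree (hB : IsBlockCover B) :
    ∑ v, G.degree v = ∑ b, (B b).size * blockDeg (B b).size := by
  simp only [hB.degree_eq]
  rw [sum_comm]
  refine sum_congr rfl fun b _ => ?_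
  rw [← sum_filter, sum_const, smul_eq_mul, (B b).card_filter_vert_gate_eq_self]

lemma IsBlockCover.sum_size (hB : IsBlockCover B) (hG : G.Connected) :
    ∑ b, (B b).size + 1 = Fintype.card β + Fintype.card V := by
  obtain ⟨r⟩ := hG.nonempty
  have hsize : ∑ w, gateCount B w w = ∑ b, (B b).size := by
    simp only [gateCount, card_filter]
    rw [sum_comm]
    exact sum_congr rfl fun b _ => by rw [← card_filter, (B b).card_filter_vert_gate_eq_self]
  have hroot : ∑ w, gateCount B r w = Fintype.card β :=
    (card_eq_sum_card_fiberwise (s := univ) fun _ _ => mem_coe.2 (mem_univ _)).symm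
  have := sum_congr rfl fun w (_ : w ∈ univ) => hB.gateCount_add hG w r w
  simp only [sum_add_distrib, hsize, hroot, sum_ite_eq, mem_univ, if_true, sum_const,
    card_univ, smul_eq_mul, mul_one] at this
  exact this

lemma degRes_eq_sum_sum : degRes G = 1 / 2 *
    ∑ u, ∑ v, ((G.degree u : ℝ) + G.degree v) * effRes G u v := by
  unfold degRes
  congr!

theorem IsBlockCover.degRes_eq (hB : IsBlockCover B) (hG : G.Connected) :
    degRes G = ∑ b, (B b).cost := by
  have hswap : ∑ u, ∑ v, (G.degree v : ℝ) * sumBlockRes B u v =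
      ∑ u, ∑ v, (G.degree u : ℝ) * sumBlockRes B u v := by
    rw [sum_comm]
    simp only [sumBlockRes_comm B]
  calc degRes G = ∑ u, ∑ v, (G.degree u : ℝ) * sumBlockRes B u v := by
        rw [degRes_eq_sum_sum]
        simp only [hB.effRes_eq hG, add_mul, sum_add_distrib, hswap]
        ring
    _ = ∑ u, ∑ b, (G.degree u : ℝ) * ∑ v, blockRes (B b).size ((B b).gate u - (B b).gate v) :=
        sum_congr rfl fun u _ => by
          rw [← mul_sum, ← mul_sum, sum_comm]
          rfl
    _ = ∑ b, (B b).cost := by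
        rw [sum_comm]
        exact sum_congr rfl fun b _ => (B b).sum_degree_mul_sum_blockRes

end BlockCover

lemma degree_induce {V : Type*} [Fintype V] (G : SimpleGraph V) (S : Set V) (v : S)
    [Fintype ((G.induce S).neighborSet v)] :
    (G.induce S).degree v = #{w ∈ G.neighborFinset v | w ∈ S} := by
  rw [← SimpleGraph.card_neighborFinset_eq_degree, ← card_map (.subtype (· ∈ S))]
  congr 1
  ext w
  simp [and_comm]

namespace Block

variable {V : Type*} [Fintype V] {G : SimpleGraph V} (b : Block G)

lemma reachable_induce_fiber (hG : G.Connected) {i : ZMod b.size} {v : V} (hv : v ∈ b.fiber i) :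
    (G.induce (b.fiber i : Set V)).Reachable ⟨b.vert i, b.vert_mem_fiber i⟩ ⟨v, hv⟩ := by
  have h := hG.preconnected (b.vert i) v
  rw [SimpleGraph.reachable_iff_reflTransGen] at h
  have hgate := b.mem_fiber.1 hv
  induction h with
  | refl => rfl
  | @tail u w _ huw ih =>
    by_cases hu : b.gate u = i
    · have hadj : (G.induce (b.fiber i : Set V)).Adj ⟨u, b.mem_fiber.2 hu⟩ ⟨w, hv⟩ := huw
      exact (ih (b.mem_fiber.2 hu) hu).trans hadj.reachable
    · have hw : b.vert i = w := hgate ▸ (b.of_adj w u huw.symm (by rw [hgate]; exact Ne.symm hu)).1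
      simp only [hw]
      rfl

lemma connected_induce_fiber (hG : G.Connected) (i : ZMod b.size) :
    (G.induce (b.fiber i : Set V)).Connected :=
  (SimpleGraph.connected_iff_exists_forall_reachable _).2
    ⟨_, fun v => b.reachable_induce_fiber hG v.2⟩

lemma sum_card_filter_gate_eq (i : ZMod b.size) :
    ∑ v ∈ b.fiber i, #{w ∈ G.neighborFinset v | b.gate w = b.gate v} =
      2 * #(G.induce (b.fiber i : Set V)).edgeFinset := by
  rw [← SimpleGraph.sum_degrees_eq_twice_card_edges, ← sum_coe_sort]
  refine sum_congr rfl fun v _ => ?_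
  rw [degree_induce]
  simp only [mem_coe, b.mem_fiber, b.mem_fiber.1 v.2]

lemma fiberDeg_eq (i : ZMod b.size) :
    b.fiberDeg i = 2 * #(G.induce (b.fiber i : Set V)).edgeFinset + blockDeg b.size := by
  have hdeg : ∀ v, G.degree v = #{w ∈ G.neighborFinset v | b.gate w = b.gate v} +
      if b.vert (b.gate v) = v then blockDeg b.size else 0 := fun v => by
    rw [← b.card_filter_neighborFinset_gate_ne, ← G.card_neighborFinset_eq_degree,
      card_filter_add_card_filter_not]
  rw [← sum_card_filter_gate_eq, fiberDeg, sum_congr rfl fun v _ => hdeg v, sum_add_distrib]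
  congr 1
  rw [sum_eq_single_of_mem _ (b.vert_mem_fiber i), b.gate_vert, if_pos rfl]
  intro v hv hne
  rw [b.mem_fiber.1 hv, if_neg hne.symm]

lemma fiberDeg_ge (hG : G.Connected) (i : ZMod b.size) :
    2 * b.fiberCard i + blockDeg b.size ≤ b.fiberDeg i + 2 := by
  have h := (b.connected_induce_fiber hG i).card_vert_le_card_edgeSet_add_one
  rw [Nat.card_eq_fintype_card, Nat.card_eq_fintype_card, ← SimpleGraph.edgeFinset_card] at h
  rw [b.fiberDeg_eq, fiberCard]
  have hcard : Fintype.card (b.fiber i : Set V) = #(b.fiber i) := Fintype.card_coe _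
  omega

lemma fiberDeg_of_fiberCard_le_two (hG : G.Connected) {i : ZMod b.size} (hi : b.fiberCard i ≤ 2) :
    2 * b.fiberCard i + blockDeg b.size = b.fiberDeg i + 2 := by
  refine (b.fiberDeg_ge hG i).antisymm ?_
  have h := (G.induce (b.fiber i : Set V)).card_edgeFinset_le_card_choose_two
  rw [show Fintype.card (b.fiber i : Set V) = b.fiberCard i from Fintype.card_coe _] at h
  have hpos := b.one_le_fiberCard i
  rw [b.fiberDeg_eq]
  interval_cases b.fiberCard i <;> simp only [Nat.choose] at h <;> omega

end Block

/-- `B` is a decomposition of a connected graph with `n` vertices into blocks, exactly `t` of which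
are cycles. -/
structure IsBlockDecomposition {V β : Type*} [Fintype V] [Fintype β] {G : SimpleGraph V}
    (B : β → Block G) (n t : ℕ) : Prop where
  cover : IsBlockCover B
  connected : G.Connected
  card_verts : Fintype.card V = n
  card_cycles : #{b | (B b).size ≠ 2} = t

namespace IsBlockDecomposition

variable {V β : Type*} [Fintype V] [Fintype β] {G : SimpleGraph V} {B : β → Block G} {n t : ℕ}

lemma sum_ite_size_ne_two {M : Type*} [AddCommMonoid M] (hB : IsBlockDecomposition B n t) (c : M) :
    ∑ b, (if (B b).size ≠ 2 then c else 0) = t • c := by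
  rw [← sum_filter, sum_const, hB.card_cycles]

lemma sum_size_sub_one (hB : IsBlockDecomposition B n t) : ∑ b, ((B b).size - 1) + 1 = n := by
  have h := hB.cover.sum_size hB.connected
  have hsub : ∑ b, ((B b).size - 1) + Fintype.card β = ∑ b, (B b).size := by
    rw [Fintype.card_eq_sum_ones, ← sum_add_distrib]
    exact sum_congr rfl fun b _ => Nat.sub_add_cancel (one_le_two.trans (B b).two_le_size)
  have := hB.card_verts
  omega

lemma sum_size_sub_three (hB : IsBlockDecomposition B n t) :
    ∑ b, (if (B b).size = 2 then 1 else (B b).size - 3) + 2 * t + 1 = n := by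
  have hterm : ∀ b, (B b).size - 1 = (if (B b).size = 2 then 1 else (B b).size - 3) +
      if (B b).size ≠ 2 then 2 else 0 := fun b => by
    have := (B b).two_le_size
    split_ifs <;> omega
  rw [← hB.sum_size_sub_one, sum_congr rfl fun b _ => hterm b, sum_add_distrib,
    hB.sum_ite_size_ne_two, smul_eq_mul, mul_comm t]

lemma two_mul_add_one_le (hB : IsBlockDecomposition B n t) : 2 * t + 1 ≤ n := by
  have := hB.sum_size_sub_three
  omega

lemma size_add_two_mul_le (hB : IsBlockDecomposition B n t) {b : β} (hb : (B b).size ≠ 2) :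
    (B b).size + 2 * t ≤ n + 2 := by
  have hsingle := single_le_sum_of_canonicallyOrdered (mem_univ b)
    (f := fun b => if (B b).size = 2 then 1 else (B b).size - 3)
  have := hB.sum_size_sub_three
  simp only [if_neg hb] at hsingle
  omega

lemma sum_degree (hB : IsBlockDecomposition B n t) : ∑ v, G.degree v + 2 = 2 * (n + t) := by
  have hterm : ∀ b, (B b).size * blockDeg (B b).size =
      2 * ((B b).size - 1) + if (B b).size ≠ 2 then 2 else 0 := fun b => by
    have := (B b).two_le_size
    unfold blockDeg
    split_ifs <;> omega
  have hsize := hB.sum_size_sub_one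
  rw [hB.cover.sum_degree, sum_congr rfl fun b _ => hterm b, sum_add_distrib, ← mul_sum,
    hB.sum_ite_size_ne_two, smul_eq_mul]
  omega

end IsBlockDecomposition

/-! ### The surplus of a block -/

section Numeric

variable {ι : Type*} [Fintype ι] {x : ι → ℕ}

lemma sum_sub_one_le_mul (hx : ∀ i, ∃ j ≠ i, x j ≠ 0) {i : ι} (hi : x i ≠ 0) :
    ∑ j, (x j : ℝ) - 1 ≤ x i * (∑ j, (x j : ℝ) - x i) := by
  obtain ⟨j, hji, hj⟩ := hx i
  have hle : x i + x j ≤ ∑ j, x j := by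
    rw [← sum_pair hji.symm]
    exact sum_le_sum_of_subset (subset_univ _)
  have h1 : (1 : ℝ) ≤ x i := by exact_mod_cast Nat.one_le_iff_ne_zero.2 hi
  have h2 : (x i : ℝ) + 1 ≤ ∑ j, (x j : ℝ) := by
    exact_mod_cast (by omega : x i + 1 ≤ ∑ j, x j)
  nlinarith

lemma sum_filter_ne_zero_mul (x : ι → ℕ) :
    ∑ i with x i ≠ 0, (x i : ℝ) * (∑ j, (x j : ℝ) - x i) =
      ∑ i, (x i : ℝ) * (∑ j, (x j : ℝ) - x i) :=
  sum_filter_of_ne fun i _ h hi => h (by simp [hi])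

lemma one_lt_card_filter_ne_zero [Nonempty ι] (hx : ∀ i, ∃ j ≠ i, x j ≠ 0) :
    1 < #{i | x i ≠ 0} := by
  obtain ⟨i, -, hi⟩ := hx (Classical.arbitrary ι)
  obtain ⟨j, hji, hj⟩ := hx i
  exact one_lt_card.2 ⟨i, by simpa using hi, j, by simpa using hj, hji.symm⟩

lemma card_mul_le_sum_mul_sub (hx : ∀ i, ∃ j ≠ i, x j ≠ 0) :
    #{i | x i ≠ 0} * (∑ j, (x j : ℝ) - 1) ≤ ∑ i, (x i : ℝ) * (∑ j, (x j : ℝ) - x i) := by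
  rw [← nsmul_eq_mul, ← sum_filter_ne_zero_mul]
  exact card_nsmul_le_sum _ _ _ fun i hi => sum_sub_one_le_mul hx (mem_filter.1 hi).2

lemma card_filter_ne_zero_le_sum (x : ι → ℕ) : #{i | x i ≠ 0} ≤ ∑ i, x i := by
  rw [card_eq_sum_ones, ← sum_filter_ne_zero (s := univ) (f := x)]
  exact sum_le_sum fun i hi => Nat.one_le_iff_ne_zero.2 (mem_filter.1 hi).2

lemma two_mul_le_sum_mul_sub [Nonempty ι] (hx : ∀ i, ∃ j ≠ i, x j ≠ 0) :
    2 * (∑ j, (x j : ℝ) - 1) ≤ ∑ i, (x i : ℝ) * (∑ j, (x j : ℝ) - x i) := by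
  have hcard := one_lt_card_filter_ne_zero hx
  have hsum := card_filter_ne_zero_le_sum x
  have h2 : (2 : ℝ) ≤ #{i | x i ≠ 0} := by exact_mod_cast hcard
  have hX : 1 ≤ ∑ j, (x j : ℝ) := by exact_mod_cast (by omega : 1 ≤ ∑ j, x j)
  exact le_trans (by nlinarith) (card_mul_le_sum_mul_sub hx)

-- If at least three of the `x i` are positive, the bound `3 * (∑ j, x j - 1)` suffices; otherwise
-- some `x i` is zero, so that the two positive ones are at least two.
lemma two_mul_lt_sum_mul_sub (hcard : 3 ≤ Fintype.card ι) (hx : ∀ i, ∃ j ≠ i, x j ≠ 0)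
    (hx₁ : ∀ i j, x i = 0 → x j ≠ 1) :
    2 * (∑ j, (x j : ℝ) - 1) < ∑ i, (x i : ℝ) * (∑ j, (x j : ℝ) - x i) := by
  have : Nonempty ι := Fintype.card_pos_iff.1 (by omega)
  have hpos := one_lt_card_filter_ne_zero hx
  have hsum := card_filter_ne_zero_le_sum x
  have hX : 1 < ∑ j, (x j : ℝ) := by exact_mod_cast (by omega : 1 < ∑ j, x j)
  rcases (show 2 ≤ #{i | x i ≠ 0} from hpos).eq_or_lt with htwo | hthree
  · obtain ⟨i, hi⟩ : ∃ i, x i = 0 := by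
      by_contra! h
      rw [filter_true_of_mem fun i _ => h i, card_univ] at htwo
      omega
    rw [← sum_filter_ne_zero_mul]
    obtain ⟨p, q, hpq, hP⟩ := card_eq_two.1 htwo.symm
    have hge : ∀ j ∈ ({j | x j ≠ 0} : Finset ι), 2 ≤ x j := fun j hj => by
      have := (mem_filter.1 hj).2
      have := hx₁ i j hi
      omega
    have htotal : ∑ j, x j = x p + x q := by
      rw [← sum_filter_ne_zero, hP, sum_pair hpq]
    rw [hP] at hge
    have hp : (2 : ℝ) ≤ x p := by exact_mod_cast hge p (by simp)
    have hq : (2 : ℝ) ≤ x q := by exact_mod_cast hge q (by simp)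
    rw [hP, sum_pair hpq, ← Nat.cast_sum, htotal]
    push_cast
    nlinarith
  · have h3 : (3 : ℝ) ≤ #{i | x i ≠ 0} := by exact_mod_cast hthree
    exact lt_of_lt_of_le (by nlinarith) (card_mul_le_sum_mul_sub hx)

lemma exists_univ_eq_of_card_eq_three [DecidableEq ι] (hcard : Fintype.card ι = 3) {i j : ι}
    (hij : i ≠ j) :
    ∃ l, l ≠ i ∧ l ≠ j ∧ (univ : Finset ι) = {i, j, l} := by
  have hcompl : #({i, j} : Finset ι)ᶜ = 1 := by rw [card_compl, card_pair hij, hcard]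
  obtain ⟨l, hl⟩ := card_eq_one.1 hcompl
  have hmem : l ∈ ({i, j} : Finset ι)ᶜ := by simp [hl]
  simp only [mem_compl, mem_insert, mem_singleton, not_or] at hmem
  refine ⟨l, hmem.1, hmem.2, ?_⟩
  rw [← union_compl {i, j}, hl, insert_union, singleton_union]

end Numeric

namespace Block

variable {V : Type*} [Fintype V] {G : SimpleGraph V} (b : Block G)

/-- The part of the cost of a block that is due to vertices of `G` being attached to different
vertices of the block. -/
noncomputable def excess : ℝ :=
  ∑ i, ∑ j, ((b.fiberDeg i : ℝ) - blockDeg b.size) * ((b.fiberCard j : ℝ) - 1) *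
    blockRes b.size (i - j)

/-- A block is concentrated if all vertices of `G` off the block are attached to a single vertex
of the block. -/
def IsConcentrated : Prop := ∃ i, ∀ j ≠ i, b.fiberCard j = 1

/-- A block is split if it is a triangle and the numbers of vertices of `G` off the block that are
attached to two of its vertices are `0` and `1`. -/
def IsSplit : Prop := b.size = 3 ∧ ∃ i j, b.fiberCard i = 1 ∧ b.fiberCard j = 2

lemma cost_eq_excess_add : b.cost = b.excess + ((b.size : ℝ) ^ 2 - 1) / (3 * blockDeg b.size) *
    (∑ v, G.degree v + blockDeg b.size * ((Fintype.card V : ℝ) - b.size)) := by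
  have hrow : ∀ i, ∑ j, blockRes b.size (i - j) =
      ((b.size : ℝ) ^ 2 - 1) / (3 * blockDeg b.size) := fun i => by
    rw [← sum_blockRes]
    exact (Equiv.subLeft i).sum_comp _
  have hcol : ∀ j, ∑ i, blockRes b.size (i - j) =
      ((b.size : ℝ) ^ 2 - 1) / (3 * blockDeg b.size) := fun j => by
    rw [← sum_blockRes]
    exact (Equiv.subRight j).sum_comp _
  have hterm : ∀ i j, (b.fiberDeg i : ℝ) * b.fiberCard j * blockRes b.size (i - j) =
      ((b.fiberDeg i : ℝ) - blockDeg b.size) * ((b.fiberCard j : ℝ) - 1) *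
        blockRes b.size (i - j) + b.fiberDeg i * blockRes b.size (i - j) +
      (blockDeg b.size * ((b.fiberCard j : ℝ) - 1)) * blockRes b.size (i - j) :=
    fun i j => by ring
  rw [cost, sum_congr rfl fun i _ => sum_congr rfl fun j _ => hterm i j]
  simp only [sum_add_distrib]
  rw [sum_comm (f := fun i j => (blockDeg b.size * ((b.fiberCard j : ℝ) - 1)) *
    blockRes b.size (i - j))]
  simp only [← mul_sum, hrow, hcol]
  rw [← sum_mul, ← sum_mul, ← mul_sum, sum_sub_distrib, ← Nat.cast_sum, ← Nat.cast_sum,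
    b.sum_fiberDeg, b.sum_fiberCard, excess]
  simp only [sum_const, card_univ, ZMod.card, nsmul_eq_mul, mul_one]
  push_cast
  ring

lemma one_le_fiberCard_cast (i : ZMod b.size) : (1 : ℝ) ≤ b.fiberCard i := by
  exact_mod_cast b.one_le_fiberCard i

lemma two_mul_le_fiberDeg_sub (hG : G.Connected) (i : ZMod b.size) :
    2 * ((b.fiberCard i : ℝ) - 1) ≤ b.fiberDeg i - blockDeg b.size := by
  have : (2 * b.fiberCard i + blockDeg b.size : ℝ) ≤ b.fiberDeg i + 2 := by
    exact_mod_cast b.fiberDeg_ge hG i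
  linarith

lemma fiberDeg_sub_of_fiberCard_le_two (hG : G.Connected) {i : ZMod b.size}
    (hi : b.fiberCard i ≤ 2) :
    (b.fiberDeg i : ℝ) - blockDeg b.size = 2 * ((b.fiberCard i : ℝ) - 1) := by
  have : (2 * b.fiberCard i + blockDeg b.size : ℝ) = b.fiberDeg i + 2 := by
    exact_mod_cast b.fiberDeg_of_fiberCard_le_two hG hi
  linarith

lemma fiberDeg_sub_nonneg (hG : G.Connected) (i : ZMod b.size) :
    (0 : ℝ) ≤ b.fiberDeg i - blockDeg b.size := by
  linarith [b.two_mul_le_fiberDeg_sub hG i, b.one_le_fiberCard_cast i]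

lemma excess_nonneg (hG : G.Connected) : 0 ≤ b.excess :=
  sum_nonneg fun i _ => sum_nonneg fun j _ =>
    mul_nonneg (mul_nonneg (b.fiberDeg_sub_nonneg hG i) (sub_nonneg.2 (b.one_le_fiberCard_cast j)))
      (blockRes_nonneg _)

variable {b}

lemma IsConcentrated.excess_eq_zero (hb : b.IsConcentrated) (hG : G.Connected) :
    b.excess = 0 := by
  obtain ⟨c, hc⟩ := hb
  refine sum_eq_zero fun i _ => sum_eq_zero fun j _ => ?_
  rcases eq_or_ne i c with rfl | hi
  · rcases eq_or_ne j i with rfl | hj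
    · rw [sub_self, blockRes_zero, mul_zero]
    · rw [hc j hj, Nat.cast_one, sub_self, mul_zero, zero_mul]
  · rw [b.fiberDeg_sub_of_fiberCard_le_two hG (by rw [hc i hi]; exact one_le_two), hc i hi]
    simp

variable (b)

lemma sum_fiberCard_sub_one :
    ∑ i, ((b.fiberCard i : ℝ) - 1) = Fintype.card V - b.size := by
  rw [sum_sub_distrib, ← Nat.cast_sum, b.sum_fiberCard]
  simp

lemma sum_fiberDeg_sub :
    ∑ i, ((b.fiberDeg i : ℝ) - blockDeg b.size) =
      ∑ v, G.degree v - b.size * blockDeg b.size := by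
  rw [sum_sub_distrib, ← Nat.cast_sum, b.sum_fiberDeg]
  simp

lemma sum_erase_fiberCard_sub_one (i : ZMod b.size) :
    ∑ j ∈ univ.erase i, ((b.fiberCard j : ℝ) - 1) =
      Fintype.card V - b.size - (b.fiberCard i - 1) := by
  rw [← b.sum_fiberCard_sub_one, ← add_sum_erase univ _ (mem_univ i), add_sub_cancel_left]

lemma excess_eq_sum_sum_erase : b.excess = ∑ i, ∑ j ∈ univ.erase i,
    ((b.fiberDeg i : ℝ) - blockDeg b.size) * ((b.fiberCard j : ℝ) - 1) *
      blockRes b.size (i - j) :=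
  sum_congr rfl fun i _ => by
    rw [← add_sum_erase univ _ (mem_univ i), sub_self, blockRes_zero, mul_zero, zero_add]

lemma sum_mul_sub_le_excess (hG : G.Connected) :
    2 / 3 * ∑ i, ((b.fiberDeg i : ℝ) - blockDeg b.size) *
      ((Fintype.card V : ℝ) - b.size - (b.fiberCard i - 1)) ≤ b.excess := by
  rw [excess_eq_sum_sum_erase, mul_sum]
  refine sum_le_sum fun i _ => ?_
  rw [← b.sum_erase_fiberCard_sub_one, mul_sum, mul_sum]
  refine sum_le_sum fun j hj => ?_
  rw [mul_comm]
  exact mul_le_mul_of_nonneg_left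
    (two_thirds_le_blockRes b.two_le_size (sub_ne_zero.2 (ne_of_mem_erase hj).symm))
    (mul_nonneg (b.fiberDeg_sub_nonneg hG i) (sub_nonneg.2 (b.one_le_fiberCard_cast j)))

variable {b}

lemma excess_of_size_eq_three (hb : b.size = 3) :
    b.excess = 2 / 3 * ∑ i, ((b.fiberDeg i : ℝ) - blockDeg b.size) *
      ((Fintype.card V : ℝ) - b.size - (b.fiberCard i - 1)) := by
  have hres : ∀ {k : ℕ} {d : ZMod k}, k = 3 → d ≠ 0 → blockRes k d = 2 / 3 := by
    rintro _ d rfl hd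
    exact blockRes_three hd
  rw [excess_eq_sum_sum_erase, mul_sum]
  refine sum_congr rfl fun i _ => ?_
  rw [← b.sum_erase_fiberCard_sub_one, mul_sum, mul_sum]
  refine sum_congr rfl fun j hj => ?_
  rw [hres hb (sub_ne_zero.2 (ne_of_mem_erase hj).symm), mul_comm]

lemma IsSplit.excess_eq (hb : b.IsSplit) (hG : G.Connected) :
    b.excess = 2 / 3 * (∑ v, G.degree v + 2 * (Fintype.card V : ℝ) - 16) := by
  obtain ⟨hsize, i, j, hi, hj⟩ := hb
  have hij : i ≠ j := by
    rintro rfl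
    omega
  obtain ⟨l, hli, hlj, huniv⟩ := exists_univ_eq_of_card_eq_three (by rw [ZMod.card, hsize]) hij
  have hsum : ∀ f : ZMod b.size → ℝ, ∑ k, f k = f i + (f j + f l) := fun f => by
    rw [huniv, sum_insert (by simp [hij, hli.symm]), sum_pair hlj.symm]
  have hDi := b.fiberDeg_sub_of_fiberCard_le_two hG (i := i) (by omega)
  have hDj := b.fiberDeg_sub_of_fiberCard_le_two hG (i := j) (by omega)
  have hN := b.sum_fiberCard_sub_one
  have hD := b.sum_fiberDeg_sub
  rw [excess_of_size_eq_three hsize]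
  rw [hsum] at hN hD ⊢
  simp only [hi, hj, blockDeg_of_three_le hsize.ge] at hN hD hDi hDj ⊢
  simp only [hsize] at hN hD ⊢
  push_cast at hN hD hDi hDj ⊢
  have hNl : (b.fiberCard l : ℝ) = Fintype.card V - 3 := by linarith
  rw [hDi, hDj, hNl]
  linear_combination 2 / 3 * (hD - hDi - hDj)

lemma exists_fiberCard_ne_one (hb : ¬ b.IsConcentrated) (i : ZMod b.size) :
    ∃ j ≠ i, b.fiberCard j - 1 ≠ 0 := by
  by_contra! h
  exact hb ⟨i, fun j hj => by have := h j hj; have := b.one_le_fiberCard j; omega⟩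

lemma cast_fiberCard_sub_one (i : ZMod b.size) :
    ((b.fiberCard i - 1 : ℕ) : ℝ) = b.fiberCard i - 1 := by
  rw [Nat.cast_sub (b.one_le_fiberCard i), Nat.cast_one]

lemma one_le_sum_sub (hb : ¬ b.IsConcentrated) (i : ZMod b.size) :
    1 ≤ (Fintype.card V : ℝ) - b.size - (b.fiberCard i - 1) := by
  obtain ⟨j, hji, hj⟩ := exists_fiberCard_ne_one hb i
  rw [← b.sum_erase_fiberCard_sub_one]
  refine le_trans ?_ (single_le_sum (fun j _ => sub_nonneg.2 (b.one_le_fiberCard_cast j))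
    (mem_erase.2 ⟨hji, mem_univ j⟩))
  rw [← b.cast_fiberCard_sub_one]
  exact_mod_cast Nat.one_le_iff_ne_zero.2 hj

lemma le_excess_of_not_isConcentrated (hG : G.Connected) (hb : ¬ b.IsConcentrated) :
    2 / 3 * (2 * ∑ i, ((b.fiberCard i : ℝ) - 1) *
        (Fintype.card V - b.size - (b.fiberCard i - 1)) +
      (∑ v, G.degree v - b.size * blockDeg b.size - 2 * ((Fintype.card V : ℝ) - b.size))) ≤
    b.excess := by
  refine le_trans (mul_le_mul_of_nonneg_left ?_ (by norm_num)) (b.sum_mul_sub_le_excess hG)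
  rw [← b.sum_fiberDeg_sub, ← b.sum_fiberCard_sub_one, mul_sum, mul_sum, ← sum_sub_distrib,
    ← sum_add_distrib, b.sum_fiberCard_sub_one]
  refine sum_le_sum fun i _ => ?_
  have hD := b.two_mul_le_fiberDeg_sub hG i
  have hN := one_le_sum_sub hb i
  nlinarith [mul_nonneg (sub_nonneg.2 hD) (sub_nonneg.2 hN)]

lemma two_mul_le_sum_fiberCard (hb : ¬ b.IsConcentrated) :
    2 * ((Fintype.card V : ℝ) - b.size - 1) ≤ ∑ i, ((b.fiberCard i : ℝ) - 1) *
      (Fintype.card V - b.size - (b.fiberCard i - 1)) := by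
  have h := two_mul_le_sum_mul_sub (exists_fiberCard_ne_one hb)
  simpa only [cast_fiberCard_sub_one, sum_fiberCard_sub_one] using h

lemma two_mul_lt_sum_fiberCard (hsize : b.size = 3) (hb : ¬ b.IsConcentrated)
    (hb' : ¬ b.IsSplit) :
    2 * ((Fintype.card V : ℝ) - b.size - 1) < ∑ i, ((b.fiberCard i : ℝ) - 1) *
      (Fintype.card V - b.size - (b.fiberCard i - 1)) := by
  have h := two_mul_lt_sum_mul_sub (by rw [ZMod.card, hsize]) (exists_fiberCard_ne_one hb)
    fun i j hi hj => hb' ⟨hsize, i, j, by have := b.one_le_fiberCard i; omega, by omega⟩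
  simpa only [cast_fiberCard_sub_one, sum_fiberCard_sub_one] using h

end Block

/-- The cost of a concentrated bridge if `n` and `t` are the numbers of vertices and cycles. -/
noncomputable def edgeCost (n t : ℕ) : ℝ := 3 * n + 2 * t - 4

/-- The cost of a concentrated triangle if `n` and `t` are the numbers of vertices and cycles. -/
noncomputable def triangleCost (n t : ℕ) : ℝ := (16 * n + 8 * t - 32) / 3

/-- The sum of the costs of the bridges and triangles if all of them are concentrated. -/
noncomputable def minDegRes (n t : ℕ) : ℝ :=
  (n - 1) * edgeCost n t + t * (triangleCost n t - 2 * edgeCost n t)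

/-- The degree resistance distance of `G4g n t` minus `minDegRes n t`. -/
noncomputable def splitSurplus (n t : ℕ) : ℝ := (8 * n + 4 * t - 36) / 3

namespace Block

variable {V : Type*} [Fintype V] {G : SimpleGraph V}

/-- The cost of a block minus its share of `minDegRes n t`. A cycle contributes one unit of `t` and
a block with `k` vertices contributes `k - 1` units of `n - 1`. -/
noncomputable def surplus (b : Block G) (n t : ℕ) : ℝ :=
  b.cost - (((b.size : ℝ) - 1) * edgeCost n t +
    if b.size ≠ 2 then triangleCost n t - 2 * edgeCost n t else 0)

end Block

namespace IsBlockDecomposition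

variable {V β : Type*} [Fintype V] [Fintype β] {G : SimpleGraph V} {B : β → Block G} {n t : ℕ}
  {b : β}

lemma degRes_eq (hB : IsBlockDecomposition B n t) :
    degRes G = minDegRes n t + ∑ b, (B b).surplus n t := by
  have hsize : ∑ b, (((B b).size : ℝ) - 1) = n - 1 := by
    have hterm : ∀ b, ((B b).size : ℝ) - 1 = ((B b).size - 1 : ℕ) := fun b => by
      rw [Nat.cast_sub (one_le_two.trans (B b).two_le_size), Nat.cast_one]
    rw [sum_congr rfl fun b _ => hterm b, ← Nat.cast_sum, ← hB.sum_size_sub_one]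
    push_cast
    ring
  simp only [Block.surplus]
  rw [hB.cover.degRes_eq hB.connected, sum_sub_distrib, sum_add_distrib, ← sum_mul, hsize,
    hB.sum_ite_size_ne_two, nsmul_eq_mul, minDegRes]
  ring

lemma sum_degree_cast (hB : IsBlockDecomposition B n t) :
    ((∑ v, G.degree v : ℕ) : ℝ) = 2 * (n + t) - 2 := by
  have : ((∑ v, G.degree v : ℕ) : ℝ) + 2 = 2 * (n + t) := by exact_mod_cast hB.sum_degree
  linarith

lemma surplus_of_size_eq_two (hB : IsBlockDecomposition B n t) (hb : (B b).size = 2) :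
    (B b).surplus n t = (B b).excess := by
  rw [Block.surplus, (B b).cost_eq_excess_add, hB.sum_degree_cast, hB.card_verts, hb,
    blockDeg_two, edgeCost]
  norm_num
  ring

lemma surplus_of_three_le_size (hB : IsBlockDecomposition B n t) (hb : 3 ≤ (B b).size) :
    (B b).surplus n t = (B b).excess + ((B b).size - 3) *
      (((B b).size + 3) * (2 * n + t - 1 - (B b).size) + 4 - 9 * n - 6 * t) / 3 := by
  rw [Block.surplus, (B b).cost_eq_excess_add, hB.sum_degree_cast, hB.card_verts,
    blockDeg_of_three_le hb, if_pos (by omega), edgeCost, triangleCost]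
  push_cast
  ring

end IsBlockDecomposition

/-- The surplus of a concentrated quadrilateral if `n` and `t` are the numbers of vertices and
cycles. -/
noncomputable def squareSurplus (n t : ℕ) : ℝ := (5 * n + t - 31) / 3

/-- A block is minimal if it is a concentrated bridge or triangle. -/
def Block.IsMinimal {V : Type*} [Fintype V] {G : SimpleGraph V} (b : Block G) : Prop :=
  b.IsConcentrated ∧ b.size ≤ 3

namespace IsBlockDecomposition

variable {V β : Type*} [Fintype V] [Fintype β] {G : SimpleGraph V} {B : β → Block G} {n t : ℕ}
  {b : β}

lemma surplus_of_isMinimal (hB : IsBlockDecomposition B n t) (hb : (B b).IsMinimal) :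
    (B b).surplus n t = 0 := by
  rcases (B b).two_le_size.eq_or_lt with h | h
  · rw [hB.surplus_of_size_eq_two h.symm, hb.1.excess_eq_zero hB.connected]
  · rw [hB.surplus_of_three_le_size h, hb.1.excess_eq_zero hB.connected, hb.2.antisymm h]
    simp

lemma surplus_of_size_eq_four (hB : IsBlockDecomposition B n t) (hb : (B b).size = 4) :
    (B b).surplus n t = (B b).excess + squareSurplus n t := by
  rw [hB.surplus_of_three_le_size (by omega), hb, squareSurplus]
  push_cast
  ring

lemma surplus_of_isSplit (hB : IsBlockDecomposition B n t) (hb : (B b).IsSplit) :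
    (B b).surplus n t = splitSurplus n t := by
  rw [hB.surplus_of_three_le_size hb.1.ge, hb.excess_eq hB.connected, hB.sum_degree_cast,
    hB.card_verts, hb.1, splitSurplus]
  push_cast
  ring

lemma splitSurplus_lt_of_five_le_size (hB : IsBlockDecomposition B n t) (hn : 25 ≤ n)
    (hb : 5 ≤ (B b).size) : splitSurplus n t < (B b).surplus n t := by
  rw [hB.surplus_of_three_le_size (by omega), splitSurplus]
  have hn : (25 : ℝ) ≤ n := by exact_mod_cast hn
  have hb : (5 : ℝ) ≤ (B b).size := by exact_mod_cast hb
  have hsize : ((B b).size : ℝ) + 2 * t ≤ n + 2 := by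
    exact_mod_cast hB.size_add_two_mul_le (by omega)
  have hprod : 7 * n + 2 * t - 44 ≤
      ((B b).size + 3 : ℝ) * (2 * n + t - 1 - (B b).size) + 4 - 9 * n - 6 * t := by
    have : (0 : ℝ) ≤ ((B b).size - 5) * (2 * n + t - 9 - (B b).size) :=
      mul_nonneg (by linarith) (by linarith [(t.cast_nonneg : (0 : ℝ) ≤ t)])
    nlinarith
  have := (B b).excess_nonneg hB.connected
  have : (2 : ℝ) * (7 * n + 2 * t - 44) ≤ ((B b).size - 3) *
      (((B b).size + 3) * (2 * n + t - 1 - (B b).size) + 4 - 9 * n - 6 * t) :=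
    mul_le_mul (by linarith) hprod (by linarith [(t.cast_nonneg : (0 : ℝ) ≤ t)]) (by linarith)
  linarith

lemma splitSurplus_lt_of_not_isConcentrated (hB : IsBlockDecomposition B n t) (hn : 25 ≤ n)
    (hb : ¬ (B b).IsConcentrated) (hb' : ¬ (B b).IsSplit) :
    splitSurplus n t < (B b).surplus n t := by
  have hexcess := Block.le_excess_of_not_isConcentrated hB.connected hb
  have hsum := Block.two_mul_le_sum_fiberCard hb
  have hsum' := fun h => Block.two_mul_lt_sum_fiberCard h hb hb'
  rw [hB.sum_degree_cast] at hexcess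
  simp only [hB.card_verts] at hexcess hsum hsum'
  have hle : 2 / 3 * (4 * n + 2 * t - 6 - (B b).size * (2 + blockDeg (B b).size)) ≤
      (B b).excess := by linarith
  have hlt : (B b).size = 3 →
      2 / 3 * (4 * n + 2 * t - 6 - (B b).size * (2 + blockDeg (B b).size)) < (B b).excess :=
    fun h => by linarith [hsum' h]
  have hn' : (25 : ℝ) ≤ n := by exact_mod_cast hn
  have ht : (0 : ℝ) ≤ t := t.cast_nonneg
  obtain h | h | h | h : (B b).size = 2 ∨ (B b).size = 3 ∨ (B b).size = 4 ∨ 5 ≤ (B b).size := by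
    have := (B b).two_le_size
    omega
  · rw [hB.surplus_of_size_eq_two h, splitSurplus]
    rw [h, blockDeg_two] at hle
    push_cast at hle
    linarith
  · specialize hlt h
    rw [hB.surplus_of_three_le_size h.ge, splitSurplus, h]
    rw [h, blockDeg_of_three_le le_rfl] at hlt
    push_cast at hlt ⊢
    linarith
  · rw [hB.surplus_of_size_eq_four h, splitSurplus, squareSurplus]
    rw [h, blockDeg_of_three_le (by norm_num)] at hle
    push_cast at hle
    linarith
  · exact hB.splitSurplus_lt_of_five_le_size hn h

lemma surplus_cases (hB : IsBlockDecomposition B n t) (hn : 25 ≤ n) (b : β) :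
    (B b).IsMinimal ∨ ((B b).IsConcentrated ∧ (B b).size = 4) ∨ (B b).IsSplit ∨
      splitSurplus n t < (B b).surplus n t := by
  by_cases hc : (B b).IsConcentrated
  · rcases le_or_gt (B b).size 3 with h3 | h3
    · exact .inl ⟨hc, h3⟩
    rcases (show 4 ≤ (B b).size from h3).eq_or_lt with h4 | h5
    · exact .inr (.inl ⟨hc, h4.symm⟩)
    · exact .inr (.inr (.inr (hB.splitSurplus_lt_of_five_le_size hn h5)))
  · by_cases hs : (B b).IsSplit
    · exact .inr (.inr (.inl hs))
    · exact .inr (.inr (.inr (hB.splitSurplus_lt_of_not_isConcentrated hn hc hs)))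

lemma squareSurplus_le_or_splitSurplus_le (hB : IsBlockDecomposition B n t) (hn : 25 ≤ n)
    (hb : ¬ (B b).IsMinimal) :
    ((B b).size = 4 ∧ squareSurplus n t ≤ (B b).surplus n t) ∨
      splitSurplus n t ≤ (B b).surplus n t := by
  rcases hB.surplus_cases hn b with h | ⟨-, h⟩ | h | h
  · exact absurd h hb
  · refine .inl ⟨h, ?_⟩
    rw [hB.surplus_of_size_eq_four h]
    linarith [(B b).excess_nonneg hB.connected]
  · exact .inr (hB.surplus_of_isSplit h).ge
  · exact .inr h.le

lemma squareSurplus_pos (hn : 25 ≤ n) : 0 < squareSurplus n t := by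
  have hn : (25 : ℝ) ≤ n := by exact_mod_cast hn
  rw [squareSurplus]
  linarith [(t.cast_nonneg : (0 : ℝ) ≤ t)]

lemma splitSurplus_pos (hn : 25 ≤ n) : 0 < splitSurplus n t := by
  have hn : (25 : ℝ) ≤ n := by exact_mod_cast hn
  rw [splitSurplus]
  linarith [(t.cast_nonneg : (0 : ℝ) ≤ t)]

lemma surplus_nonneg (hB : IsBlockDecomposition B n t) (hn : 25 ≤ n) (b : β) :
    0 ≤ (B b).surplus n t := by
  by_cases hb : (B b).IsMinimal
  · exact (hB.surplus_of_isMinimal hb).ge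
  · rcases hB.squareSurplus_le_or_splitSurplus_le hn hb with ⟨-, h⟩ | h
    · exact (squareSurplus_pos hn).le.trans h
    · exact (splitSurplus_pos hn).le.trans h

lemma splitSurplus_lt_two_mul_squareSurplus (hB : IsBlockDecomposition B n t) (hn : 25 ≤ n)
    {b₁ b₂ : β} (hne : b₁ ≠ b₂) (h₁ : (B b₁).size = 4) (h₂ : (B b₂).size = 4) :
    splitSurplus n t < 2 * squareSurplus n t := by
  have hpair := sum_le_sum_of_subset (subset_univ {b₁, b₂})
    (f := fun b => if (B b).size = 2 then 1 else (B b).size - 3)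
  rw [sum_pair hne, h₁, h₂, if_neg (by norm_num)] at hpair
  have hcard := hB.sum_size_sub_three
  have : (2 * t + 3 : ℝ) ≤ n := by exact_mod_cast (by omega : 2 * t + 3 ≤ n)
  have hn : (25 : ℝ) ≤ n := by exact_mod_cast hn
  rw [splitSurplus, squareSurplus]
  linarith

lemma splitSurplus_lt_of_ne (hB : IsBlockDecomposition B n t) (hn : 25 ≤ n) {b₁ b₂ : β}
    (hne : b₁ ≠ b₂) (h₁ : ¬ (B b₁).IsMinimal) (h₂ : ¬ (B b₂).IsMinimal) :
    splitSurplus n t < ∑ b, (B b).surplus n t := by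
  have hpair : (B b₁).surplus n t + (B b₂).surplus n t ≤ ∑ b, (B b).surplus n t := by
    rw [← sum_pair hne (f := fun b => (B b).surplus n t)]
    exact sum_le_sum_of_subset_of_nonneg (subset_univ _) fun b _ _ => hB.surplus_nonneg hn b
  refine lt_of_lt_of_le ?_ hpair
  have hsquare := squareSurplus_pos (t := t) hn
  have hsplit := splitSurplus_pos (t := t) hn
  rcases hB.squareSurplus_le_or_splitSurplus_le hn h₁ with ⟨h₁, h₁'⟩ | h₁' <;>
    rcases hB.squareSurplus_le_or_splitSurplus_le hn h₂ with ⟨h₂, h₂'⟩ | h₂'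
  · linarith [hB.splitSurplus_lt_two_mul_squareSurplus hn hne h₁ h₂]
  all_goals linarith

lemma sum_surplus_eq_of_forall_ne (hB : IsBlockDecomposition B n t)
    (hb : ∀ c ≠ b, (B c).IsMinimal) : ∑ c, (B c).surplus n t = (B b).surplus n t :=
  Fintype.sum_eq_single b fun c hc => hB.surplus_of_isMinimal (hb c hc)

lemma degRes_of_isSplit (hB : IsBlockDecomposition B n t) (hb : (B b).IsSplit)
    (hne : ∀ c ≠ b, (B c).IsMinimal) : degRes G = minDegRes n t + splitSurplus n t := by
  rw [hB.degRes_eq, hB.sum_surplus_eq_of_forall_ne hne, hB.surplus_of_isSplit hb]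

theorem degRes_cases (hB : IsBlockDecomposition B n t) (hn : 25 ≤ n) :
    (∀ b, (B b).IsMinimal) ∨
    (∃ b, ((B b).IsConcentrated ∧ (B b).size = 4) ∧ ∀ c ≠ b, (B c).IsMinimal) ∨
    (∃ b, (B b).IsSplit ∧ ∀ c ≠ b, (B c).IsMinimal) ∨
    minDegRes n t + splitSurplus n t < degRes G := by
  rw [hB.degRes_eq, add_lt_add_iff_left]
  by_cases hall : ∀ b, (B b).IsMinimal
  · exact .inl hall
  push Not at hall
  obtain ⟨b, hb⟩ := hall
  by_cases hne : ∀ c ≠ b, (B c).IsMinimal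
  · rw [hB.sum_surplus_eq_of_forall_ne hne]
    rcases hB.surplus_cases hn b with h | h | h | h
    · exact absurd h hb
    · exact .inr (.inl ⟨b, h, hne⟩)
    · exact .inr (.inr (.inl ⟨b, h, hne⟩))
    · exact .inr (.inr (.inr h))
  · push Not at hne
    obtain ⟨c, hcb, hc⟩ := hne
    exact .inr (.inr (.inr (hB.splitSurplus_lt_of_ne hn hcb hc hb)))

end IsBlockDecomposition

/-! ### Existence of a block decomposition -/

section Existence

variable {V : Type*} {G : SimpleGraph V}

lemma isCycleSubgraph_toSubgraph {u : V} {p : G.Walk u u} (hp : p.IsCycle) :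
    IsCycleSubgraph p.toSubgraph :=
  ⟨p.toSubgraph_connected.coe, fun _ hv =>
    hp.ncard_neighborSet_toSubgraph_eq_two (p.mem_verts_toSubgraph.1 hv)⟩

lemma sym2_injective_of_injective {k : ℕ} (hk : 3 ≤ k) {s : ZMod k → V}
    (hs : Function.Injective s) : Function.Injective fun i => s(s i, s (i + 1)) := fun i j h => by
  rcases Sym2.eq_iff.1 h with ⟨h, -⟩ | ⟨h₁, h₂⟩
  · exact hs h
  · refine absurd ?_ (add_one_ne_sub_one hk i)
    rw [hs h₂, hs h₁, add_sub_cancel_right]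

lemma exists_zmod_enumeration {u : V} {p : G.Walk u u} (hp : p.IsCycle) :
    ∃ s : ZMod p.length → V, Function.Injective s ∧
      ∀ x y, p.toSubgraph.Adj x y ↔ ∃ i, s(x, y) = s(s i, s (i + 1)) := by
  have hlen := hp.three_le_length
  have : NeZero p.length := ⟨by omega⟩
  have hval : ∀ a < p.length, p.getVert (a : ZMod p.length).val = p.getVert a := fun a ha => by
    rw [ZMod.val_natCast, Nat.mod_eq_of_lt ha]
  have hval_succ : ∀ a < p.length,
      p.getVert ((a : ZMod p.length) + 1).val = p.getVert (a + 1) := fun a ha => by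
    rw [← Nat.cast_succ, ZMod.val_natCast]
    rcases (show a + 1 ≤ p.length from ha).lt_or_eq with h | h
    · rw [Nat.succ_eq_add_one, Nat.mod_eq_of_lt h]
    · rw [Nat.succ_eq_add_one, h, Nat.mod_self, p.getVert_zero, p.getVert_length]
  refine ⟨fun i => p.getVert i.val, fun i j hij => ZMod.val_injective _ (hp.getVert_injOn'
    (Nat.le_pred_of_lt i.val_lt) (Nat.le_pred_of_lt j.val_lt) hij), fun x y => ?_⟩
  rw [SimpleGraph.Walk.toSubgraph_adj_iff]
  constructor
  · rintro ⟨a, ha, hlt⟩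
    exact ⟨a, by simp only [hval a hlt, hval_succ a hlt, ha]⟩
  · rintro ⟨i, hi⟩
    obtain ⟨a, ha, rfl⟩ := exists_natCast_eq i
    simp only [hval a ha, hval_succ a ha] at hi
    exact ⟨a, hi.symm, ha⟩

lemma reachable_of_forall_adj_add_one {k : ℕ} [NeZero k] {s : ZMod k → V} {i j : ZMod k}
    (h : ∀ l, l ≠ i → l ≠ j → G.Adj (s l) (s (l + 1))) : G.Reachable (s (i + 1)) (s j) := by
  have harc : ∀ m ≤ (j - (i + 1)).val, G.Reachable (s (i + 1)) (s (i + 1 + (m : ZMod k))) := by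
    intro m
    induction m with
    | zero =>
      intro _
      rw [Nat.cast_zero, add_zero]
    | succ m ih =>
      intro hm
      have hlt := (j - (i + 1)).val_lt
      refine (ih (by omega)).trans (SimpleGraph.Adj.reachable ?_)
      rw [Nat.cast_succ, ← add_assoc]
      refine h _ (fun hi => ?_) fun hj => ?_
      · have hdvd := (ZMod.natCast_eq_zero_iff (m + 1) k).1 (by push_cast; linear_combination hi)
        have := Nat.le_of_dvd m.succ_pos hdvd
        omega
      · have hval := congrArg ZMod.val (show (m : ZMod k) = j - (i + 1) by linear_combination hj)
        rw [ZMod.val_natCast, Nat.mod_eq_of_lt (by omega)] at hval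
        omega
  simpa only [ZMod.natCast_zmod_val, add_sub_cancel] using harc _ le_rfl

lemma Block.exists_of_separated (hG : G.Connected) {K : SimpleGraph V} {k : ℕ} (hk : 2 ≤ k)
    {s : ZMod k → V} (hadj : ∀ i, G.Adj (s i) (s (i + 1)))
    (hedge : ∀ u v, G.Adj u v → ¬ K.Adj u v → ∃ i, s(u, v) = s(s i, s (i + 1)))
    (hsep : ∀ i j, K.Reachable (s i) (s j) → i = j) :
    ∃ b : Block G, b.size = k ∧ ∀ u v, G.Adj u v → (b.gate u ≠ b.gate v ↔ ¬ K.Adj u v) := by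
  have hex : ∀ v, ∃ i, K.Reachable (s i) v := fun v => by
    have h := hG.preconnected (s 0) v
    rw [SimpleGraph.reachable_iff_reflTransGen] at h
    induction h with
    | refl => exact ⟨0, .refl _⟩
    | @tail u v _ huv ih =>
      by_cases hu : K.Adj u v
      · exact ih.imp fun i hi => hi.trans hu.reachable
      · obtain ⟨j, hj⟩ := hedge u v huv hu
        rcases Sym2.eq_iff.1 hj with ⟨_, rfl⟩ | ⟨_, rfl⟩
        exacts [⟨j + 1, .refl _⟩, ⟨j, .refl _⟩]
  choose gate hgate using hex
  have hgate_s : ∀ i, gate (s i) = i := fun i => hsep _ _ (hgate (s i))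
  have hgate_adj : ∀ u v, K.Adj u v → gate u = gate v := fun u v h =>
    hsep _ _ (((hgate u).trans h.reachable).trans (hgate v).symm)
  have : Fact (1 < k) := ⟨hk⟩
  refine ⟨⟨k, hk, s, gate, hgate_s, hadj, fun u v huv hne => ?_⟩, rfl, fun u v huv =>
    ⟨fun h hK => h (hgate_adj u v hK), fun h => ?_⟩⟩
  · obtain ⟨j, hj⟩ := hedge u v huv fun h => hne (hgate_adj u v h)
    rcases Sym2.eq_iff.1 hj with ⟨rfl, rfl⟩ | ⟨rfl, rfl⟩ <;> simp [hgate_s]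
  · obtain ⟨j, hj⟩ := hedge u v huv h
    rcases Sym2.eq_iff.1 hj with ⟨rfl, rfl⟩ | ⟨rfl, rfl⟩ <;> simp [hgate_s]

lemma Block.exists_of_isBridge (hG : G.Connected) {u v : V} (huv : G.Adj u v)
    (hb : G.IsBridge s(u, v)) :
    ∃ b : Block G, b.size = 2 ∧
      ∀ x y, G.Adj x y → (b.gate x ≠ b.gate y ↔ s(x, y) = s(u, v)) := by
  rw [SimpleGraph.isBridge_iff] at hb
  have hK : ∀ x y, G.Adj x y → (¬ (G.deleteEdges {s(u, v)}).Adj x y ↔ s(x, y) = s(u, v)) :=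
    fun x y hxy => by
      simp only [SimpleGraph.deleteEdges_adj, hxy, true_and, not_not, Set.mem_singleton_iff]
  obtain ⟨b, hsize, hgate⟩ := Block.exists_of_separated hG (K := G.deleteEdges {s(u, v)}) le_rfl
    (s := ![u, v]) (fun i => by fin_cases i; exacts [huv, huv.symm])
    (fun x y hxy hn => ⟨0, (hK x y hxy).1 hn⟩) (fun i j hij => by
      fin_cases i <;> fin_cases j
      exacts [rfl, absurd hij hb, absurd hij.symm hb, rfl])
  exact ⟨b, hsize, fun x y hxy => (hgate x y hxy).trans (hK x y hxy)⟩

variable [Finite V]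

lemma eq_of_isCycleSubgraph_of_adj (hG : IsCactus G) {H₁ H₂ : G.Subgraph}
    (h₁ : IsCycleSubgraph H₁) (h₂ : IsCycleSubgraph H₂) {u v : V} (hu₁ : H₁.Adj u v)
    (hu₂ : H₂.Adj u v) : H₁ = H₂ := by
  by_contra hne
  have hsub : ({u, v} : Set V) ⊆ H₁.verts ∩ H₂.verts := by
    rintro x (rfl | rfl)
    exacts [⟨H₁.edge_vert hu₁, H₂.edge_vert hu₂⟩, ⟨H₁.edge_vert hu₁.symm, H₂.edge_vert hu₂.symm⟩]
  have hcard := Set.ncard_le_ncard hsub (Set.toFinite _)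
  rw [Set.ncard_pair (H₁.adj_sub hu₁).ne] at hcard
  have := hG.2 H₁ H₂ h₁ h₂ hne
  omega

lemma exists_isCycle_toSubgraph_eq (hG : IsCactus G) {H : G.Subgraph} (hH : IsCycleSubgraph H) :
    ∃ (u : V) (p : G.Walk u u), p.IsCycle ∧ p.toSubgraph = H := by
  have hcycles : H.spanningCoe.IsCycles := by
    rintro v ⟨w, hw⟩
    exact hH.2 v (H.edge_vert hw)
  obtain ⟨⟨v, hv⟩⟩ := hH.1.nonempty
  obtain ⟨w, hw⟩ : {u | H.Adj v u}.Nonempty :=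
    Set.nonempty_of_ncard_ne_zero (by rw [hH.2 v hv]; exact two_ne_zero)
  obtain ⟨u, p, hp, hpe⟩ := SimpleGraph.adj_and_reachable_delete_edges_iff_exists_cycle.1
    ⟨(show H.spanningCoe.Adj v w from hw), hcycles.reachable_deleteEdges hw⟩
  have hp' := hp.mapLe H.spanningCoe_le
  refine ⟨u, _, hp', eq_of_isCycleSubgraph_of_adj hG (isCycleSubgraph_toSubgraph hp') hH ?_ hw⟩
  rwa [SimpleGraph.Walk.adj_toSubgraph_mapLe, SimpleGraph.Walk.adj_toSubgraph_iff_mem_edges]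

lemma eq_of_reachable_deleteEdges (hG : IsCactus G) {H : G.Subgraph} (hH : IsCycleSubgraph H)
    {k : ℕ} (hk : 3 ≤ k) {s : ZMod k → V} (hs : Function.Injective s)
    (hadj : ∀ i, H.Adj (s i) (s (i + 1))) {i j : ZMod k}
    (hij : (G.deleteEdges H.edgeSet).Reachable (s i) (s j)) : i = j := by
  by_contra hne
  have : NeZero k := ⟨by omega⟩
  have hinj := sym2_injective_of_injective hk hs
  set G' := G.deleteEdges {s(s j, s (j + 1))}
  have hG'le : G' ≤ G := SimpleGraph.deleteEdges_le _
  have hbridge : G'.IsBridge s(s i, s (i + 1)) := by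
    have hmem : s(s i, s (i + 1)) ∈ G'.edgeSet :=
      SimpleGraph.deleteEdges_adj.2 ⟨(hadj i).adj_sub, fun h => hne (hinj h)⟩
    rw [SimpleGraph.isBridge_iff_forall_cycle_notMem hmem]
    intro u q hq hmem
    have hq' := hq.mapLe hG'le
    have heq := eq_of_isCycleSubgraph_of_adj hG (isCycleSubgraph_toSubgraph hq') hH (by
      rwa [SimpleGraph.Walk.adj_toSubgraph_mapLe,
        SimpleGraph.Walk.adj_toSubgraph_iff_mem_edges]) (hadj i)
    have hadj' := hadj j
    rw [← heq, SimpleGraph.Walk.adj_toSubgraph_mapLe] at hadj'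
    exact (SimpleGraph.deleteEdges_adj.1 hadj'.adj_sub).2 rfl
  refine SimpleGraph.isBridge_iff.1 hbridge ((hij.mono fun x y hxy => ?_).trans
    (reachable_of_forall_adj_add_one fun l hi hj => ?_).symm)
  · obtain ⟨hGxy, hxy⟩ := SimpleGraph.deleteEdges_adj.1 hxy
    refine SimpleGraph.deleteEdges_adj.2 ⟨SimpleGraph.deleteEdges_adj.2 ⟨hGxy, fun h => hxy ?_⟩,
      fun h => hxy ?_⟩
    exacts [Set.mem_singleton_iff.1 h ▸ hadj j, Set.mem_singleton_iff.1 h ▸ hadj i]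
  · exact SimpleGraph.deleteEdges_adj.2 ⟨SimpleGraph.deleteEdges_adj.2
      ⟨(hadj l).adj_sub, fun h => hj (hinj h)⟩, fun h => hi (hinj h)⟩

lemma Block.exists_of_isCycleSubgraph (hG : IsCactus G) {H : G.Subgraph}
    (hH : IsCycleSubgraph H) :
    ∃ b : Block G, 3 ≤ b.size ∧ ∀ x y, G.Adj x y → (b.gate x ≠ b.gate y ↔ H.Adj x y) := by
  obtain ⟨w, p, hp, rfl⟩ := exists_isCycle_toSubgraph_eq hG hH
  have hlen := hp.three_le_length
  obtain ⟨s, hs, hadj⟩ := exists_zmod_enumeration hp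
  have hs_adj : ∀ i, p.toSubgraph.Adj (s i) (s (i + 1)) := fun i => (hadj _ _).2 ⟨i, rfl⟩
  have hK : ∀ x y, G.Adj x y →
      (¬ (G.deleteEdges p.toSubgraph.edgeSet).Adj x y ↔ p.toSubgraph.Adj x y) :=
    fun x y hxy => by
      simp only [SimpleGraph.deleteEdges_adj, hxy, true_and, not_not,
        SimpleGraph.Subgraph.mem_edgeSet]
  obtain ⟨b, hsize, hgate⟩ := Block.exists_of_separated hG.1
    (K := G.deleteEdges p.toSubgraph.edgeSet) (by omega) (fun i => (hs_adj i).adj_sub)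
    (fun x y hxy hn => (hadj x y).1 ((hK x y hxy).1 hn))
    fun i j => eq_of_reachable_deleteEdges hG hH hlen hs hs_adj
  exact ⟨b, by omega, fun x y hxy => (hgate x y hxy).trans (hK x y hxy)⟩

lemma isBlockCover_sumElim (hG : IsCactus G)
    {BC : {H : G.Subgraph // IsCycleSubgraph H} → Block G}
    (hBC : ∀ H x y, G.Adj x y → ((BC H).gate x ≠ (BC H).gate y ↔ H.1.Adj x y))
    {BE : {e : Sym2 V // e ∈ G.edgeSet ∧ G.IsBridge e} → Block G}
    (hBE : ∀ e x y, G.Adj x y → ((BE e).gate x ≠ (BE e).gate y ↔ s(x, y) = e)) :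
    IsBlockCover (Sum.elim BC BE) := by
  intro u v huv
  by_cases hb : G.IsBridge s(u, v)
  · refine ⟨.inr ⟨s(u, v), huv, hb⟩, (hBE _ u v huv).2 rfl, ?_⟩
    rintro (H | e) he
    · obtain ⟨w, p, hp, hpH⟩ := exists_isCycle_toSubgraph_eq hG H.2
      have hmem := (hBC H u v huv).1 he
      rw [← hpH, SimpleGraph.Walk.adj_toSubgraph_iff_mem_edges] at hmem
      exact absurd hmem (hb.notMem_edges_of_isCycle hp)
    · exact congrArg Sum.inr (Subtype.ext ((hBE e u v huv).1 he).symm)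
  · have hcycle := hb
    rw [SimpleGraph.isBridge_iff_forall_cycle_notMem (show s(u, v) ∈ G.edgeSet from huv)] at hcycle
    push Not at hcycle
    obtain ⟨w, p, hp, hmem⟩ := hcycle
    rw [← SimpleGraph.Walk.adj_toSubgraph_iff_mem_edges] at hmem
    have hpc := isCycleSubgraph_toSubgraph hp
    refine ⟨.inl ⟨p.toSubgraph, hpc⟩, (hBC _ u v huv).2 hmem, ?_⟩
    rintro (H | e) he
    · exact congrArg Sum.inl (Subtype.ext
        (eq_of_isCycleSubgraph_of_adj hG H.2 hpc ((hBC H u v huv).1 he) hmem))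
    · rw [(hBE e u v huv).1 he] at hb
      exact absurd e.2.2 hb

end Existence

theorem exists_isBlockDecomposition.{u} {V : Type u} [Fintype V] {G : SimpleGraph V} {n t : ℕ}
    (hG : MemCact n t G) :
    ∃ (β : Type u) (_ : Fintype β) (B : β → Block G), IsBlockDecomposition B n t := by
  obtain ⟨hcactus, hcard, hcycles⟩ := hG
  choose BC hBC₁ hBC₂ using fun H : {H : G.Subgraph // IsCycleSubgraph H} =>
    Block.exists_of_isCycleSubgraph hcactus H.2
  have hbridge : ∀ e : {e : Sym2 V // e ∈ G.edgeSet ∧ G.IsBridge e}, ∃ b : Block G,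
      b.size = 2 ∧ ∀ x y, G.Adj x y → (b.gate x ≠ b.gate y ↔ s(x, y) = e) := by
    rintro ⟨⟨u, v⟩, he, hb⟩
    exact Block.exists_of_isBridge hcactus.1 he hb
  choose BE hBE₁ hBE₂ using hbridge
  refine ⟨_ ⊕ _, inferInstance, Sum.elim BC BE, isBlockCover_sumElim hcactus hBC₂ hBE₂,
    hcactus.1, by rw [← hcard, Nat.card_eq_fintype_card], ?_⟩
  have hfilter : ({b | (Sum.elim BC BE b).size ≠ 2} : Finset _) = univ.map .inl := by
    ext (H | e)
    · have := hBC₁ H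
      simp
      omega
    · simp [hBE₁]
  rw [hfilter, card_map, card_univ, ← Nat.card_eq_fintype_card, ← hcycles]
  rfl

/-! ### An upper bound for `G4` -/

section Model

variable {V : Type*} {G : SimpleGraph V}

namespace Block

/-- The block formed by the single edge at a leaf `u` with neighbour `w`. -/
noncomputable def pendant {u w : V} (hu : ∀ v, G.Adj u v ↔ v = w) : Block G where
  size := 2
  two_le_size := le_rfl
  vert := ![w, u]
  gate v := if v = u then 1 else 0
  gate_vert := Fin.forall_fin_two.2 ⟨if_neg ((hu w).2 rfl).ne', if_pos rfl⟩
  adj_vert := Fin.forall_fin_two.2 ⟨((hu w).2 rfl).symm, (hu w).2 rfl⟩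
  of_adj a c hac hne := by
    refine ⟨?_, (by decide : ∀ i j : ZMod 2, i ≠ j → j = i + 1 ∨ j = i - 1) _ _ hne⟩
    by_cases ha : a = u
    · simp [ha]
    · have hc : c = u := by by_contra hc; simp [ha, hc] at hne
      simpa [ha] using ((hu a).1 (hc ▸ hac.symm)).symm

/-- The triangular block `xyz` where `z` has no further neighbour, and where the set `S` consists of
the vertices attached to the triangle at `y`. -/
noncomputable def triangle {x y z : V} {S : Finset V} (hz : ∀ v, G.Adj z v ↔ v = x ∨ v = y)
    (hxy : G.Adj x y) (hy : y ∈ S) (hx : x ∉ S) (hzS : z ∉ S)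
    (hS : ∀ u ∈ S, ∀ v ∉ S, G.Adj u v → u = y ∧ (v = x ∨ v = z)) : Block G where
  size := 3
  two_le_size := by norm_num
  vert := ![x, y, z]
  gate v := if v ∈ S then 1 else if v = z then 2 else 0
  gate_vert i := by
    change Fin 3 at i
    fin_cases i
    exacts [(if_neg hx).trans (if_neg ((hz x).2 (.inl rfl)).ne'), if_pos hy,
      (if_neg hzS).trans (if_pos rfl)]
  adj_vert i := by
    change Fin 3 at i
    fin_cases i
    exacts [hxy, ((hz y).2 (.inr rfl)).symm, (hz x).2 (.inl rfl)]
  of_adj u v huv hne := by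
    refine ⟨?_, (by decide : ∀ i j : ZMod 3, i ≠ j → j = i + 1 ∨ j = i - 1) _ _ hne⟩
    by_cases huS : u ∈ S
    · have hvS : v ∉ S := fun hvS => hne (by simp only [huS, hvS, if_true])
      rw [if_pos huS]
      exact (hS u huS v hvS huv).1.symm
    rw [if_neg huS] at hne ⊢
    by_cases hu : u = z
    · rw [if_pos hu, hu]
      rfl
    rw [if_neg hu] at hne ⊢
    by_cases hvS : v ∈ S
    · exact ((hS v hvS u huS huv.symm).2.resolve_right hu).symm
    · have hv : v = z := by by_contra hv; simp [hvS, hv] at hne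
      exact (((hz u).1 (hv ▸ huv.symm)).resolve_right fun h => huS (h ▸ hy)).symm

lemma isMinimal_pendant [Fintype V] {u w : V} (hu : ∀ v, G.Adj u v ↔ v = w) :
    (pendant hu).IsMinimal := by
  refine ⟨⟨0, fun i (hi : i ≠ (0 : ZMod 2)) => card_eq_one.2 ⟨u, Finset.ext fun v => ?_⟩⟩,
    Nat.le_succ 2⟩
  obtain rfl := (by decide : ∀ i : ZMod 2, i ≠ 0 → i = 1) i hi
  refine (mem_fiber _).trans (.trans ?_ mem_singleton.symm)
  exact ⟨fun h => by_contra fun hv =>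
    (by decide : (0 : ZMod 2) ≠ 1) ((if_neg hv).symm.trans h), fun h => if_pos h⟩

lemma pendant_gate_ne_iff {u w : V} (hu : ∀ v, G.Adj u v ↔ v = w) {a c : V} :
    (pendant hu).gate a ≠ (pendant hu).gate c ↔ ¬ (a = u ↔ c = u) := by
  change (if a = u then (1 : ZMod 2) else 0) ≠ (if c = u then 1 else 0) ↔ _
  split_ifs <;> simp [*]

section Triangle

variable {x y z : V} {S : Finset V} (hz : ∀ v, G.Adj z v ↔ v = x ∨ v = y)
  (hxy : G.Adj x y) (hy : y ∈ S) (hx : x ∉ S) (hzS : z ∉ S)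
  (hS : ∀ u ∈ S, ∀ v ∉ S, G.Adj u v → u = y ∧ (v = x ∨ v = z))

lemma triangle_gate_eq_one_iff {v : V} : (triangle hz hxy hy hx hzS hS).gate v = (1 : ZMod 3) ↔
    v ∈ S := by
  change (if v ∈ S then (1 : ZMod 3) else if v = z then 2 else 0) = 1 ↔ v ∈ S
  split_ifs with h h'
  · exact iff_of_true rfl h
  · exact iff_of_false (by decide) h
  · exact iff_of_false (by decide) h

lemma triangle_gate_eq_two_iff {v : V} : (triangle hz hxy hy hx hzS hS).gate v = (2 : ZMod 3) ↔
    v = z := by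
  change (if v ∈ S then (1 : ZMod 3) else if v = z then 2 else 0) = 2 ↔ v = z
  split_ifs with h h'
  · exact iff_of_false (by decide) (ne_of_mem_of_not_mem h hzS)
  · exact iff_of_true rfl h'
  · exact iff_of_false (by decide) h'

lemma triangle_gate_ne_iff {u v : V} :
    (triangle hz hxy hy hx hzS hS).gate u ≠ (triangle hz hxy hy hx hzS hS).gate v ↔
      ¬ ((u ∈ S ↔ v ∈ S) ∧ (u = z ↔ v = z)) := by
  simp only [← triangle_gate_eq_one_iff hz hxy hy hx hzS hS,
    ← triangle_gate_eq_two_iff hz hxy hy hx hzS hS]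
  exact (by decide : ∀ i j : ZMod 3, i ≠ j ↔ ¬ ((i = 1 ↔ j = 1) ∧ (i = 2 ↔ j = 2))) _ _

variable [Fintype V]

lemma triangle_fiberCard_one : (triangle hz hxy hy hx hzS hS).fiberCard (1 : ZMod 3) = #S :=
  congrArg card <| Finset.ext fun _ =>
    (mem_fiber _).trans (triangle_gate_eq_one_iff hz hxy hy hx hzS hS)

lemma triangle_fiberCard_two : (triangle hz hxy hy hx hzS hS).fiberCard (2 : ZMod 3) = 1 :=
  card_eq_one.2 ⟨z, Finset.ext fun _ =>
    ((mem_fiber _).trans (triangle_gate_eq_two_iff hz hxy hy hx hzS hS)).trans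
      mem_singleton.symm⟩

lemma isMinimal_triangle (hcard : #S = 1) : (triangle hz hxy hy hx hzS hS).IsMinimal := by
  refine ⟨⟨0, fun i (hi : i ≠ (0 : ZMod 3)) => ?_⟩, le_rfl⟩
  obtain rfl | rfl := (by decide : ∀ i : ZMod 3, i ≠ 0 → i = 1 ∨ i = 2) i hi
  · rw [triangle_fiberCard_one, hcard]
  · exact triangle_fiberCard_two hz hxy hy hx hzS hS

lemma isSplit_triangle (hcard : #S = 2) : (triangle hz hxy hy hx hzS hS).IsSplit :=
  ⟨rfl, (2 : ZMod 3), (1 : ZMod 3), triangle_fiberCard_two hz hxy hy hx hzS hS,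
    (triangle_fiberCard_one hz hxy hy hx hzS hS).trans hcard⟩

end Triangle

end Block

end Model

lemma G4g_adj {n t : ℕ} {u v : Fin n} : (G4g n t).Adj u v ↔ u.val ≠ v.val ∧
    ((u.val = 0 ∧ v.val ≠ 2 * t + 1 ∨ u.val % 2 = 1 ∧ v.val = u.val + 1 ∧ v.val ≤ 2 * t ∨
        u.val = 1 ∧ v.val = 2 * t + 1) ∨
      v.val = 0 ∧ u.val ≠ 2 * t + 1 ∨ v.val % 2 = 1 ∧ u.val = v.val + 1 ∧ u.val ≤ 2 * t ∨
        v.val = 1 ∧ u.val = 2 * t + 1) := by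
  simp only [G4g, SimpleGraph.fromRel_adj, Nat.odd_iff, ne_eq, Fin.ext_iff]

namespace G4g

variable {n t : ℕ}

/-- The vertices of `G4g n t` attached to the vertex `2 * i + 1` of the `i`-th triangle. -/
noncomputable def attached (n t i : ℕ) : Finset (Fin n) :=
  {v | v.val = 2 * i + 1 ∨ i = 0 ∧ v.val = 2 * t + 1}

lemma mem_attached {i : ℕ} {v : Fin n} :
    v ∈ attached n t i ↔ v.val = 2 * i + 1 ∨ i = 0 ∧ v.val = 2 * t + 1 := by
  simp [attached]

/-- The `i`-th triangle of `G4g n t`. -/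
noncomputable def triangle (hn : 2 * t + 1 ≤ n) (i : Fin t) : Block (G4g n t) :=
  Block.triangle (x := ⟨0, by omega⟩) (y := ⟨2 * i + 1, by omega⟩) (z := ⟨2 * i + 2, by omega⟩)
    (S := attached n t i) (fun v => by rw [G4g_adj, Fin.ext_iff, Fin.ext_iff]; dsimp only; omega)
    (by rw [G4g_adj]; dsimp only; omega) (by simp [mem_attached]) (by simp [mem_attached])
    (by rw [mem_attached]; dsimp only; omega)
    (fun u hu v hv huv => by
      rw [mem_attached] at hu hv
      rw [G4g_adj] at huv
      simp only [Fin.ext_iff]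
      omega)

/-- The `j`-th pendent edge of `G4g n t`, the one at the vertex `2 * t + 1 + j`. -/
noncomputable def pendant (ht : 1 ≤ t) (j : Fin (n - 1 - 2 * t)) : Block (G4g n t) :=
  Block.pendant (u := ⟨2 * t + 1 + j, by omega⟩)
    (w := ⟨if j.val = 0 then 1 else 0, by split_ifs <;> omega⟩) fun v => by
      rw [G4g_adj, Fin.ext_iff]
      dsimp only
      split_ifs <;> omega

/-- The blocks of `G4g n t`. -/
noncomputable def blocks (hn : 2 * t + 1 ≤ n) (ht : 1 ≤ t) :
    Fin t ⊕ Fin (n - 1 - 2 * t) → Block (G4g n t) :=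
  Sum.elim (triangle hn) (pendant ht)

-- In the numbering of `G4g`, the block of an edge is determined by the larger endpoint.
lemma triangle_gate_ne_iff (hn : 2 * t + 1 ≤ n) (i : Fin t) {u v : Fin n} (huv : (G4g n t).Adj u v)
    (hlt : u < v) : (triangle hn i).gate u ≠ (triangle hn i).gate v ↔
      v.val = 2 * i + 1 ∨ v.val = 2 * i + 2 := by
  rw [triangle, Block.triangle_gate_ne_iff, mem_attached, mem_attached, Fin.ext_iff, Fin.ext_iff]
  rw [G4g_adj] at huv
  rw [Fin.lt_def] at hlt
  dsimp only
  omega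

lemma pendant_gate_ne_iff (ht : 1 ≤ t) (j : Fin (n - 1 - 2 * t)) {u v : Fin n}
    (huv : (G4g n t).Adj u v) (hlt : u < v) :
    (pendant ht j).gate u ≠ (pendant ht j).gate v ↔ v.val = 2 * t + 1 + j := by
  rw [pendant, Block.pendant_gate_ne_iff, Fin.ext_iff, Fin.ext_iff]
  rw [G4g_adj] at huv
  rw [Fin.lt_def] at hlt
  dsimp only
  omega

lemma isBlockCover (hn : 2 * t + 1 ≤ n) (ht : 1 ≤ t) : IsBlockCover (blocks hn ht) := by
  intro u v huv
  wlog hlt : u < v generalizing u v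
  · simpa only [ne_comm] using this v u huv.symm (huv.ne.lt_or_gt.resolve_left hlt)
  by_cases hv : 2 * t + 1 ≤ v.val
  · refine ⟨.inr ⟨v.val - (2 * t + 1), by omega⟩,
      (pendant_gate_ne_iff ht _ huv hlt).2 (by dsimp only; omega), ?_⟩
    rintro (i | j) hb
    · have := (triangle_gate_ne_iff hn i huv hlt).1 hb
      omega
    · have := (pendant_gate_ne_iff ht j huv hlt).1 hb
      exact congrArg Sum.inr (Fin.ext (by dsimp only; omega))
  · refine ⟨.inl ⟨(v.val - 1) / 2, by omega⟩,
      (triangle_gate_ne_iff hn _ huv hlt).2 (by dsimp only; omega), ?_⟩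
    rintro (i | j) hb
    · have := (triangle_gate_ne_iff hn i huv hlt).1 hb
      exact congrArg Sum.inl (Fin.ext (by dsimp only; omega))
    · have := (pendant_gate_ne_iff ht j huv hlt).1 hb
      omega

lemma connected (hn : 2 * t + 1 ≤ n) (ht : 1 ≤ t) : (G4g n t).Connected := by
  have hreach : ∀ v : Fin n, v.val ≠ 2 * t + 1 → (G4g n t).Reachable ⟨0, by omega⟩ v := by
    intro v hv
    rcases eq_or_ne v ⟨0, by omega⟩ with rfl | h0
    · rfl
    · exact (G4g_adj.2 ⟨by simpa [Fin.ext_iff] using h0.symm, .inl (.inl ⟨rfl, hv⟩)⟩).reachable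
  refine (SimpleGraph.connected_iff_exists_forall_reachable _).2 ⟨⟨0, by omega⟩, fun v => ?_⟩
  by_cases hv : v.val = 2 * t + 1
  · refine (hreach ⟨1, by omega⟩ (by dsimp only; omega)).trans (SimpleGraph.Adj.reachable ?_)
    rw [G4g_adj]
    dsimp only
    omega
  · exact hreach v hv

lemma isBlockDecomposition (hn : 2 * t + 1 ≤ n) (ht : 1 ≤ t) :
    IsBlockDecomposition (blocks hn ht) n t where
  cover := isBlockCover hn ht
  connected := connected hn ht
  card_verts := Fintype.card_fin n
  card_cycles := by
    have htriangle : ∀ i, (blocks hn ht (.inl i)).size ≠ 2 := fun _ => (Nat.lt_succ_self 2).ne'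
    have hpendant : ∀ j, (blocks hn ht (.inr j)).size = 2 := fun _ => rfl
    have : ({b | (blocks hn ht b).size ≠ 2} : Finset _) = univ.map .inl := by
      ext (i | j) <;> simp [htriangle, hpendant]
    rw [this, card_map, card_univ, Fintype.card_fin]

lemma card_attached_of_ne_zero {i : ℕ} (hi : i ≠ 0) (hn : 2 * i + 1 < n) :
    #(attached n t i) = 1 :=
  card_eq_one.2 ⟨⟨2 * i + 1, hn⟩, by ext v; simp [mem_attached, hi, Fin.ext_iff]⟩

lemma card_attached_zero_of_lt (ht : 1 ≤ t) (hn : 2 * t + 1 < n) : #(attached n t 0) = 2 :=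
  card_eq_two.2 ⟨⟨1, by omega⟩, ⟨2 * t + 1, hn⟩, by simp; omega, by
    ext v; simp [mem_attached, Fin.ext_iff]⟩

lemma card_attached_zero_of_le (ht : 1 ≤ t) (hn : 2 * t + 1 = n) : #(attached n t 0) = 1 :=
  card_eq_one.2 ⟨⟨1, by omega⟩, by ext v; simp [mem_attached, Fin.ext_iff]; omega⟩

lemma isMinimal_triangle (hn : 2 * t + 1 ≤ n) {i : Fin t} (hi : #(attached n t i) = 1) :
    (triangle hn i).IsMinimal := by
  unfold triangle
  exact Block.isMinimal_triangle _ _ _ _ _ _ hi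

lemma isMinimal_pendant (ht : 1 ≤ t) (j : Fin (n - 1 - 2 * t)) : (pendant ht j).IsMinimal := by
  unfold pendant
  exact Block.isMinimal_pendant _

theorem degRes_le (hn : 25 ≤ n) (hnt : 2 * t + 1 ≤ n) (ht : 1 ≤ t) :
    degRes (G4g n t) ≤ minDegRes n t + splitSurplus n t := by
  have hB := isBlockDecomposition hnt ht
  have hmin : ∀ b, b ≠ .inl ⟨0, ht⟩ → (blocks hnt ht b).IsMinimal := by
    rintro (i | j) hb
    · exact isMinimal_triangle hnt
        (card_attached_of_ne_zero (fun h => hb (congrArg Sum.inl (Fin.ext h))) (by omega))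
    · exact isMinimal_pendant ht j
  rcases hnt.eq_or_lt with h | h
  · have hall : ∀ b, (blocks hnt ht b).IsMinimal := fun b => by
      by_cases hb : b = .inl ⟨0, ht⟩
      · exact hb ▸ isMinimal_triangle hnt (card_attached_zero_of_le ht h)
      · exact hmin b hb
    rw [hB.degRes_eq, sum_eq_zero fun b _ => hB.surplus_of_isMinimal (hall b)]
    linarith [IsBlockDecomposition.splitSurplus_pos (t := t) hn]
  · have hsplit : (blocks hnt ht (.inl ⟨0, ht⟩)).IsSplit := by
      rw [blocks, Sum.elim_inl, triangle]
      exact Block.isSplit_triangle _ _ _ _ _ _ (card_attached_zero_of_lt ht h)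
    exact (hB.degRes_of_isSplit hsplit hmin).le

end G4g

/-! ### Graphs with a hub -/

section IsomorphismInvariance

variable {V W : Type*} {G : SimpleGraph V} {H : SimpleGraph W}

lemma degree_iso_apply [Fintype V] [Fintype W] (e : G ≃g H) (v : V) :
    H.degree (e v) = G.degree v := by
  rw [← SimpleGraph.card_neighborSet_eq_degree, ← SimpleGraph.card_neighborSet_eq_degree]
  exact (Fintype.card_congr (e.mapNeighborSet v)).symm

lemma lapMatrix_iso_apply [Fintype V] [Fintype W] (e : G ≃g H) (u v : V) :
    H.lapMatrix ℝ (e u) (e v) = G.lapMatrix ℝ u v := by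
  simp only [SimpleGraph.lapMatrix, SimpleGraph.degMatrix, Matrix.sub_apply,
    Matrix.diagonal_apply, SimpleGraph.adjMatrix_apply, degree_iso_apply, e.map_adj_iff,
    EmbeddingLike.apply_eq_iff_eq]

lemma det_lapMatrix_submatrix_iso [Fintype V] [Fintype W] (e : G ≃g H) {p : V → Prop}
    {q : W → Prop} [DecidablePred p] [DecidablePred q] (hpq : ∀ v, p v ↔ q (e v)) :
    ((H.lapMatrix ℝ).submatrix (Subtype.val : {w // q w} → W) Subtype.val).det =
      ((G.lapMatrix ℝ).submatrix (Subtype.val : {v // p v} → V) Subtype.val).det := by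
  rw [← Matrix.det_submatrix_equiv_self (e.toEquiv.subtypeEquiv hpq)]
  congr 1
  ext u v
  exact lapMatrix_iso_apply e u v

lemma effRes_iso_apply [Finite V] [Finite W] (e : G ≃g H) (u v : V) :
    effRes H (e u) (e v) = effRes G u v := by
  have := Fintype.ofFinite V
  have := Fintype.ofFinite W
  rcases eq_or_ne u v with rfl | huv
  · rw [effRes_self, effRes_self]
  · rw [effRes_of_ne huv, effRes_of_ne (e.injective.ne huv)]
    congr 1 <;> exact det_lapMatrix_submatrix_iso e fun w => by simp

lemma degRes_congr [Finite V] [Finite W] (e : G ≃g H) : degRes G = degRes H := by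
  have := Fintype.ofFinite V
  have := Fintype.ofFinite W
  rw [degRes_eq_sum_sum, degRes_eq_sum_sum]
  congr 1
  refine Fintype.sum_equiv e.toEquiv _ _ fun u => Fintype.sum_equiv e.toEquiv _ _ fun v => ?_
  rw [← degree_iso_apply e, ← degree_iso_apply e, ← effRes_iso_apply e]
  rfl

end IsomorphismInvariance

section Involution

open Function Equiv

variable {V W : Type*}

lemma exists_perm_semiconj_apply_eq {σ : Perm V} (hσ : Involutive σ) {x y : V}
    (hxy : σ x = x ↔ σ y = y) :
    ∃ π : Perm V, π x = y ∧ Semiconj π σ σ ∧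
      ∀ z, z ≠ x → z ≠ σ x → z ≠ y → z ≠ σ y → π z = z := by
  have hσ' : ∀ z, σ (σ z) = z := hσ
  have hinj : ∀ a b, σ a = σ b ↔ a = b := fun _ _ => σ.injective.eq_iff
  by_cases h : σ x = x ∨ x = y ∨ σ x = y
  · refine ⟨swap x y, swap_apply_left x y, fun z => ?_, fun z h₁ _ h₂ _ =>
      swap_apply_of_ne_of_ne h₁ h₂⟩
    simp only [swap_apply_def]
    grind
  · refine ⟨swap x y * swap (σ x) (σ y), ?_, fun z => ?_, fun z h₁ h₂ h₃ h₄ => ?_⟩ <;>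
    · simp only [Perm.mul_apply, swap_apply_def]
      grind

lemma exists_equiv_semiconj_apply_eq {σ : Perm V} {τ : Perm W} (hτ : Involutive τ) {e : V ≃ W}
    (he : Semiconj e σ τ) {x : V} {y : W} (hxy : σ x = x ↔ τ y = y) :
    ∃ e' : V ≃ W, Semiconj e' σ τ ∧ e' x = y ∧
      ∀ z, z ≠ x → σ z ≠ x → e z ≠ y → e (σ z) ≠ y → e' z = e z := by
  have hex : τ (e x) = e x ↔ τ y = y := by rw [← he x, e.injective.eq_iff, hxy]
  obtain ⟨π, hπx, hπ, hfix⟩ := exists_perm_semiconj_apply_eq hτ hex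
  refine ⟨e.trans π, hπ.comp_left he, hπx, fun z h₁ h₂ h₃ h₄ => hfix _ (e.injective.ne h₁) ?_ h₃ ?_⟩
  · rintro h
    refine h₂ (e.injective ?_)
    rw [he z, h, hτ]
  · rintro h
    rw [he z, h, hτ] at h₄
    exact h₄ rfl

variable [Fintype V] [Fintype W] [DecidableEq V] [DecidableEq W]

lemma isConj_of_involutive {σ τ : Perm V} (hσ : Involutive σ) (hτ : Involutive τ)
    (hcard : #σ.support = #τ.support) : IsConj σ τ := by
  have hcycle : ∀ {ρ : Perm V}, Involutive ρ →
      ρ.cycleType = Multiset.replicate ρ.cycleType.card 2 := fun hρ =>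
    Perm.cycleType_of_pow_prime_eq_one (Perm.ext fun x => by simp [pow_two, hρ x])
  have hsum : ∀ {ρ : Perm V}, Involutive ρ → ρ.cycleType.card * 2 = #ρ.support := fun {ρ} hρ => by
    rw [← ρ.sum_cycleType, hcycle hρ, Multiset.sum_replicate, Multiset.card_replicate, smul_eq_mul]
  rw [Perm.isConj_iff_cycleType_eq, hcycle hσ, hcycle hτ,
    Nat.eq_of_mul_eq_mul_right two_pos ((hsum hσ).trans (hcard.trans (hsum hτ).symm))]

lemma exists_equiv_semiconj {σ : Perm V} {τ : Perm W} (hσ : Involutive σ) (hτ : Involutive τ)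
    (hVW : Fintype.card V = Fintype.card W) (hcard : #σ.support = #τ.support) :
    ∃ e : V ≃ W, Semiconj e σ τ := by
  let f : V ≃ W := Fintype.equivOfCardEq hVW
  have hf : Involutive (f.permCongr σ) := fun x => by simp [hσ (f.symm x)]
  have hsupp : #σ.support = #(f.permCongr σ).support :=
    card_equiv f fun x => by simp
  obtain ⟨g, hg⟩ := isConj_iff.1 (isConj_of_involutive hf hτ (hsupp.symm.trans hcard))
  exact ⟨f.trans g, fun x => by simp [← hg]⟩

lemma exists_equiv_semiconj_of_fixed {σ : Perm V} {τ : Perm W} (hσ : Involutive σ)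
    (hτ : Involutive τ) (hVW : Fintype.card V = Fintype.card W) (hcard : #σ.support = #τ.support)
    {c : V} {c' : W} (hc : σ c = c) (hc' : τ c' = c') : ∃ e : V ≃ W, Semiconj e σ τ ∧ e c = c' := by
  obtain ⟨e, he⟩ := exists_equiv_semiconj hσ hτ hVW hcard
  obtain ⟨e', he', hec, -⟩ := exists_equiv_semiconj_apply_eq hτ he (iff_of_true hc hc')
  exact ⟨e', he', hec⟩

lemma exists_equiv_semiconj_of_fixed_of_moved {σ : Perm V} {τ : Perm W} (hσ : Involutive σ)
    (hτ : Involutive τ) (hVW : Fintype.card V = Fintype.card W) (hcard : #σ.support = #τ.support)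
    {c d a : V} {c' d' a' : W} (hc : σ c = c) (hc' : τ c' = c') (hd : σ d = d) (hd' : τ d' = d')
    (hcd : c ≠ d) (hcd' : c' ≠ d') (ha : σ a ≠ a) (ha' : τ a' ≠ a') :
    ∃ e : V ≃ W, Semiconj e σ τ ∧ e c = c' ∧ e d = d' ∧ e a = a' := by
  obtain ⟨e₁, he₁, hc₁⟩ := exists_equiv_semiconj_of_fixed hσ hτ hVW hcard hc hc'
  obtain ⟨e₂, he₂, hd₂, h₂⟩ := exists_equiv_semiconj_apply_eq hτ he₁ (iff_of_true hd hd')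
  obtain ⟨e₃, he₃, ha₃, h₃⟩ := exists_equiv_semiconj_apply_eq hτ he₂ (iff_of_false ha ha')
  have hc₂ : e₂ c = c' := by
    rw [h₂ c hcd (by rwa [hc]) (by rwa [hc₁]) (by rwa [hc, hc₁]), hc₁]
  have hfixed : ∀ {z z'}, σ z = z → τ z' = z' → e₂ z = z' → e₃ z = z' := fun hz hz' hez => by
    have hza : ∀ {z}, σ z = z → z ≠ a := fun h h' => ha (h' ▸ h)
    have hza' : ∀ {z}, τ z = z → z ≠ a' := fun h h' => ha' (h' ▸ h)
    rw [h₃ _ (hza hz) (by rw [hz]; exact hza hz) (by rw [hez]; exact hza' hz')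
      (by rw [hz, hez]; exact hza' hz'), hez]
  exact ⟨e₃, he₃, hfixed hc hc' hc₂, hfixed hd hd' hd₂, ha₃⟩

end Involution

section HubGraph

open Function Equiv

variable {V W : Type*}

/-- The graph with hub `c` in which every vertex is joined to its image under `σ` and to `c`,
except that the vertex `p` is joined to `q` instead of `c`. Taking `p = q = c` displaces no edge. -/
def hubGraph (σ : Perm V) (c p q : V) : SimpleGraph V :=
  SimpleGraph.fromRel fun u v => u = c ∧ v ≠ p ∨ v = σ u ∨ u = p ∧ v = q

/-- The involution `σ` fixes the hub `c`, and the edge `p q` is either absent or a genuine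
replacement of the edge `c p`. -/
structure IsHubPairing (σ : Perm V) (c p q : V) : Prop where
  involutive : Involutive σ
  map_hub : σ c = c
  displaced : p = c ∧ q = c ∨ p ≠ c ∧ q ≠ c ∧ p ≠ q ∧ σ p ≠ q

lemma hubGraph_adj {σ : Perm V} (hσ : Involutive σ) {c p q u v : V} :
    (hubGraph σ c p q).Adj u v ↔ u ≠ v ∧ (u = c ∧ v ≠ p ∨ v = c ∧ u ≠ p ∨ v = σ u ∨
      u = p ∧ v = q ∨ u = q ∧ v = p) := by
  have : u = σ v ↔ v = σ u := ⟨fun h => by rw [h, hσ], fun h => by rw [h, hσ]⟩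
  rw [hubGraph, SimpleGraph.fromRel_adj, this]
  tauto

/-- An equivalence intertwining the pairings is an isomorphism of hub graphs. -/
def hubGraphIso {σ : Perm V} {τ : Perm W} (e : V ≃ W) (he : Semiconj e σ τ) (c p q : V) :
    hubGraph σ c p q ≃g hubGraph τ (e c) (e p) (e q) :=
  ⟨e, by simp [hubGraph, SimpleGraph.fromRel_adj, ← he.eq]⟩

lemma exists_involutive_adj_iff {H : SimpleGraph V}
    (hH : ∀ u v w, H.Adj u v → H.Adj u w → v = w) :
    ∃ σ : Perm V, Involutive σ ∧ ∀ u v, H.Adj u v ↔ u ≠ v ∧ v = σ u := by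
  let f : V → V := fun u => if h : ∃ v, H.Adj u v then h.choose else u
  have hf : ∀ {u v}, H.Adj u v → f u = v := fun {u v} h => by
    have hex : ∃ w, H.Adj u w := ⟨v, h⟩
    simp only [f, dif_pos hex]
    exact hH u _ _ hex.choose_spec h
  have hf' : ∀ {u}, (¬ ∃ v, H.Adj u v) → f u = u := fun h => dif_neg h
  have hinv : Involutive f := fun u => by
    by_cases h : ∃ v, H.Adj u v
    · obtain ⟨v, h⟩ := h
      rw [hf h, hf h.symm]
    · rw [hf' h, hf' h]
  refine ⟨hinv.toPerm f, hinv, fun u v => ⟨fun h => ⟨h.ne, (hf h).symm⟩, ?_⟩⟩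
  rintro ⟨hne, rfl⟩
  by_cases h : ∃ v, H.Adj u v
  · obtain ⟨v, h⟩ := h
    change H.Adj u (f u)
    rwa [hf h]
  · exact absurd (hf' h).symm hne

variable [Fintype V] {G : SimpleGraph V}

lemma eq_of_degree_le_card_add_one {u v w : V} {s : Finset V} (hs : ∀ x ∈ s, G.Adj u x)
    (hdeg : G.degree u ≤ #s + 1) (hv : G.Adj u v) (hw : G.Adj u w) (hvs : v ∉ s) (hws : w ∉ s) :
    v = w := by
  by_contra hvw
  have hsub : insert v (insert w s) ⊆ G.neighborFinset u := fun x hx => by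
    simp only [mem_insert] at hx
    rw [SimpleGraph.mem_neighborFinset]
    rcases hx with rfl | rfl | hx
    exacts [hv, hw, hs x hx]
  have := card_le_card hsub
  rw [card_insert_of_notMem (by simp [hvw, hvs]), card_insert_of_notMem hws,
    G.card_neighborFinset_eq_degree] at this
  omega

lemma eq_of_adj_off_hub {c p q : V} (hc : ∀ v, G.Adj c v ↔ v ≠ c ∧ v ≠ p)
    (hpq : p = c ∧ q = c ∨ p ≠ c ∧ q ≠ c ∧ G.Adj p q)
    (hdeg : ∀ v, v ≠ c → v ≠ q → G.degree v ≤ 2) (hq : q ≠ c → G.degree q ≤ 3) {u v w : V}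
    (hv : (G \ (SimpleGraph.starGraph c ⊔ SimpleGraph.edge p q)).Adj u v)
    (hw : (G \ (SimpleGraph.starGraph c ⊔ SimpleGraph.edge p q)).Adj u w) : v = w := by
  simp only [SimpleGraph.sdiff_adj, SimpleGraph.sup_adj, SimpleGraph.starGraph_adj,
    SimpleGraph.edge_adj] at hv hw
  have hpq_ne : p ≠ c → p ≠ q := fun h => (hpq.resolve_left fun h' => h h'.1).2.2.ne
  have huc : u ≠ c := by grind
  have hadj : u ≠ p → G.Adj u c := fun hup => ((hc u).2 ⟨huc, hup⟩).symm
  rcases eq_or_ne u p with rfl | hup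
  · have huq : G.Adj u q := (hpq.resolve_left fun h => huc h.1).2.2
    exact eq_of_degree_le_card_add_one (s := {q}) (by simpa) (hdeg u huc huq.ne) hv.1 hw.1
      (by grind) (by grind)
  rcases eq_or_ne u q with rfl | huq
  · obtain ⟨hpc, -, hpu⟩ := hpq.resolve_left fun h => huc h.2
    refine eq_of_degree_le_card_add_one (s := {c, p}) (by simp [hadj hup, hpu.symm]) ?_ hv.1 hw.1
      (by grind) (by grind)
    rw [card_pair hpc.symm]
    exact hq huc
  · exact eq_of_degree_le_card_add_one (s := {c}) (by simpa using hadj hup) (hdeg u huc huq)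
      hv.1 hw.1 (by grind) (by grind)

theorem exists_isHubPairing {c p q : V} (hc : ∀ v, G.Adj c v ↔ v ≠ c ∧ v ≠ p)
    (hpq : p = c ∧ q = c ∨ p ≠ c ∧ q ≠ c ∧ G.Adj p q)
    (hdeg : ∀ v, v ≠ c → v ≠ q → G.degree v ≤ 2) (hq : q ≠ c → G.degree q ≤ 3) :
    ∃ σ : Perm V, IsHubPairing σ c p q ∧ G = hubGraph σ c p q := by
  obtain ⟨σ, hσ, hadj⟩ := exists_involutive_adj_iff fun _ _ _ => eq_of_adj_off_hub hc hpq hdeg hq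
  simp only [SimpleGraph.sdiff_adj, SimpleGraph.sup_adj, SimpleGraph.starGraph_adj,
    SimpleGraph.edge_adj] at hadj
  refine ⟨σ, ⟨hσ, ?_, ?_⟩, ?_⟩
  · by_contra h
    have := (hadj c (σ c)).2 ⟨Ne.symm h, rfl⟩
    grind
  · refine hpq.imp_right fun ⟨hpc, hqc, h⟩ => ⟨hpc, hqc, h.ne, fun hσp => ?_⟩
    have := (hadj p q).2 ⟨h.ne, hσp.symm⟩
    grind
  · ext u v
    rw [hubGraph_adj hσ]
    have := hadj u v
    have := hc u
    have := hc v
    have := G.adj_comm u v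
    have := G.adj_comm p q
    have := fun h : G.Adj u v => h.ne
    grind

end HubGraph

section HubCount

open Equiv

namespace IsHubPairing

variable {V : Type*} {σ : Perm V} {c p q : V}

lemma ite_hubGraph_adj (h : IsHubPairing σ c p q) (u v : V) :
    (if (hubGraph σ c p q).Adj u v then 1 else 0 : ℤ) =
      (if u = c then if v = c then 0 else 1 else 0) +
      (if v = c then if u = c then 0 else 1 else 0) +
      (if v = σ u then if σ u = u then 0 else 1 else 0) +
      ((if u = p then if v = q then 1 else 0 else 0) -
        (if u = p then if v = c then 1 else 0 else 0)) +
      ((if u = q then if v = p then 1 else 0 else 0) -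
        (if u = c then if v = p then 1 else 0 else 0)) := by
  have hu := h.involutive u
  have hp := h.involutive p
  have := h.involutive q
  have hc := h.map_hub
  simp only [hubGraph_adj h.involutive]
  rcases h.displaced with ⟨rfl, rfl⟩ | ⟨h₁, h₂, h₃, h₄⟩ <;> grind

theorem sum_degree_hubGraph [Fintype V] (h : IsHubPairing σ c p q) :
    ∑ v, (hubGraph σ c p q).degree v + 2 = 2 * Fintype.card V + #σ.support := by
  have hdeg : ∀ u, ((hubGraph σ c p q).degree u : ℤ) =
      ∑ v, if (hubGraph σ c p q).Adj u v then 1 else 0 := fun u => by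
    rw [← SimpleGraph.card_neighborFinset_eq_degree, SimpleGraph.neighborFinset_eq_filter]
    simp
  have hne : ∑ v : V, (if v = c then (0 : ℤ) else 1) = Fintype.card V - 1 := by
    rw [sum_ite, sum_const_zero, zero_add, sum_const, filter_ne', card_erase_of_mem (mem_univ c),
      nsmul_one, card_univ, Nat.cast_pred (Fintype.card_pos_iff.2 ⟨c⟩)]
  have hout : ∑ u : V, ∑ v : V, (if u = c then if v = c then (0 : ℤ) else 1 else 0) =
      Fintype.card V - 1 := by
    rw [sum_comm, ← hne]
    simp
  have hin : ∑ u : V, ∑ v : V, (if v = c then if u = c then (0 : ℤ) else 1 else 0) =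
      Fintype.card V - 1 := by
    rw [← hne]
    simp
  have hσ : ∑ u : V, ∑ v : V, (if v = σ u then if σ u = u then (0 : ℤ) else 1 else 0) =
      #σ.support := by
    rw [Perm.support, card_filter]
    simp [ite_not]
  have hone : ∀ a b : V,
      ∑ u : V, ∑ v : V, (if u = a then if v = b then (1 : ℤ) else 0 else 0) = 1 :=
    fun a b => by
      rw [sum_comm]
      simp
  have : ∑ v, ((hubGraph σ c p q).degree v : ℤ) + 2 = 2 * Fintype.card V + #σ.support := by
    simp only [hdeg, h.ite_hubGraph_adj, sum_add_distrib, sum_sub_distrib, hout, hin, hσ, hone]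
    ring
  exact_mod_cast this

end IsHubPairing

end HubCount

section HubModels

open Equiv

/-- The partner of the vertex `a` in the models of the extremal cacti: the vertices `2 * i + 1` and
`2 * i + 2` with `i < t` form a triangle with the hub `0`, the others are fixed. -/
def trianglePartner (t a : ℕ) : ℕ :=
  if a = 0 ∨ 2 * t < a then a else if a % 2 = 1 then a + 1 else a - 1

lemma trianglePartner_trianglePartner (t a : ℕ) : trianglePartner t (trianglePartner t a) = a := by
  grind [trianglePartner]

lemma trianglePartner_eq_self_iff {t a : ℕ} : trianglePartner t a = a ↔ a = 0 ∨ 2 * t < a := by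
  unfold trianglePartner
  split_ifs <;> omega

lemma trianglePartner_lt {n t a : ℕ} (h : 2 * t + 1 ≤ n) (ha : a < n) :
    trianglePartner t a < n := by
  unfold trianglePartner
  split_ifs <;> omega

/-- `trianglePartner` as a permutation of the vertices. -/
def trianglePairing {n t : ℕ} (h : 2 * t + 1 ≤ n) : Perm (Fin n) :=
  Function.Involutive.toPerm (fun a => ⟨trianglePartner t a, trianglePartner_lt h a.isLt⟩)
    fun a => Fin.ext (trianglePartner_trianglePartner t a)

variable {n t : ℕ}

lemma trianglePairing_involutive (h : 2 * t + 1 ≤ n) : Function.Involutive (trianglePairing h) :=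
  fun a => Fin.ext (trianglePartner_trianglePartner t a)

lemma trianglePairing_eq_self_iff (h : 2 * t + 1 ≤ n) {a : Fin n} :
    trianglePairing h a = a ↔ a.val = 0 ∨ 2 * t < a.val :=
  Fin.ext_iff.trans trianglePartner_eq_self_iff

lemma card_support_trianglePairing (h : 2 * t + 1 ≤ n) : #(trianglePairing h).support = 2 * t := by
  have hmap : (trianglePairing h).support.map Fin.valEmbedding = Icc 1 (2 * t) := by
    ext a
    simp only [mem_map, Perm.mem_support, mem_Icc, Fin.valEmbedding_apply, ne_eq,
      trianglePairing_eq_self_iff]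
    exact ⟨fun ⟨x, hx, hxa⟩ => by omega, fun ha => ⟨⟨a, by omega⟩, by simp only; omega, rfl⟩⟩
  rw [← card_map Fin.valEmbedding, hmap, Nat.card_Icc, Nat.add_sub_cancel]

lemma G0_eq_hubGraph (h : 2 * t + 1 ≤ n) :
    G0 n t = hubGraph (trianglePairing h) ⟨0, by omega⟩ ⟨0, by omega⟩ ⟨0, by omega⟩ := by
  ext u v
  rw [hubGraph_adj (trianglePairing_involutive h)]
  simp only [G0, SimpleGraph.fromRel_adj, ne_eq, Fin.ext_iff, Nat.odd_iff]
  simp only [trianglePairing, Function.Involutive.coe_toPerm, trianglePartner]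
  split_ifs <;> omega

lemma G4g_eq_hubGraph (h : 2 * t + 2 ≤ n) (ht : 1 ≤ t) :
    G4g n t = hubGraph (trianglePairing (t := t) (by omega)) ⟨0, by omega⟩ ⟨2 * t + 1, by omega⟩
      ⟨1, by omega⟩ := by
  ext u v
  rw [hubGraph_adj (trianglePairing_involutive _)]
  simp only [G4g, SimpleGraph.fromRel_adj, ne_eq, Fin.ext_iff, Nat.odd_iff]
  simp only [trianglePairing, Function.Involutive.coe_toPerm, trianglePartner]
  split_ifs <;> omega

lemma G5g_eq_hubGraph (h : 2 * t + 2 ≤ n) (ht : 1 ≤ t) :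
    G5g n t = hubGraph (trianglePairing (t := t) (by omega)) ⟨0, by omega⟩ ⟨2 * t, by omega⟩
      ⟨2 * t + 1, by omega⟩ := by
  ext u v
  rw [hubGraph_adj (trianglePairing_involutive _)]
  simp only [G5g, SimpleGraph.fromRel_adj, ne_eq, Fin.ext_iff, Nat.odd_iff]
  simp only [trianglePairing, Function.Involutive.coe_toPerm, trianglePartner]
  split_ifs <;> omega

end HubModels

section Recognition

open Equiv

variable {V : Type*} [Fintype V] {G : SimpleGraph V} {n t : ℕ}

lemma card_support_add_card_le {σ : Perm V} {s : Finset V} (hs : ∀ v ∈ s, σ v = v) :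
    #σ.support + #s ≤ Fintype.card V := by
  have hdisj : Disjoint σ.support s :=
    Finset.disjoint_right.2 fun v hv => Perm.notMem_support.2 (hs v hv)
  rw [← card_union_of_disjoint hdisj]
  exact card_le_univ _

lemma IsHubPairing.card_support {σ : Perm V} {c p q : V} (h : IsHubPairing σ c p q)
    (hV : Fintype.card V = n) (hsum : ∑ v, (hubGraph σ c p q).degree v + 2 = 2 * (n + t)) :
    #σ.support = 2 * t := by
  have := h.sum_degree_hubGraph
  omega

theorem nonempty_iso_G0 (hV : Fintype.card V = n) (hsum : ∑ v, G.degree v + 2 = 2 * (n + t))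
    {c : V} (hc : ∀ v, v ≠ c → G.Adj c v) (hdeg : ∀ v, v ≠ c → G.degree v ≤ 2) :
    Nonempty (G ≃g G0 n t) := by
  obtain ⟨σ, hσ, rfl⟩ := exists_isHubPairing (p := c) (q := c)
    (fun v => ⟨fun h => ⟨h.ne', h.ne'⟩, fun h => hc v h.1⟩) (.inl ⟨rfl, rfl⟩)
    (fun v hv _ => hdeg v hv) (fun h => absurd rfl h)
  have hsupp := hσ.card_support hV hsum
  have hn : 2 * t + 1 ≤ n := by
    have := card_support_add_card_le (σ := σ) (s := {c}) (by simp [hσ.map_hub])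
    rwa [hsupp, hV] at this
  obtain ⟨e, he, hec⟩ := exists_equiv_semiconj_of_fixed hσ.involutive
    (trianglePairing_involutive hn) (by simpa using hV)
    (hsupp.trans (card_support_trianglePairing hn).symm) hσ.map_hub
    (c' := ⟨0, by omega⟩) ((trianglePairing_eq_self_iff hn).2 (.inl rfl))
  rw [G0_eq_hubGraph hn, ← hec]
  exact ⟨hubGraphIso e he c c c⟩

lemma one_le_of_card_support {σ : Perm V} (hsupp : #σ.support = 2 * t) {a : V} (ha : σ a ≠ a) :
    1 ≤ t := by
  have : 0 < #σ.support := card_pos.2 ⟨a, Perm.mem_support.2 ha⟩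
  omega

lemma exists_equiv_trianglePairing {σ : Perm V} (hσ : Function.Involutive σ)
    (hV : Fintype.card V = n) (hsupp : #σ.support = 2 * t) {c d a : V} (hc : σ c = c)
    (hd : σ d = d) (hcd : c ≠ d) (ha : σ a ≠ a) {a' : ℕ} (ha' : 1 ≤ a') (ha't : a' ≤ 2 * t) :
    ∃ (hn : 2 * t + 2 ≤ n) (e : V ≃ Fin n),
      Function.Semiconj e σ (trianglePairing (t := t) (by omega)) ∧ e c = ⟨0, by omega⟩ ∧
      e d = ⟨2 * t + 1, by omega⟩ ∧ e a = ⟨a', by omega⟩ := by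
  have hn : 2 * t + 2 ≤ n := by
    have := card_support_add_card_le (σ := σ) (s := {c, d}) (by simp [hc, hd])
    rwa [card_pair hcd, hsupp, hV] at this
  refine ⟨hn, exists_equiv_semiconj_of_fixed_of_moved hσ (trianglePairing_involutive _)
    (by simpa using hV) (hsupp.trans (card_support_trianglePairing _).symm)
    hc ?_ hd ?_ hcd ?_ ha ?_⟩
  · exact (trianglePairing_eq_self_iff _).2 (.inl rfl)
  · exact (trianglePairing_eq_self_iff _).2 (.inr (Nat.lt_succ_self _))
  · simp [Fin.ext_iff]
  · rw [ne_eq, trianglePairing_eq_self_iff]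
    simp only
    omega

theorem nonempty_iso_G4g (hV : Fintype.card V = n) (hsum : ∑ v, G.degree v + 2 = 2 * (n + t))
    {c a d z : V} (hc : ∀ v, G.Adj c v ↔ v ≠ c ∧ v ≠ d) (hd : ∀ v, G.Adj d v ↔ v = a)
    (hdc : d ≠ c) (hac : a ≠ c) (haz : G.Adj a z) (hzc : z ≠ c) (hzd : z ≠ d)
    (hdeg : ∀ v, v ≠ c → v ≠ a → G.degree v ≤ 2) (ha : G.degree a ≤ 3) :
    Nonempty (G ≃g G4g n t) := by
  have hda : G.Adj d a := (hd a).2 rfl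
  obtain ⟨σ, hσ, rfl⟩ := exists_isHubPairing hc (.inr ⟨hdc, hac, hda⟩) hdeg fun _ => ha
  have hσda : σ d ≠ a := (hσ.displaced.resolve_left fun h => hdc h.1).2.2.2
  have hσd : σ d = d := by
    by_contra h
    exact hσda ((hd _).1 ((hubGraph_adj hσ.involutive).2 ⟨Ne.symm h, by tauto⟩))
  have hσa : σ a ≠ a := by
    have hz : z = σ a := by
      have := ((hubGraph_adj hσ.involutive).1 haz).2
      grind [hda.ne]
    exact hz ▸ haz.ne'
  have hsupp := hσ.card_support hV hsum
  have ht := one_le_of_card_support hsupp hσa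
  obtain ⟨hn, e, he, hec, hed, hea⟩ := exists_equiv_trianglePairing hσ.involutive hV
    hsupp hσ.map_hub hσd hdc.symm hσa (a' := 1) le_rfl (by omega)
  rw [G4g_eq_hubGraph hn ht, ← hec, ← hed, ← hea]
  exact ⟨hubGraphIso e he c d a⟩

theorem nonempty_iso_G5g (hV : Fintype.card V = n) (hsum : ∑ v, G.degree v + 2 = 2 * (n + t))
    {c a b d : V} (hc : ∀ v, G.Adj c v ↔ v ≠ c ∧ v ≠ b) (hab : G.Adj a b) (hdb : G.Adj d b)
    (had : a ≠ d) (hbc : b ≠ c) (hdeg : ∀ v, v ≠ c → G.degree v ≤ 2) :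
    Nonempty (G ≃g G5g n t) := by
  have hdc : d ≠ c := by
    rintro rfl
    exact ((hc b).1 hdb).2 rfl
  have hcd : G.Adj d c := ((hc d).2 ⟨hdc, hdb.ne⟩).symm
  obtain ⟨σ, hσ, rfl⟩ := exists_isHubPairing hc (.inr ⟨hbc, hdc, hdb.symm⟩)
    (fun v hv _ => hdeg v hv) fun hdc => (hdeg d hdc).trans (Nat.le_succ 2)
  have hσa : σ a = b := by
    have := ((hubGraph_adj hσ.involutive).1 hab).2
    grind [hab.ne]
  have hσb : σ b = a := hσa ▸ hσ.involutive a
  have hσd : σ d = d := by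
    by_contra h
    have hadj := (hubGraph_adj hσ.involutive (c := c) (p := b) (q := d)).2
      ⟨Ne.symm h, .inr (.inr (.inl rfl))⟩
    have hσdc : σ d ≠ c := fun h => hdc (σ.injective (h.trans hσ.map_hub.symm))
    have hσdb : σ d ≠ b := fun h => had (σ.injective (hσa.trans h.symm))
    exact hσdb (eq_of_degree_le_card_add_one (s := {c}) (by simpa using hcd) (hdeg d hdc) hadj hdb
      (by simpa using hσdc) (by simpa using hbc))
  have hσb_ne : σ b ≠ b := hσb.trans_ne hab.ne
  have hsupp := hσ.card_support hV hsum
  have ht := one_le_of_card_support hsupp hσb_ne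
  obtain ⟨hn, e, he, hec, hed, heb⟩ := exists_equiv_trianglePairing hσ.involutive hV hsupp
    hσ.map_hub hσd hdc.symm hσb_ne (a' := 2 * t) (by omega) le_rfl
  rw [G5g_eq_hubGraph hn ht, ← hec, ← hed, ← heb]
  exact ⟨hubGraphIso e he c b d⟩

end Recognition

/-! ### Classification of the extremal graphs -/

lemma eq_add_one_or_eq_sub_one {k : ℕ} (h2 : 2 ≤ k) (h3 : k ≤ 3) {i j : ZMod k} (hij : j ≠ i) :
    j = i + 1 ∨ j = i - 1 := by
  obtain rfl | rfl : k = 2 ∨ k = 3 := by omega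
  all_goals
    revert i j
    decide

lemma eq_add_one_or_eq_sub_one_iff {k : ℕ} (hk : k = 4) {i j : ZMod k} :
    j = i + 1 ∨ j = i - 1 ↔ j ≠ i ∧ j ≠ i + 1 + 1 := by
  subst hk
  revert i j
  decide

lemma sub_one_sub_one_eq_add_one_add_one {k : ℕ} (hk : k = 4) (i : ZMod k) :
    i - 1 - 1 = i + 1 + 1 := by
  subst hk
  revert i
  decide

namespace Block

variable {V : Type*} {G : SimpleGraph V} (b : Block G) {v w : V}

lemma add_one_ne (i : ZMod b.size) : i + 1 ≠ i := fun h =>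
  (b.adj_vert i).ne (congrArg b.vert h.symm)

lemma adj_vert_iff {i j : ZMod b.size} :
    G.Adj (b.vert i) (b.vert j) ↔ j = i + 1 ∨ j = i - 1 := by
  constructor
  · intro h
    have hne : b.gate (b.vert i) ≠ b.gate (b.vert j) := by
      rw [b.gate_vert, b.gate_vert]
      rintro rfl
      exact h.ne rfl
    simpa only [b.gate_vert] using (b.of_adj _ _ h hne).2
  · rintro (rfl | rfl)
    · exact b.adj_vert i
    · simpa only [sub_add_cancel] using (b.adj_vert (i - 1)).symm

/-- The vertex `v` of the block is internal: no further vertex of the graph is attached to it, so it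
lies on no other block. -/
def IsInternal (v : V) : Prop := b.vert (b.gate v) = v ∧ ∀ w, b.gate w = b.gate v → w = v

variable {b}

lemma IsInternal.eq_of_vert_eq {β : Type*} {B : β → Block G} (hB : IsBlockCover B) {b c : β}
    (hv : (B b).IsInternal v) {i : ZMod (B c).size} (hi : (B c).vert i = v) : c = b := by
  have hadj := (B c).adj_vert i
  refine (hB _ _ hadj).unique ?_ ?_
  · simpa only [(B c).gate_vert] using ((B c).add_one_ne i).symm
  · rw [hi] at hadj ⊢
    exact fun h => hadj.ne' (hv.2 _ h.symm)

variable [Fintype V]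

lemma isInternal_vert_iff {i : ZMod b.size} : b.IsInternal (b.vert i) ↔ b.fiberCard i = 1 := by
  simp only [IsInternal, b.gate_vert, true_and, fiberCard, card_eq_one, eq_singleton_iff_unique_mem,
    b.mem_fiber]
  constructor
  · exact fun h => ⟨_, b.gate_vert i, h⟩
  · rintro ⟨v, -, h⟩ w hw
    rw [h w hw, h _ (b.gate_vert i)]

variable (b) in
lemma card_filter_isInternal : #{v | b.IsInternal v} = #{i | b.fiberCard i = 1} := by
  have himage : ({v | b.IsInternal v} : Finset V) = image b.vert {i | b.fiberCard i = 1} := by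
    ext v
    simp only [mem_filter_univ, mem_image, ← isInternal_vert_iff]
    constructor
    · exact fun h => ⟨_, h.1.symm ▸ h, h.1⟩
    · rintro ⟨i, hi, rfl⟩
      exact hi
  rw [himage, card_image_of_injective _ b.vert_injective]

variable (b) in
lemma degree_vert_lt (i : ZMod b.size) :
    G.degree (b.vert i) < blockDeg b.size + b.fiberCard i := by
  have hsub : {w ∈ G.neighborFinset (b.vert i) | ¬ b.gate w ≠ b.gate (b.vert i)} ⊆
      (b.fiber i).erase (b.vert i) := fun w hw => by
    rw [mem_filter, SimpleGraph.mem_neighborFinset, b.gate_vert, not_not] at hw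
    exact mem_erase.2 ⟨hw.1.ne', b.mem_fiber.2 hw.2⟩
  have hcard := card_le_card hsub
  rw [card_erase_of_mem (b.vert_mem_fiber i)] at hcard
  have hpos := b.one_le_fiberCard i
  rw [← G.card_neighborFinset_eq_degree,
    ← card_filter_add_card_filter_not (fun w => b.gate w ≠ b.gate (b.vert i)),
    b.card_filter_neighborFinset_gate_ne, if_pos (by rw [b.gate_vert])]
  unfold fiberCard at hpos ⊢
  omega

lemma IsInternal.degree_le_two (hv : b.IsInternal v) : G.degree v ≤ 2 := by
  have hcard := isInternal_vert_iff.1 (hv.1.symm ▸ hv)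
  have hlt := b.degree_vert_lt (b.gate v)
  rw [hv.1, hcard, Nat.lt_succ_iff] at hlt
  exact hlt.trans (blockDeg_le_two _)

lemma exists_pendant_of_fiberCard_eq_two (hG : G.Connected) {i : ZMod b.size}
    (hi : b.fiberCard i = 2) :
    ∃ d, b.fiber i = {b.vert i, d} ∧ d ≠ b.vert i ∧ ∀ v, G.Adj d v ↔ v = b.vert i := by
  obtain ⟨d, hd⟩ := card_eq_one.1 (show #((b.fiber i).erase (b.vert i)) = 1 by
    rw [card_erase_of_mem (b.vert_mem_fiber i), ← fiberCard, hi])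
  have hfiber : b.fiber i = {b.vert i, d} := by rw [← insert_erase (b.vert_mem_fiber i), hd]
  have hdi : d ≠ b.vert i := ne_of_mem_erase (hd ▸ mem_singleton_self d)
  have hgate : b.gate d = i := b.mem_fiber.1 (hfiber ▸ by simp)
  have hadj : ∀ v, G.Adj d v → v = b.vert i := fun v hv => by
    have hmem : v ∈ b.fiber i := b.mem_fiber.2 <| by
      by_contra hne
      exact hdi (hgate ▸ (b.of_adj d v hv fun h => hne (h ▸ hgate)).1.symm)
    simpa only [hfiber, mem_insert, mem_singleton, hv.ne', or_false] using hmem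
  have : Nontrivial V := ⟨d, _, hdi⟩
  obtain ⟨w, hw⟩ := hG.preconnected.exists_adj_of_nontrivial d
  exact ⟨d, hfiber, hdi, fun v => ⟨hadj v, fun h => by rwa [h, ← hadj w hw]⟩⟩

lemma IsConcentrated.exists_fiberCard_eq_one_iff (hb : b.IsConcentrated)
    (hlt : b.size < Fintype.card V) : ∃ i, ∀ j, b.fiberCard j = 1 ↔ j ≠ i := by
  obtain ⟨i, hi⟩ := hb
  refine ⟨i, fun j => ⟨?_, hi j⟩⟩
  rintro hj rfl
  have hone : ∀ k, b.fiberCard k = 1 := fun k => by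
    rcases eq_or_ne k j with rfl | hk
    exacts [hj, hi k hk]
  have hsum := b.sum_fiberCard
  simp only [hone, sum_const, card_univ, ZMod.card, smul_eq_mul, mul_one] at hsum
  omega

lemma IsSplit.exists_fiberCard_eq_one_iff (hb : b.IsSplit) (hV : 4 < Fintype.card V) :
    ∃ i j l, i ≠ j ∧ i ≠ l ∧ j ≠ l ∧ b.fiberCard j = 2 ∧ ∀ k, b.fiberCard k = 1 ↔ k = i := by
  obtain ⟨hsize, i, j, hi, hj⟩ := hb
  have hij : i ≠ j := by
    rintro rfl
    omega
  obtain ⟨l, hli, hlj, huniv⟩ := exists_univ_eq_of_card_eq_three (by rw [ZMod.card, hsize]) hij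
  have hsum := b.sum_fiberCard
  rw [huniv, sum_insert (by simp [hij, hli.symm]), sum_pair hlj.symm, hi, hj] at hsum
  refine ⟨i, j, l, hij, hli.symm, hlj.symm, hj, fun k => ⟨fun hk => ?_, fun h => h ▸ hi⟩⟩
  have hmem := huniv ▸ mem_univ k
  simp only [mem_insert, mem_singleton] at hmem
  rcases hmem with rfl | rfl | rfl
  · rfl
  all_goals omega

lemma IsConcentrated.card_filter_isInternal (hb : b.IsConcentrated)
    (hlt : b.size < Fintype.card V) :
    #{v | b.IsInternal v} = b.size - 1 := by
  obtain ⟨i, hi⟩ := hb.exists_fiberCard_eq_one_iff hlt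
  rw [Block.card_filter_isInternal, filter_congr fun j _ => hi j, filter_ne' univ i,
    card_erase_of_mem (mem_univ i), card_univ, ZMod.card]

end Block

section IsCutVertex

variable {V β : Type*} {G : SimpleGraph V} {B : β → Block G} {v : V}

/-- The vertex `v` is not internal to any of the blocks `B`. If the blocks `B` cover a connected
graph with at least two vertices, then these are the cut vertices of the graph. -/
def IsCutVertex (B : β → Block G) (v : V) : Prop := ∀ b, ¬ (B b).IsInternal v

lemma exists_isInternal_of_not_isCutVertex (hv : ¬ IsCutVertex B v) : ∃ b, (B b).IsInternal v :=
  not_forall_not.1 hv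

variable [Fintype V]

lemma IsBlockCover.isCutVertex_vert (hB : IsBlockCover B) {b : β} {i : ZMod (B b).size}
    (hi : (B b).fiberCard i ≠ 1) : IsCutVertex B ((B b).vert i) := fun c hc => by
  obtain rfl := hc.eq_of_vert_eq hB rfl
  exact hi (Block.isInternal_vert_iff.1 hc)

lemma degree_le_two_of_not_isCutVertex (hv : ¬ IsCutVertex B v) : G.degree v ≤ 2 := by
  obtain ⟨b, hb⟩ := exists_isInternal_of_not_isCutVertex hv
  exact hb.degree_le_two

lemma IsBlockCover.exists_isCutVertex_adj (hB : IsBlockCover B) {b : β} (hb : (B b).IsMinimal)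
    (hlt : (B b).size < Fintype.card V) (hv : (B b).IsInternal v) :
    ∃ w, IsCutVertex B w ∧ G.Adj w v ∧ (B b).gate w ≠ (B b).gate v := by
  obtain ⟨i, hi⟩ := hb.1.exists_fiberCard_eq_one_iff hlt
  have hne : (B b).gate v ≠ i := (hi _).1 (Block.isInternal_vert_iff.1 (hv.1.symm ▸ hv))
  refine ⟨(B b).vert i, hB.isCutVertex_vert fun h => (hi i).1 h rfl, ?_, ?_⟩
  · simpa only [hv.1] using
      (B b).adj_vert_iff.2 (eq_add_one_or_eq_sub_one (B b).two_le_size hb.2 hne)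
  · rw [(B b).gate_vert]
    exact hne.symm

lemma IsBlockCover.sum_card_filter_isInternal [Fintype β] (hB : IsBlockCover B) :
    ∑ b, #{v | (B b).IsInternal v} + #{v | IsCutVertex B v} = Fintype.card V := by
  have hbiUnion : ({v | ¬ IsCutVertex B v} : Finset V) =
      univ.biUnion fun b => {v | (B b).IsInternal v} := by
    ext v
    simp only [IsCutVertex, not_forall_not, mem_filter_univ, mem_biUnion, mem_univ, true_and]
  have hdisj : ∀ b ∈ univ, ∀ c ∈ univ, b ≠ c →
      Disjoint (univ.filter (B b).IsInternal) (univ.filter (B c).IsInternal) :=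
    fun b _ c _ hbc => disjoint_filter.2 fun v _ hb hc => hbc (hc.eq_of_vert_eq hB hb.1)
  rw [← card_biUnion hdisj, ← hbiUnion, add_comm, card_filter_add_card_filter_not, card_univ]

end IsCutVertex

namespace IsBlockDecomposition

variable {V β : Type*} [Fintype V] [Fintype β] {G : SimpleGraph V} {B : β → Block G} {n t : ℕ}

lemma exists_isCutVertex_iff (hB : IsBlockDecomposition B n t)
    (hb : ∀ b, (B b).IsConcentrated ∧ (B b).size < n) : ∃ c, ∀ v, IsCutVertex B v ↔ v = c := by
  have hleaf : ∑ b, #{v | (B b).IsInternal v} = ∑ b, ((B b).size - 1) :=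
    sum_congr rfl fun b _ => (hb b).1.card_filter_isInternal (hB.card_verts.symm ▸ (hb b).2)
  have hcard : #{v | IsCutVertex B v} = 1 := by
    have := hB.cover.sum_card_filter_isInternal
    have := hB.sum_size_sub_one
    have := hB.card_verts
    omega
  obtain ⟨c, hc⟩ := card_eq_one.1 hcard
  exact ⟨c, fun v => by rw [← mem_singleton, ← hc, mem_filter_univ]⟩

theorem nonempty_iso_G0 (hB : IsBlockDecomposition B n t) (hn : 3 < n)
    (hb : ∀ b, (B b).IsMinimal) : Nonempty (G ≃g G0 n t) := by
  have hlt : ∀ b, (B b).size < n := fun b => (hb b).2.trans_lt hn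
  obtain ⟨c, hc⟩ := hB.exists_isCutVertex_iff fun b => ⟨(hb b).1, hlt b⟩
  refine Cactus.nonempty_iso_G0 hB.card_verts hB.sum_degree (c := c) (fun v hv => ?_) fun v hv =>
    degree_le_two_of_not_isCutVertex (mt (hc v).1 hv)
  obtain ⟨b, hbv⟩ := exists_isInternal_of_not_isCutVertex (mt (hc v).1 hv)
  obtain ⟨w, hw, hwv, -⟩ :=
    hB.cover.exists_isCutVertex_adj (hb b) (hB.card_verts.symm ▸ hlt b) hbv
  exact (hc w).1 hw ▸ hwv

theorem nonempty_iso_G5g (hB : IsBlockDecomposition B n t) (hn : 4 < n) {b : β}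
    (hb : (B b).IsConcentrated) (hsize : (B b).size = 4) (hne : ∀ c ≠ b, (B c).IsMinimal) :
    Nonempty (G ≃g G5g n t) := by
  have hlt : ∀ c, (B c).IsConcentrated ∧ (B c).size < n := fun c => by
    rcases eq_or_ne c b with rfl | hc
    exacts [⟨hb, hsize ▸ hn⟩, ⟨(hne c hc).1, (hne c hc).2.trans_lt (by omega)⟩]
  obtain ⟨u, hu⟩ := hB.exists_isCutVertex_iff hlt
  obtain ⟨i, hi⟩ := hb.exists_fiberCard_eq_one_iff (hB.card_verts.symm ▸ (hlt b).2)
  obtain rfl : (B b).vert i = u := (hu _).1 (hB.cover.isCutVertex_vert fun h => (hi i).1 h rfl)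
  have hadj : ∀ j, G.Adj ((B b).vert i) ((B b).vert j) ↔ j ≠ i ∧ j ≠ i + 1 + 1 := fun j =>
    (B b).adj_vert_iff.trans (eq_add_one_or_eq_sub_one_iff hsize)
  have hopp_ne : i + 1 + 1 ≠ i := fun h =>
    add_one_ne_sub_one (by omega) i (by rw [eq_sub_iff_add_eq, h])
  have hinj := (B b).vert_injective
  refine Cactus.nonempty_iso_G5g hB.card_verts hB.sum_degree (c := (B b).vert i)
    (a := (B b).vert (i + 1)) (b := (B b).vert (i + 1 + 1)) (d := (B b).vert (i - 1))
    (fun v => ⟨fun h => ⟨h.ne', ?_⟩, fun h => ?_⟩) ((B b).adj_vert _)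
    ((B b).adj_vert_iff.2 (.inr (sub_one_sub_one_eq_add_one_add_one hsize i).symm))
    (hinj.ne (add_one_ne_sub_one (by omega) i)) (hinj.ne hopp_ne) fun v hv =>
      degree_le_two_of_not_isCutVertex (mt (hu v).1 hv)
  · rintro rfl
    exact ((hadj _).1 h).2 rfl
  · obtain ⟨c, hcv⟩ := exists_isInternal_of_not_isCutVertex (mt (hu v).1 h.1)
    rcases eq_or_ne c b with rfl | hc
    · rw [← hcv.1]
      exact (hadj _).2 ⟨fun h' => h.1 (by rw [← h', hcv.1]), fun h' => h.2 (by rw [← h', hcv.1])⟩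
    · obtain ⟨w, hw, hwv, -⟩ := hB.cover.exists_isCutVertex_adj (hne c hc)
        (hB.card_verts.symm ▸ (hlt c).2) hcv
      exact (hu w).1 hw ▸ hwv

lemma exists_isCutVertex_iff_of_isSplit (hB : IsBlockDecomposition B n t) (hn : 4 < n) {b : β}
    (hb : (B b).IsSplit) (hne : ∀ c ≠ b, (B c).IsMinimal) :
    ∃ i j l : ZMod (B b).size, i ≠ j ∧ i ≠ l ∧ j ≠ l ∧ (B b).fiberCard j = 2 ∧
      ∀ v, IsCutVertex B v ↔ v = (B b).vert j ∨ v = (B b).vert l := by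
  obtain ⟨i, j, l, hij, hil, hjl, hj, hone⟩ :=
    hb.exists_fiberCard_eq_one_iff (hB.card_verts.symm ▸ hn)
  have hinternal : #{v | (B b).IsInternal v} = 1 := by
    rw [(B b).card_filter_isInternal, filter_congr fun k _ => hone k, filter_eq' univ i,
      if_pos (mem_univ i), card_singleton]
  have hrest : ∑ c ∈ univ.erase b, #{v | (B c).IsInternal v} =
      ∑ c ∈ univ.erase b, ((B c).size - 1) := sum_congr rfl fun c hc =>
    (hne c (ne_of_mem_erase hc)).1.card_filter_isInternal
      (hB.card_verts.symm ▸ (hne c (ne_of_mem_erase hc)).2.trans_lt (by omega))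
  have hcard : #{v | IsCutVertex B v} = 2 := by
    have hverts := hB.cover.sum_card_filter_isInternal
    have hsize := hB.sum_size_sub_one
    rw [← add_sum_erase univ _ (mem_univ b)] at hverts hsize
    have := hB.card_verts
    have := hb.1
    omega
  have hpair : {(B b).vert j, (B b).vert l} = univ.filter (IsCutVertex B) := by
    refine eq_of_subset_of_card_le ?_ ?_
    · simp only [insert_subset_iff, singleton_subset_iff, mem_filter_univ]
      exact ⟨hB.cover.isCutVertex_vert (mt (hone j).1 hij.symm),
        hB.cover.isCutVertex_vert (mt (hone l).1 hil.symm)⟩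
    · rw [hcard, card_pair ((B b).vert_injective.ne hjl)]
  exact ⟨i, j, l, hij, hil, hjl, hj, fun v => by
    rw [← mem_filter_univ (p := IsCutVertex B) v, ← hpair, mem_insert, mem_singleton]⟩

theorem nonempty_iso_G4g (hB : IsBlockDecomposition B n t) (hn : 4 < n) {b : β}
    (hb : (B b).IsSplit) (hne : ∀ c ≠ b, (B c).IsMinimal) : Nonempty (G ≃g G4g n t) := by
  obtain ⟨i, j, z, hij, hiz, hjz, hj, hcut⟩ := hB.exists_isCutVertex_iff_of_isSplit hn hb hne
  obtain ⟨d, hfiber, hdj, hd⟩ := Block.exists_pendant_of_fiberCard_eq_two hB.connected hj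
  have hgate : (B b).gate d = j := (B b).mem_fiber.1 (hfiber ▸ by simp)
  have hd_ne : ∀ k, k ≠ j → d ≠ (B b).vert k := by
    rintro k hk rfl
    exact hk (by rw [← hgate, (B b).gate_vert])
  have hadj : ∀ {k l : ZMod (B b).size}, l ≠ k → G.Adj ((B b).vert k) ((B b).vert l) := fun h =>
    (B b).adj_vert_iff.2 (eq_add_one_or_eq_sub_one (B b).two_le_size hb.1.le h)
  have hinj := (B b).vert_injective
  refine Cactus.nonempty_iso_G4g hB.card_verts hB.sum_degree (c := (B b).vert z)
    (a := (B b).vert j) (d := d) (z := (B b).vert i) (fun v => ⟨fun h => ⟨h.ne', ?_⟩, ?_⟩) hd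
    (hd_ne z hjz.symm) (hinj.ne hjz) (hadj hij) (hinj.ne hiz) (hd_ne i hij).symm
    (fun v hvz hvj => degree_le_two_of_not_isCutVertex fun h => ((hcut v).1 h).elim hvj hvz) ?_
  · rintro rfl
    exact hinj.ne hjz ((hd _).1 h.symm).symm
  · rintro ⟨hvz, hvd⟩
    by_cases hv : IsCutVertex B v
    · obtain rfl := ((hcut v).1 hv).resolve_right hvz
      exact hadj hjz
    obtain ⟨c, hcv⟩ := exists_isInternal_of_not_isCutVertex hv
    rcases eq_or_ne c b with rfl | hc
    · rw [← hcv.1]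
      exact hadj fun h => hvz (by rw [← h, hcv.1])
    obtain ⟨w, hw, hwv, hgw⟩ := hB.cover.exists_isCutVertex_adj (hne c hc)
      (hB.card_verts.symm ▸ (hne c hc).2.trans_lt (by omega)) hcv
    rcases (hcut w).1 hw with rfl | rfl
    · have hmem : v ∈ (B b).fiber j := (B b).mem_fiber.2 <| by
        by_contra h
        exact hc ((hB.cover _ _ hwv).unique hgw (by rw [(B b).gate_vert]; exact Ne.symm h))
      rw [hfiber, mem_insert, mem_singleton] at hmem
      exact absurd hmem (not_or.2 ⟨hwv.ne', hvd⟩)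
    · exact hwv
  · have := (B b).degree_vert_lt j
    rw [hj, hb.1, blockDeg_of_three_le le_rfl] at this
    omega

end IsBlockDecomposition

end Cactus

/-- Theorem 5.1: among all graphs in `Cact(n;t)` with `n ≥ 25`, `t ≥ 1`, the cactus
with the third-minimum degree resistance distance is `G4`. -/
theorem stmt_18 (n t : ℕ) (hn : 25 ≤ n) (ht : 1 ≤ t)
    {V : Type*} [Finite V] (G : SimpleGraph V) (hG : MemCact n t G)
    (hnot0 : ¬ Nonempty (G ≃g G0 n t)) (hnot5 : ¬ Nonempty (G ≃g G5g n t)) :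
    degRes (G4g n t) ≤ degRes G ∧
    (degRes G = degRes (G4g n t) ↔ Nonempty (G ≃g G4g n t)) := by
  classical
  let _ := Fintype.ofFinite V
  obtain ⟨β, _, B, hB⟩ := Cactus.exists_isBlockDecomposition hG
  have hle := Cactus.G4g.degRes_le hn hB.two_mul_add_one_le ht
  have hiso : Nonempty (G ≃g G4g n t) → degRes G = degRes (G4g n t) :=
    fun ⟨e⟩ => Cactus.degRes_congr e
  rcases hB.degRes_cases hn with hmin | ⟨b, ⟨hb, hsize⟩, hmin⟩ | ⟨b, hb, hmin⟩ | hlt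
  · exact absurd (hB.nonempty_iso_G0 (by omega) hmin) hnot0
  · exact absurd (hB.nonempty_iso_G5g (by omega) hb hsize hmin) hnot5
  · have e := hB.nonempty_iso_G4g (by omega) hb hmin
    exact ⟨(hiso e).ge, fun _ => e, hiso⟩
  · exact ⟨(hle.trans_lt hlt).le, fun h => absurd h (hle.trans_lt hlt).ne', hiso⟩
end
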